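/- For every integer k ≥ 3 and every δ > 0, there exist η > 0 and N₀ such that the following holds for all N ≥ N₀: if S ⊆ Z_N is nonempty and the function ν := (N/|S|)·1_S satisfies the k-linear forms condition within η, then every subset A ⊆ S with |A| ≥ δ|S| contains a k-term arithmetic progression; that is, there exist x ∈ Z_N and d ∈ Z_N with d ≠ 0 such that x, x+d, x+2d, …, x+(k−1)d ∈ A. -/

import Mathlib

/-!
The proof transfers Szemerédi's theorem from dense subsets of `ZMod N` to dense subsets of the
pseudorandom set `S`. Write `m = N / |S|`, `ν = m 1_S` and `f = m 1_A`, so that `0 ≤ f ≤ ν` and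
`f` has average at least `δ`.

**Dense case.** The density Hales–Jewett theorem `density_hales_jewett` is proved by induction on
the alphabet. If it fails for `Option α`, take a line-free set of almost critical density. The
theorem for `α` supplies many lines whose points with letters in `α` all lie in the set
(`exists_template`), and the last points of these lines avoid it. Hence the set is denser on a
large intersection of insensitive sets, one for each `a : α`. Such an intersection is covered
almost uniformly by combinatorial subspaces (`DHJ.pack_multi`), and on one of them the density
exceeds the critical one, a contradiction. Averaging over the maps
`w ↦ x + ∑ i, w i • d i` from words to a finite abelian group gives Szemerédi's theorem with
multiplicity (`varnavides`): a `[0, 1]`-valued function `g` of average at least `δ` satisfies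
`E ∏ j, g (x + j d) ≥ c(δ) > 0`.

**Transference.** As `j` varies, the forms `frm j x = ∑ i, (i - j) x i` run through an arithmetic
progression, and `frm j` does not involve the `j`-th variable. Repeated application of the
Cauchy–Schwarz inequality to the linear forms condition (`LFC`) shows that `ν - 1` is nearly
orthogonal to the products of functions each missing one more variable (`LFC.decor`). The dense
model theorem (`dense_model`: a minimax argument and Weierstrass approximation) then produces
`g : ZMod N → [0, 1]` which is close to `f` in the cut norm of each form (`transference`).
Multiplication by the coefficients `i - j` need not be invertible, but its kernel on
`Fin k → ZMod N` has at most `k ^ k` elements, which costs only a constant factor; so no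
coprimality assumption on `N` is needed.

**Counting.** The relative counting lemma (`counting`) replaces the factors `f (frm j x)` by
`g (frm j x)` with a small error. It treats the weights one at a time: averaging over the
`j`-th variable the product of the other factors gives a function which, by the linear forms
condition, is nearly bounded by `1`, so that one weight fewer is present. Hence
`E ∏ j, f (x + j d) ≥ c / 2`.

**Trivial progressions.** Progressions with `d = 0` contribute at most `m ^ (k - 1) / N`. The linear
forms condition itself implies `m ^ (2 (k - 1)) ≤ 3 N` (`sparse_bound`), so this contribution tends
to `0`, and for large `N` some progression with `d ≠ 0` lies in `A`.
-/

open Finset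

/-- The average (expectation with respect to the uniform measure) of `f` over `α`. -/
noncomputable def avg {α : Type*} [Fintype α] (f : α → ℝ) : ℝ :=
  (∑ x, f x) / (Fintype.card α)

/-- The linear form `∑_{i} (i - j) · x_i^{(ω_i)}` in `ZMod N`, where for `i ≠ j` the
variable `x_i^{(ω_i)}` equals `x₁ i` if `ω i` and `x₀ i` otherwise (the `i = j` term has
coefficient zero). -/
noncomputable def kForm (k N : ℕ) [NeZero N] (j : Fin k)
    (x₀ x₁ : Fin k → ZMod N) (ω : {i : Fin k // i ≠ j} → Bool) : ZMod N :=
  ∑ i : Fin k, ((((i : ℕ) : ℤ) - ((j : ℕ) : ℤ) : ℤ) : ZMod N) *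
    (if h : i = j then 0 else if ω ⟨i, h⟩ then x₁ i else x₀ i)

/-- `ν : ZMod N → ℝ` satisfies the `k`-linear forms condition within `η`. -/
noncomputable def kLinearFormsCondition (k N : ℕ) [NeZero N] (ν : ZMod N → ℝ) (η : ℝ) :
    Prop :=
  ∀ n : (j : Fin k) → ({i : Fin k // i ≠ j} → Bool) → Bool,
    |avg (fun x : (Fin k → ZMod N) × (Fin k → ZMod N) =>
      ∏ j : Fin k, ∏ ω : {i : Fin k // i ≠ j} → Bool,
        if n j ω then ν (kForm k N j x.1 x.2 ω) else 1) - 1| ≤ η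

/-! ### Averages and densities -/

/-- The uniform average over a finite type; unlike `avg` it needs no `Fintype` instance. -/
noncomputable def av {X : Type*} [Finite X] (f : X → ℝ) : ℝ :=
  letI := Fintype.ofFinite X
  (∑ x, f x) / (Fintype.card X)

/-- The density of a subset of a finite type. -/
noncomputable def dn {X : Type*} [Finite X] (A : Set X) : ℝ := av (A.indicator fun _ => 1)

section av
variable {X Y ι : Type*} [Finite X] [Finite Y]

lemma av_eq [Fintype X] (f : X → ℝ) : av f = (∑ x, f x) / (Fintype.card X) := by
  unfold av
  congr!

lemma av_add (f g : X → ℝ) : av (fun x => f x + g x) = av f + av g := by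
  simp [av, Finset.sum_add_distrib, add_div]

lemma av_neg (f : X → ℝ) : av (fun x => - f x) = - av f := by
  simp [av, neg_div]

lemma av_sub (f g : X → ℝ) : av (fun x => f x - g x) = av f - av g := by
  simp [av, Finset.sum_sub_distrib, sub_div]

lemma av_mul_left (c : ℝ) (f : X → ℝ) : av (fun x => c * f x) = c * av f := by
  simp [av, ← Finset.mul_sum, mul_div_assoc]

lemma av_mul_right (f : X → ℝ) (c : ℝ) : av (fun x => f x * c) = av f * c := by
  simp [av, ← Finset.sum_mul, div_mul_eq_mul_div]

lemma av_sum (s : Finset ι) (f : ι → X → ℝ) :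
    av (fun x => ∑ i ∈ s, f i x) = ∑ i ∈ s, av (f i) := by
  simp only [av, Finset.sum_div]
  exact Finset.sum_comm

lemma av_const [Nonempty X] (c : ℝ) : av (fun _ : X => c) = c := by
  let := Fintype.ofFinite X
  rw [av_eq]
  have : (Fintype.card X : ℝ) ≠ 0 := by simp
  simp [this]

lemma av_mono {f g : X → ℝ} (h : ∀ x, f x ≤ g x) : av f ≤ av g := by
  unfold av
  exact div_le_div_of_nonneg_right (Finset.sum_le_sum fun x _ => h x) (by positivity)

lemma av_nonneg {f : X → ℝ} (h : ∀ x, 0 ≤ f x) : 0 ≤ av f := by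
  unfold av
  exact div_nonneg (Finset.sum_nonneg fun x _ => h x) (by positivity)

lemma abs_av_le (f : X → ℝ) : |av f| ≤ av (fun x => |f x|) := by
  unfold av
  rw [abs_div, Nat.abs_cast]
  exact div_le_div_of_nonneg_right (Finset.abs_sum_le_sum_abs _ _) (by positivity)

lemma av_le_of_le [Nonempty X] {f : X → ℝ} {c : ℝ} (h : ∀ x, f x ≤ c) : av f ≤ c :=
  (av_mono h).trans (av_const c).le

lemma le_av_of_le [Nonempty X] {f : X → ℝ} {c : ℝ} (h : ∀ x, c ≤ f x) : c ≤ av f :=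
  (av_const c).ge.trans (av_mono h)

lemma abs_av_le_of_le [Nonempty X] {f : X → ℝ} {c : ℝ} (h : ∀ x, |f x| ≤ c) : |av f| ≤ c :=
  (abs_av_le f).trans (av_le_of_le h)

lemma exists_le_of_le_av [Nonempty X] {f : X → ℝ} {c : ℝ} (h : c ≤ av f) : ∃ x, c ≤ f x := by
  by_contra! hc
  let := Fintype.ofFinite X
  have h2 : ∑ x, f x < ∑ _x : X, c :=
    Finset.sum_lt_sum_of_nonempty Finset.univ_nonempty fun x _ => hc x
  have hpos : (0 : ℝ) < Fintype.card X := by exact_mod_cast Fintype.card_pos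
  rw [av_eq, le_div_iff₀ hpos] at h
  simp at h2
  linarith

lemma av_equiv (e : X ≃ Y) (f : Y → ℝ) : av (fun x => f (e x)) = av f := by
  let := Fintype.ofFinite X
  let := Fintype.ofFinite Y
  rw [av_eq, av_eq, Fintype.card_congr e, e.sum_comp]

lemma av_prod (f : X × Y → ℝ) : av f = av (fun x => av fun y => f (x, y)) := by
  let := Fintype.ofFinite X
  let := Fintype.ofFinite Y
  simp only [av_eq, Fintype.sum_prod_type, Fintype.card_prod]
  rw [← Finset.sum_div, div_div]
  push_cast
  rw [mul_comm]

lemma av_comm (f : X → Y → ℝ) : av (fun x => av fun y => f x y) = av fun y => av fun x => f x y := by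
  rw [← av_prod (fun p : X × Y => f p.1 p.2), ← av_prod (fun p : Y × X => f p.2 p.1),
    ← av_equiv (Equiv.prodComm X Y)]
  rfl

lemma av_sum_arrow {κ μ B : Type*} [Finite κ] [Finite μ] [Finite B] (f : (κ ⊕ μ → B) → ℝ) :
    av f = av fun x : κ → B => av fun y : μ → B => f (Sum.elim x y) := by
  rw [← av_equiv (Equiv.sumArrowEquivProdArrow κ μ B).symm f, av_prod]
  rfl

lemma av_sq_le (f g : X → ℝ) :
    (av fun x => f x * g x) ^ 2 ≤ (av fun x => f x ^ 2) * av fun x => g x ^ 2 := by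
  unfold av
  rw [div_pow, div_mul_div_comm, ← sq]
  exact div_le_div_of_nonneg_right (Finset.sum_mul_sq_le_sq_mul_sq _ _ _) (by positivity)

lemma dn_nonneg (A : Set X) : 0 ≤ dn A :=
  av_nonneg fun x => Set.indicator_nonneg (fun _ _ => zero_le_one) x

lemma dn_le_one (A : Set X) : dn A ≤ 1 := by
  rcases isEmpty_or_nonempty X with h | h
  · simp [dn, av]
  · exact av_le_of_le fun x => Set.indicator_le_self' (by simp) x

lemma dn_mono {A B : Set X} (h : A ⊆ B) : dn A ≤ dn B :=
  av_mono fun x => Set.indicator_le_indicator_of_subset h (fun _ => zero_le_one) x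

lemma dn_equiv (e : X ≃ Y) (A : Set Y) : dn {x | e x ∈ A} = dn A := by
  unfold dn
  rw [← av_equiv e]
  rfl

lemma dn_compl [Nonempty X] (A : Set X) : dn Aᶜ = 1 - dn A := by
  unfold dn
  rw [eq_sub_iff_add_eq, ← av_add]
  refine Eq.trans ?_ (av_const (X := X) 1)
  congr 1
  ext x
  by_cases h : x ∈ A <;> simp [h]

lemma nonempty_of_dn_pos {A : Set X} (h : 0 < dn A) : A.Nonempty := by
  by_contra hA
  rw [Set.not_nonempty_iff_eq_empty] at hA
  simp [dn, av, hA] at h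

lemma dn_sum_arrow {κ μ B : Type*} [Finite κ] [Finite μ] [Finite B] (A : Set (κ ⊕ μ → B)) :
    dn A = av fun x : κ → B => dn {y : μ → B | Sum.elim x y ∈ A} := by
  unfold dn
  rw [av_sum_arrow]
  rfl

lemma dn_sum_arrow' {κ μ B : Type*} [Finite κ] [Finite μ] [Finite B] (A : Set (κ ⊕ μ → B)) :
    dn A = av fun y : μ → B => dn {x : κ → B | Sum.elim x y ∈ A} := by
  unfold dn
  rw [av_sum_arrow, av_comm]
  rfl

/-- A `[0,1]`-valued function with average at least `c` is at least `c/2` on a set of density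
`c/2`. -/
lemma dn_ge_half [Nonempty X] {f : X → ℝ} {c : ℝ} (h1 : ∀ x, f x ≤ 1) (hc0 : 0 ≤ c)
    (h : c ≤ av f) : c / 2 ≤ dn {x | c / 2 ≤ f x} := by
  have : av f ≤ av (fun x => c / 2 + ({x | c / 2 ≤ f x} : Set X).indicator (fun _ => 1) x) := by
    refine av_mono fun x => ?_
    by_cases hx : c / 2 ≤ f x
    · simp [hx]; linarith [h1 x]
    · simp [hx]; linarith
  rw [av_add, av_const] at this
  unfold dn
  linarith

/-- A function with average at least `c` is at least `c/2` at some point outside a given small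
set. -/
lemma exists_notMem_ge [Nonempty X] {f : X → ℝ} {c : ℝ} (h1 : ∀ x, f x ≤ 1) (hc : 0 < c)
    (h : c ≤ av f) (S : Set X) (hS : dn S ≤ c / 4) : ∃ x, x ∉ S ∧ c / 2 ≤ f x := by
  by_contra! hcon
  have : av f ≤ av (fun x => c / 2 + S.indicator (fun _ => 1) x) := by
    refine av_mono fun x => ?_
    by_cases hx : x ∈ S
    · simp [hx]; linarith [h1 x]
    · simp [hx]; linarith [hcon x hx]
  rw [av_add, av_const] at this
  unfold dn at hS
  linarith

/-- Pigeonhole: if a set is covered by finitely many pieces, one of them has at least the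
average density. -/
lemma exists_dn_ge {V : Type*} [Finite V] {c : ℝ} (B : V → Set X) {A : Set X}
    (hA : ∀ x ∈ A, ∃ v, x ∈ B v) (hc : 0 < c) (h : c ≤ dn A) :
    ∃ v, (∃ x, x ∈ A ∧ x ∈ B v) ∧ c / Nat.card V ≤ dn (A ∩ B v) := by
  let := Fintype.ofFinite V
  have h1 : dn A ≤ ∑ v, dn (A ∩ B v) := by
    unfold dn
    rw [← av_sum]
    refine av_mono fun x => ?_
    by_cases hx : x ∈ A
    · obtain ⟨v, hv⟩ := hA x hx
      have h2 : (A ∩ B v).indicator (fun _ => (1 : ℝ)) x = 1 := by simp [hx, hv]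
      rw [Set.indicator_of_mem hx]
      refine h2.symm.le.trans ?_
      exact Finset.single_le_sum
        (f := fun v => (A ∩ B v).indicator (fun _ => (1 : ℝ)) x)
        (fun i _ => Set.indicator_nonneg (fun _ _ => zero_le_one) x) (Finset.mem_univ v)
    · rw [Set.indicator_of_notMem hx]
      exact Finset.sum_nonneg fun i _ => Set.indicator_nonneg (fun _ _ => zero_le_one) x
  have hV : Nonempty V := by
    obtain ⟨x, hx⟩ := nonempty_of_dn_pos (hc.trans_le h)
    exact ⟨(hA x hx).choose⟩
  have hpos : (0 : ℝ) < Fintype.card V := by exact_mod_cast Fintype.card_pos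
  obtain ⟨v, hv⟩ : ∃ v, c / Fintype.card V ≤ dn (A ∩ B v) := by
    apply exists_le_of_le_av
    rw [av_eq]
    exact div_le_div_of_nonneg_right (h.trans h1) hpos.le
  refine ⟨v, ?_, by rwa [Nat.card_eq_fintype_card]⟩
  exact nonempty_of_dn_pos ((div_pos hc hpos).trans_le hv)

/-- An average over functions that only see coordinates in `P` may be taken over those coordinates
only. -/
lemma av_restrict {κ B : Type*} [Finite κ] [Finite B] [Nonempty B] (P : κ → Prop)
    (f : ({t // P t} → B) → ℝ) : av (fun z : κ → B => f fun t => z t) = av f := by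
  classical
  rw [← av_equiv (Equiv.piEquivPiSubtypeProd P (fun _ => B)).symm, av_prod]
  congr 1
  ext x
  rw [← av_const (X := {t // ¬ P t} → B) (f x)]
  congr 1
  ext y
  congr 1
  ext t
  simp [Equiv.piEquivPiSubtypeProd, t.2]

/-- Resampling: a coordinatewise bijection of `Ω × B` preserves the uniform measure. -/
lemma av_resample {κ Ω B : Type*} [Finite κ] [Finite Ω] [Finite B] [Nonempty B]
    (σ : Ω × B ≃ Ω × B) (F : (κ → Ω) → ℝ) :
    av F = av fun c : κ → Ω => av fun z : κ → B => F fun t => (σ (c t, z t)).1 := by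
  rw [← av_prod (fun p : (κ → Ω) × (κ → B) => F fun t => (σ (p.1 t, p.2 t)).1)]
  have h1 : av F = av (fun p : (κ → Ω) × (κ → B) => F p.1) := by
    rw [av_prod]
    congr 1
    ext c
    exact (av_const _).symm
  rw [h1, ← av_equiv (Equiv.arrowProdEquivProdArrow κ (fun _ => Ω) (fun _ => B)),
    ← av_equiv (Equiv.arrowProdEquivProdArrow κ (fun _ => Ω) (fun _ => B)),
    ← av_equiv (Equiv.piCongrRight fun _ : κ => σ)]
  rfl

/-- A random word visits a given nonempty set of letters at least `m` times, up to an event of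
small probability. -/
lemma exists_tail {Ω : Type*} [Finite Ω] (P : Set Ω) (hP : P.Nonempty) (m : ℕ) {ε : ℝ}
    (hε : 0 < ε) : ∃ n, ∀ (κ : Type) [Finite κ], n ≤ Nat.card κ →
      dn {c : κ → Ω | Nat.card {t // c t ∈ P} < m} ≤ ε := by
  classical
  have : Nonempty Ω := ⟨hP.some⟩
  let := Fintype.ofFinite Ω
  set g : Ω → ℝ := fun o => if o ∈ P then 1 / 2 else 1 with hg
  have hg0 : ∀ o, 0 < g o := fun o => by simp only [hg]; split_ifs <;> norm_num
  have hg1 : ∀ o, g o ≤ 1 := fun o => by simp only [hg]; split_ifs <;> norm_num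
  have hq : av g < 1 := by
    rw [av_eq, div_lt_one (by exact_mod_cast Fintype.card_pos)]
    calc ∑ x, g x < ∑ _x : Ω, (1 : ℝ) := by
          refine Finset.sum_lt_sum (fun o _ => hg1 o) ⟨hP.some, Finset.mem_univ _, ?_⟩
          simp only [hg, if_pos hP.some_mem]; norm_num
      _ = _ := by simp
  have hq0 : 0 ≤ av g := av_nonneg fun o => (hg0 o).le
  obtain ⟨n, hn⟩ := exists_pow_lt_of_lt_one (show 0 < ε * (1 / 2) ^ m by positivity) hq
  refine ⟨n, fun κ _ hκ => ?_⟩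
  let := Fintype.ofFinite κ
  have h1 : av (fun c : κ → Ω => ∏ t, g (c t)) = av g ^ Fintype.card κ := by
    rw [av_eq, av_eq, div_pow]
    simp only [Fintype.card_fun, Nat.cast_pow]
    congr 1
    have := Finset.prod_univ_sum (fun _ : κ => (Finset.univ : Finset Ω)) (fun _ o => g o)
    simpa using this.symm
  have h2 : dn {c : κ → Ω | Nat.card {t // c t ∈ P} < m} * (1 / 2) ^ m
      ≤ av (fun c : κ → Ω => ∏ t, g (c t)) := by
    unfold dn
    rw [← av_mul_right]
    refine av_mono fun c => ?_
    by_cases hc : Nat.card {t // c t ∈ P} < m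
    · have : ∏ t, g (c t) = (1 / 2) ^ Nat.card {t // c t ∈ P} := by
        simp only [hg]
        rw [Finset.prod_ite]
        simp [Fintype.card_subtype]
      rw [this, Set.indicator_of_mem (by exact hc), one_mul]
      exact pow_le_pow_of_le_one (by norm_num) (by norm_num) hc.le
    · rw [Set.indicator_of_notMem (by exact hc), zero_mul]
      exact Finset.prod_nonneg fun t _ => (hg0 _).le
  rw [Nat.card_eq_fintype_card] at hκ
  have h3 : av g ^ Fintype.card κ ≤ av g ^ n := pow_le_pow_of_le_one hq0 hq.le hκ
  have h4 : (0 : ℝ) < (1 / 2) ^ m := by positivity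
  rw [h1] at h2
  by_contra! hcon
  nlinarith

end av

/-! ### Combinatorial lines and subspaces -/

section words
variable {α ι κ μ : Type}

/-- The point with parameters `x` of the combinatorial subspace with template `t`: the letter at
`i` is the constant `a` if `t i = inl a`, and the parameter `x e` if `t i = inr e`. -/
def ev (t : ι → α ⊕ μ) (x : μ → α) : ι → α := fun i => Sum.elim id x (t i)

/-- Every parameter of the template occurs at some coordinate. -/
def Onto (t : ι → α ⊕ μ) : Prop := ∀ e, ∃ i, t i = Sum.inr e

/-- Substitution of templates. -/
def tcomp (t : ι → α ⊕ μ) (s : μ → α ⊕ κ) : ι → α ⊕ κ := fun i => Sum.elim Sum.inl s (t i)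

lemma ev_tcomp (t : ι → α ⊕ μ) (s : μ → α ⊕ κ) (x : κ → α) :
    ev (tcomp t s) x = ev t (ev s x) := by
  ext i
  unfold ev tcomp
  rcases t i with a | e <;> rfl

lemma Onto.tcomp {t : ι → α ⊕ μ} {s : μ → α ⊕ κ} (ht : Onto t) (hs : Onto s) :
    Onto (tcomp t s) := by
  intro e
  obtain ⟨j, hj⟩ := hs e
  obtain ⟨i, hi⟩ := ht j
  exact ⟨i, by simp [_root_.tcomp, hi, hj]⟩

lemma ev_injective {t : ι → α ⊕ μ} (ht : Onto t) : Function.Injective (ev t) := by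
  intro x y h
  ext e
  obtain ⟨i, hi⟩ := ht e
  have := congrFun h i
  simpa [ev, hi] using this

/-- `A` contains a combinatorial line. The line is coded by a word over `Option α`, the wildcard
being `none`. -/
def HasLine (A : Set (ι → α)) : Prop :=
  ∃ v : ι → Option α, (∃ i, v i = none) ∧ ∀ a, (fun i => (v i).getD a) ∈ A

lemma HasLine.of_ev {A : Set (ι → α)} {t : ι → α ⊕ μ} (ht : Onto t)
    (h : HasLine {x | ev t x ∈ A}) : HasLine A := by
  obtain ⟨v, ⟨e, he⟩, hv⟩ := h
  obtain ⟨i, hi⟩ := ht e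
  refine ⟨fun i => Sum.elim some v (t i), ⟨i, by simp [hi, he]⟩, fun a => ?_⟩
  have h1 : (fun i => (Sum.elim some v (t i)).getD a) = ev t fun e => (v e).getD a := by
    ext i
    simp only [ev]
    rcases t i with b | e <;> simp
  exact h1 ▸ hv a

/-- `A` contains an `m`-dimensional combinatorial subspace. -/
def HasSub (m : ℕ) (A : Set (ι → α)) : Prop :=
  ∃ t : ι → α ⊕ Fin m, Onto t ∧ ∀ x, ev t x ∈ A

/-- The density Hales–Jewett property of the alphabet `α`. -/
def DHJ (α : Type) [Finite α] : Prop :=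
  ∀ δ : ℝ, 0 < δ → ∃ n : ℕ, ∀ (ι : Type) [Finite ι], n ≤ Nat.card ι →
    ∀ A : Set (ι → α), δ ≤ dn A → HasLine A

lemma exists_split {ι : Type} [Finite ι] {s n : ℕ} (h : s + n ≤ Nat.card ι) :
    ∃ r, n ≤ r ∧ Nonempty (ι ≃ Fin s ⊕ Fin r) := by
  let := Fintype.ofFinite ι
  refine ⟨Nat.card ι - s, by omega, ⟨Fintype.equivOfCardEq ?_⟩⟩
  rw [Nat.card_eq_fintype_card] at *
  simp
  omega

/-- Densities in `ι → α` and in a reindexed copy agree. -/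
lemma dn_reindex [Finite ι] [Finite κ] [Finite α] (e : ι ≃ κ) (A : Set (ι → α)) :
    dn {z : κ → α | (fun i => z (e i)) ∈ A} = dn A :=
  dn_equiv (e.arrowCongr (Equiv.refl α)).symm A

/-- Density Hales–Jewett for lines gives density Hales–Jewett for subspaces of every dimension. -/
lemma DHJ.multi [Finite α] [Nonempty α] (h : DHJ α) (m : ℕ) :
    ∀ δ : ℝ, 0 < δ → ∃ n : ℕ, ∀ (ι : Type) [Finite ι], n ≤ Nat.card ι →
      ∀ A : Set (ι → α), δ ≤ dn A → HasSub m A := by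
  induction m with
  | zero =>
    intro δ hδ
    refine ⟨0, fun ι _ _ A hA => ?_⟩
    obtain ⟨a, ha⟩ := nonempty_of_dn_pos (hδ.trans_le hA)
    exact ⟨fun i => Sum.inl (a i), fun e => e.elim0, fun x => ha⟩
  | succ m ih =>
    intro δ hδ
    obtain ⟨s, hs⟩ := h (δ / 2) (by positivity)
    obtain ⟨n, hn⟩ := ih (δ / 2 / Nat.card (Fin s → Option α))
      (div_pos (by positivity) (by exact_mod_cast Nat.card_pos))
    refine ⟨s + n, fun ι _ hι A hA => ?_⟩
    obtain ⟨r, hr, ⟨e⟩⟩ := exists_split hι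
    rw [← dn_reindex e, dn_sum_arrow'] at hA
    have h1 := dn_ge_half (fun y => dn_le_one _) hδ.le hA
    set Y : Set (Fin r → α) := {y | δ / 2 ≤
      dn {x : Fin s → α | Sum.elim x y ∈ {z : Fin s ⊕ Fin r → α | (fun i => z (e i)) ∈ A}}} with hY
    obtain ⟨v, ⟨y0, hy0, hv0⟩, hv⟩ := exists_dn_ge (V := Fin s → Option α)
      (fun v => {y | (∃ i, v i = none) ∧
        ∀ a, (fun i => Sum.elim (fun i => (v i).getD a) y (e i)) ∈ A}) (A := Y)
      (fun y hy => by
        obtain ⟨v, h1, h2⟩ := hs (Fin s) (by simp) _ hy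
        exact ⟨v, h1, h2⟩) (by positivity) h1
    obtain ⟨t, ht, htA⟩ := hn (Fin r) (by simpa using hr) _ hv
    refine ⟨fun i => Sum.elim (fun j => (v j).elim (Sum.inr 0) Sum.inl)
      (fun j => Sum.map id Fin.succ (t j)) (e i), ?_, fun x => ?_⟩
    · intro d
      induction d using Fin.cases with
      | zero =>
        obtain ⟨j, hj⟩ := hv0.1
        exact ⟨e.symm (Sum.inl j), by simp [hj]⟩
      | succ d =>
        obtain ⟨j, hj⟩ := ht d
        exact ⟨e.symm (Sum.inr j), by simp [hj]⟩
    · have := (htA (fun d => x d.succ)).2.2 (x 0)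
      convert this using 1
      ext i
      simp only [ev]
      rcases e i with j | j
      · simp only [Sum.elim_inl]
        rcases v j with _ | a <;> simp
      · simp only [Sum.elim_inr, ev]
        rcases t j with _ | a <;> simp

/-! ### Insensitive sets -/

/-- Replace the extra letter `none` by `a`. -/
def col (a : α) (z : ι → Option α) : ι → Option α := fun i => some ((z i).getD a)

/-- Membership in `E` is not affected by exchanging the letters `none` and `some a`. -/
def Ins (a : α) (E : Set (ι → Option α)) : Prop := ∀ z, z ∈ E ↔ col a z ∈ E

lemma col_ev (a : α) (t : ι → Option α ⊕ μ) (x : μ → Option α) :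
    col a (ev t (col a x)) = col a (ev t x) := by
  ext i
  simp only [col, ev]
  rcases t i with b | e <;> simp [col]

lemma Ins.ev {a : α} {E : Set (ι → Option α)} (h : Ins a E) (t : ι → Option α ⊕ μ) :
    Ins a {x | ev t x ∈ E} := by
  intro x
  simp only [Set.mem_ofPred_eq]
  rw [h, h (_root_.ev t (col a x)), col_ev]

lemma Ins.compl {a : α} {E : Set (ι → Option α)} (h : Ins a E) : Ins a Eᶜ :=
  fun z => not_congr (h z)

lemma Ins.inter {a : α} {E F : Set (ι → Option α)} (h : Ins a E) (h' : Ins a F) : Ins a (E ∩ F) :=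
  fun z => and_congr (h z) (h' z)

/-- A dense insensitive set contains a subspace of prescribed dimension: it is determined by its
trace on words without `none`, where density Hales–Jewett for `α` applies. -/
lemma DHJ.ins_hasSub [Finite α] [Nonempty α] (h : DHJ α) (m : ℕ) {δ : ℝ} (hδ : 0 < δ) :
    ∃ n : ℕ, ∀ (ι : Type) [Finite ι], n ≤ Nat.card ι →
      ∀ (a : α) (E : Set (ι → Option α)), Ins a E → δ ≤ dn E → HasSub m E := by
  obtain ⟨n1, hn1⟩ := h.multi m (δ / 2) (by positivity)
  obtain ⟨n, hn⟩ := exists_tail (Ω := Option α) {b | b ≠ none}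
    ⟨some (Classical.arbitrary α), by simp⟩ n1 (ε := δ / 4) (by positivity)
  refine ⟨n, fun ι _ hι a E hE hd => ?_⟩
  classical
  -- Resample the letters different from `none`, uniformly in `α`.
  let σ0 : Option α × α → Option α × α := fun p => p.1.elim p fun b => (some p.2, b)
  have hσ0 : Function.Involutive σ0 := by
    rintro ⟨_ | b, x⟩ <;> rfl
  let wd : (ι → Option α) → (ι → α) → (ι → Option α) := fun c x t => (σ0 (c t, x t)).1
  have h1 : dn E = av fun c : ι → Option α => dn {x : ι → α | wd c x ∈ E} := by
    unfold dn
    rw [av_resample hσ0.toPerm]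
    rfl
  obtain ⟨c, hcR, hc⟩ := exists_notMem_ge (fun c => dn_le_one {x : ι → α | wd c x ∈ E}) hδ
    (hd.trans h1.le) _ (hn ι hι)
  replace hcR : n1 ≤ Nat.card {t // c t ≠ none} := not_lt.mp hcR
  let wd' : ({t // c t ≠ none} → α) → (ι → Option α) :=
    fun x t => if ht : c t ≠ none then some (x ⟨t, ht⟩) else none
  have hwd : ∀ x : ι → α, wd c x = wd' fun t => x t := by
    intro x
    ext1 t
    simp only [wd, wd', σ0]
    rcases hct : c t with _ | b <;> simp
  have h2 : dn {x : ι → α | wd c x ∈ E} = dn {x | wd' x ∈ E} := by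
    unfold dn
    rw [← av_restrict (fun t => c t ≠ none)]
    congr 1
    ext x
    have := hwd x
    by_cases hx : wd c x ∈ E
    · rw [Set.indicator_of_mem (by exact hx), Set.indicator_of_mem (by rw [this] at hx; exact hx)]
    · rw [Set.indicator_of_notMem (by exact hx),
        Set.indicator_of_notMem (by rw [this] at hx; exact hx)]
  obtain ⟨t, ht, htE⟩ := hn1 {t // c t ≠ none} hcR _ (hc.trans h2.le)
  refine ⟨fun i => if hi : c i ≠ none then Sum.map some id (t ⟨i, hi⟩) else Sum.inl none, ?_, ?_⟩
  · intro e
    obtain ⟨i, hi⟩ := ht e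
    exact ⟨i, by simp [i.2, hi]⟩
  · intro x
    rw [hE]
    have h3 : wd' (ev t fun e => (x e).getD a) ∈ E := htE _
    rw [hE] at h3
    convert h3 using 1
    ext1 i
    simp only [col, ev, wd']
    split_ifs with hi
    · rcases t ⟨i, hi⟩ with b | e <;> simp
    · rfl

end words

/-! ### Fractional packings by subspaces -/

section packing
variable {B ι κ : Type}

/-- A fractional packing of `E` by `m`-dimensional subspaces whose templates satisfy `good`: a
nonnegative combination, of total mass at least `r`, of uniform measures on such subspaces that is
dominated by the uniform measure restricted to `E`. -/
def Packs [Finite B] [Finite ι] (m : ℕ) (good : (ι → B ⊕ Fin m) → Prop) (E : Set (ι → B))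
    (r : ℝ) : Prop :=
  ∃ (J : Type) (_ : Fintype J) (w : J → ℝ) (t : J → ι → B ⊕ Fin m),
    (∀ j, 0 ≤ w j) ∧ (∀ j, Onto (t j) ∧ good (t j)) ∧
    (∀ f : (ι → B) → ℝ, (∀ z, 0 ≤ f z) →
      ∑ j, w j * av (fun x => f (ev (t j) x)) ≤ av (E.indicator f)) ∧ r ≤ ∑ j, w j

variable [Finite B] [Finite ι] [Finite κ]

lemma Packs.mono {m : ℕ} {good good' : (ι → B ⊕ Fin m) → Prop} {E : Set (ι → B)} {r r' : ℝ}
    (h : Packs m good E r) (hg : ∀ t, Onto t → good t → good' t) (hr : r' ≤ r) :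
    Packs m good' E r' := by
  obtain ⟨J, hJ, w, t, h1, h2, h3, h4⟩ := h
  exact ⟨J, hJ, w, t, h1, fun j => ⟨(h2 j).1, hg _ (h2 j).1 (h2 j).2⟩, h3, hr.trans h4⟩

lemma packs_of_nonpos {m : ℕ} {good : (ι → B ⊕ Fin m) → Prop} {E : Set (ι → B)} {r : ℝ}
    (hr : r ≤ 0) : Packs m good E r :=
  ⟨Empty, inferInstance, fun _ => 0, fun j => j.elim, fun j => j.elim, fun j => j.elim,
    fun f hf => by
      simpa using av_nonneg fun x => Set.indicator_nonneg (fun z _ => hf z) x, by simpa using hr⟩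

lemma Packs.reindex (e : ι ≃ κ) {m : ℕ} {good : (κ → B ⊕ Fin m) → Prop}
    {good' : (ι → B ⊕ Fin m) → Prop} {E : Set (ι → B)} {r : ℝ}
    (h : Packs m good {z | (fun i => z (e i)) ∈ E} r)
    (hg : ∀ t : κ → B ⊕ Fin m, good t → good' fun i => t (e i)) : Packs m good' E r := by
  obtain ⟨J, hJ, w, t, h1, h2, h3, h4⟩ := h
  refine ⟨J, hJ, w, fun j i => t j (e i), h1, fun j => ⟨fun d => ?_, hg _ (h2 j).2⟩, ?_, h4⟩
  · obtain ⟨i, hi⟩ := (h2 j).1 d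
    exact ⟨e.symm i, by simp [hi]⟩
  · intro f hf
    refine (h3 (fun z => f fun i => z (e i)) fun z => hf _).trans (le_of_eq ?_)
    rw [← av_equiv (e.arrowCongr (Equiv.refl B)).symm]
    rfl

lemma Packs.union {m : ℕ} {good : (ι → B ⊕ Fin m) → Prop} {E : Set (ι → B)} {r r' : ℝ}
    (h : Packs m good E r) (h' : Packs m good Eᶜ r') : Packs m good Set.univ (r + r') := by
  obtain ⟨J, hJ, w, t, h1, h2, h3, h4⟩ := h
  obtain ⟨J', hJ', w', t', h1', h2', h3', h4'⟩ := h'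
  refine ⟨J ⊕ J', inferInstance, Sum.elim w w', Sum.elim t t', ?_, ?_, ?_, ?_⟩
  · rintro (j | j) <;> simp [h1, h1']
  · rintro (j | j)
    exacts [h2 j, h2' j]
  · intro f hf
    simp only [Fintype.sum_sum_type, Sum.elim_inl, Sum.elim_inr, Set.indicator_univ]
    refine (add_le_add (h3 f hf) (h3' f hf)).trans (le_of_eq ?_)
    rw [← av_add]
    congr 1
    ext z
    exact Set.indicator_self_add_compl_apply E f z
  · simp only [Fintype.sum_sum_type, Sum.elim_inl, Sum.elim_inr]
    linarith

lemma Packs.comp {M m : ℕ} {good1 : (ι → B ⊕ Fin M) → Prop}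
    {good2 : (ι → B ⊕ Fin M) → (Fin M → B ⊕ Fin m) → Prop} {good : (ι → B ⊕ Fin m) → Prop}
    {r1 r2 : ℝ} (hr2 : 0 ≤ r2)
    (h1 : Packs M good1 Set.univ r1)
    (h2 : ∀ t, Onto t → good1 t → Packs m (good2 t) Set.univ r2)
    (hg : ∀ t s, good1 t → good2 t s → good (tcomp t s)) : Packs m good Set.univ (r1 * r2) := by
  obtain ⟨J, hJ, w, t, a1, a2, a3, a4⟩ := h1
  choose K hK v s b1 b2 b3 b4 using fun j => h2 (t j) (a2 j).1 (a2 j).2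
  refine ⟨Σ j, K j, inferInstance, fun p => w p.1 * v p.1 p.2, fun p => tcomp (t p.1) (s p.1 p.2),
    fun p => mul_nonneg (a1 _) (b1 _ _), fun p => ⟨(a2 _).1.tcomp (b2 _ _).1,
      hg _ _ (a2 _).2 (b2 _ _).2⟩, ?_, ?_⟩
  · intro f hf
    refine le_trans ?_ (a3 f hf)
    rw [Fintype.sum_sigma]
    refine Finset.sum_le_sum fun j _ => ?_
    have := b3 j (fun z => f (ev (t j) z)) fun z => hf _
    rw [Set.indicator_univ] at this
    refine le_trans (le_of_eq ?_) (mul_le_mul_of_nonneg_left this (a1 j))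
    rw [Finset.mul_sum]
    refine Finset.sum_congr rfl fun k _ => ?_
    simp only [ev_tcomp]
    ring
  · rw [Fintype.sum_sigma]
    calc r1 * r2 ≤ (∑ j, w j) * r2 := mul_le_mul_of_nonneg_right a4 hr2
      _ = ∑ j, w j * r2 := by rw [Finset.sum_mul]
      _ ≤ ∑ j, ∑ k, w j * v j k := by
        refine Finset.sum_le_sum fun j _ => ?_
        rw [← Finset.mul_sum]
        exact mul_le_mul_of_nonneg_left (b4 j) (a1 j)

lemma av_range {X Z : Type*} [Finite X] [Finite Z] [Nonempty X] {φ : X → Z}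
    (hφ : Function.Injective φ) (f : Z → ℝ) :
    (Nat.card X : ℝ) / Nat.card Z * av (fun x => f (φ x)) = av ((Set.range φ).indicator f) := by
  classical
  let := Fintype.ofFinite X
  let := Fintype.ofFinite Z
  rw [av_eq, av_eq, Nat.card_eq_fintype_card, Nat.card_eq_fintype_card]
  have hX : (Fintype.card X : ℝ) ≠ 0 := by simp
  have : ∑ z, (Set.range φ).indicator f z = ∑ x, f (φ x) := by
    rw [← Finset.sum_image (s := Finset.univ) (f := f) (fun x _ y _ h => hφ h)]
    rw [← Finset.sum_subset (Finset.subset_univ (Finset.univ.image φ))]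
    · refine Finset.sum_congr rfl fun z hz => ?_
      rw [Set.indicator_of_mem (by simpa using hz)]
    · intro z _ hz
      rw [Set.indicator_of_notMem (by simpa using hz)]
  rw [this]
  field_simp

/-- One step of the greedy packing: the product of the subspace `t0` with `Y` is used first, and
the rest is packed separately over each point of `Fin s → B`. -/
lemma packs_step [Nonempty B] {s r m : ℕ} (E : Set (Fin s ⊕ Fin r → B)) (t0 : Fin s → B ⊕ Fin m)
    (ht0 : Onto t0) (Y : Set (Fin r → B)) (hY : ∀ y ∈ Y, ∀ x, Sum.elim (ev t0 x) y ∈ E)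
    (mass : (Fin s → B) → ℝ)
    (hrec : ∀ x', Packs m (fun t => ∀ z, Sum.elim x' (ev t z) ∈ E)
      {y : Fin r → B | Sum.elim x' y ∈ E ∧ ¬ (x' ∈ Set.range (ev t0) ∧ y ∈ Y)} (mass x')) :
    Packs m (fun t => ∀ x, ev t x ∈ E) E
      ((Nat.card (Fin m → B) : ℝ) / Nat.card (Fin s → B) * dn Y + av mass) := by
  classical
  let := Fintype.ofFinite B
  choose J hJ w t h1 h2 h3 h4 using hrec
  set ρ : ℝ := (Nat.card (Fin m → B) : ℝ) / Nat.card (Fin s → B) with hρ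
  have hρ0 : 0 ≤ ρ := by positivity
  have hsumY : ∀ g : (Fin r → B) → ℝ, ∑ y : {y // y ∈ Y}, ρ / Fintype.card (Fin r → B) * g y =
      av fun y => Y.indicator (fun _ => 1) y * (ρ * g y) := by
    intro g
    rw [av_eq, Finset.sum_div]
    have : ∀ y, Y.indicator (fun _ => (1 : ℝ)) y * (ρ * g y) / Fintype.card (Fin r → B) =
        if y ∈ Y then ρ / Fintype.card (Fin r → B) * g y else 0 := by
      intro y
      by_cases hy : y ∈ Y
      · simp [hy]; ring
      · simp [hy]
    simp only [this]
    rw [← Finset.sum_filter]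
    exact (Finset.sum_subtype (Finset.univ.filter (· ∈ Y)) (p := (· ∈ Y)) (fun y => by simp)
      fun y => ρ / Fintype.card (Fin r → B) * g y).symm
  refine ⟨{y // y ∈ Y} ⊕ Σ x', J x', inferInstance,
    Sum.elim (fun _ => ρ / Fintype.card (Fin r → B)) fun p => w p.1 p.2 / Fintype.card (Fin s → B),
    Sum.elim (fun y => Sum.elim t0 fun i => Sum.inl (y.1 i))
      (fun p => Sum.elim (fun i => Sum.inl (p.1 i)) (t p.1 p.2)), ?_, ?_, ?_, ?_⟩
  · rintro (y | p)
    · simp only [Sum.elim_inl]; positivity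
    · simp only [Sum.elim_inr]
      exact div_nonneg (h1 _ _) (by positivity)
  · rintro (y | p)
    · refine ⟨fun e => ?_, fun x => ?_⟩
      · obtain ⟨i, hi⟩ := ht0 e
        exact ⟨Sum.inl i, by simp [hi]⟩
      · convert hY y.1 y.2 x using 1
        ext1 i
        rcases i with i | i <;> simp [ev]
    · refine ⟨fun e => ?_, fun x => ?_⟩
      · obtain ⟨i, hi⟩ := (h2 p.1 p.2).1 e
        exact ⟨Sum.inr i, by simp [hi]⟩
      · convert (h2 p.1 p.2).2 x using 1
        ext1 i
        rcases i with i | i <;> simp [ev]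
  · intro f hf
    rw [Fintype.sum_sum_type, Fintype.sum_sigma]
    simp only [Sum.elim_inl, Sum.elim_inr]
    have e1 : ∀ (y : Fin r → B) (x : Fin m → B),
        ev (Sum.elim t0 fun i => Sum.inl (y i)) x = Sum.elim (ev t0 x) y := by
      intro y x
      ext1 i
      rcases i with i | i <;> simp [ev]
    have e2 : ∀ (p : Fin s → B) (t : Fin r → B ⊕ Fin m) (x : Fin m → B),
        ev (Sum.elim (fun i => Sum.inl (p i)) t) x = Sum.elim p (ev t x) := by
      intro y t x
      ext1 i
      rcases i with i | i <;> simp [ev]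
    simp only [e1, e2]
    rw [hsumY fun y => av fun x => f (Sum.elim (ev t0 x) y)]
    have k1 : ∀ y : Fin r → B, ρ * (av fun x => f (Sum.elim (ev t0 x) y)) =
        av ((Set.range (ev t0)).indicator fun x' => f (Sum.elim x' y)) := fun y =>
      av_range (ev_injective ht0) fun x' => f (Sum.elim x' y)
    have k0 : (av fun y : Fin r → B => Y.indicator (fun _ => 1) y *
        (ρ * av fun x => f (Sum.elim (ev t0 x) y))) = av fun x' : Fin s → B => av fun y =>
          Y.indicator (fun _ => 1) y *
            (Set.range (ev t0)).indicator (fun x' => f (Sum.elim x' y)) x' := by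
      rw [av_comm]
      congr 1
      ext y
      rw [k1, av_mul_left]
    rw [k0, av_sum_arrow]
    have k2 : ∑ x' : Fin s → B, ∑ j, w x' j / Fintype.card (Fin s → B) *
        av (fun x => f (Sum.elim x' (ev (t x' j) x))) ≤
        av fun x' : Fin s → B => av (({y : Fin r → B | Sum.elim x' y ∈ E ∧
          ¬ (x' ∈ Set.range (ev t0) ∧ y ∈ Y)} : Set _).indicator fun y => f (Sum.elim x' y)) := by
      rw [av_eq, Finset.sum_div]
      refine Finset.sum_le_sum fun x' _ => ?_
      refine le_trans (le_of_eq ?_) (div_le_div_of_nonneg_right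
        (h3 x' (fun y => f (Sum.elim x' y)) fun y => hf _) (by positivity))
      rw [Finset.sum_div]
      exact Finset.sum_congr rfl fun j _ => by ring
    refine (add_le_add le_rfl k2).trans (le_of_eq ?_)
    rw [← av_add]
    congr 1
    ext x'
    rw [← av_add]
    congr 1
    ext y
    by_cases hx : x' ∈ Set.range (ev t0) <;> by_cases hy : y ∈ Y
    · have hE : Sum.elim x' y ∈ E := by
        obtain ⟨x, rfl⟩ := hx
        exact hY y hy x
      simp [Set.indicator, hx, hy, hE]
    all_goals simp [Set.indicator, hx, hy]
  · rw [Fintype.sum_sum_type, Fintype.sum_sigma]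
    simp only [Sum.elim_inl, Sum.elim_inr]
    have := hsumY fun _ => 1
    simp only [mul_one] at this
    rw [this, av_mul_right, mul_comm ρ]
    refine add_le_add le_rfl ?_
    rw [av_eq, Finset.sum_div]
    refine Finset.sum_le_sum fun x' _ => ?_
    rw [← Finset.sum_div]
    exact div_le_div_of_nonneg_right (h4 x') (by positivity)

end packing

section packing2
variable {α : Type}

lemma Ins.fibre {ι κ : Type} {a : α} {E : Set (ι ⊕ κ → Option α)} (h : Ins a E)
    (x : ι → Option α) : Ins a {y : κ → Option α | Sum.elim x y ∈ E} := by
  intro y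
  simp only [Set.mem_ofPred_eq]
  rw [h, h (Sum.elim x (col a y))]
  have : col a (Sum.elim x (col a y)) = col a (Sum.elim x y) := by
    ext1 i
    rcases i with i | i <;> simp [col]
  rw [this]

lemma Ins.fibre' {ι κ : Type} {a : α} {E : Set (ι ⊕ κ → Option α)} (h : Ins a E)
    (y : κ → Option α) : Ins a {x : ι → Option α | Sum.elim x y ∈ E} := by
  intro x
  simp only [Set.mem_ofPred_eq]
  rw [h, h (Sum.elim (col a x) y)]
  have : col a (Sum.elim (col a x) y) = col a (Sum.elim x y) := by
    ext1 i
    rcases i with i | i <;> simp [col]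
  rw [this]

lemma Ins.reindex {ι κ : Type} {a : α} {E : Set (ι → Option α)} (h : Ins a E)
    (e : ι ≃ κ) : Ins a {z : κ → Option α | (fun i => z (e i)) ∈ E} :=
  fun z => h fun i => z (e i)

variable [Finite α] [Nonempty α]

/-- Greedy packing of an insensitive set by subspaces contained in it: at every stage a fixed
proportion `κ` is gained, unless the leftover has density below `β`. -/
lemma DHJ.pack_ins (h : DHJ α) (m : ℕ) {β : ℝ} (hβ : 0 < β) :
    ∃ κ : ℝ, 0 < κ ∧ κ ≤ 1 ∧ ∀ T : ℕ, ∃ n : ℕ, ∀ (ι : Type) [Finite ι], n ≤ Nat.card ι →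
      ∀ (a : α) (E : Set (ι → Option α)), Ins a E →
        Packs m (fun t => ∀ x, ev t x ∈ E) E (dn E - β - (1 - κ) ^ T * dn E) := by
  obtain ⟨s, hs⟩ := h.ins_hasSub m (δ := β / 2) (by positivity)
  set ρ : ℝ := (Nat.card (Fin m → Option α) : ℝ) / Nat.card (Fin s → Option α) with hρ
  have hρ0 : 0 < ρ := div_pos (by exact_mod_cast Nat.card_pos) (by exact_mod_cast Nat.card_pos)
  set V := Fin s → Option α ⊕ Fin m
  have hV : (0 : ℝ) < Nat.card V := by exact_mod_cast Nat.card_pos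
  set κ : ℝ := min 1 (ρ * (β / 2 / Nat.card V)) with hκ
  refine ⟨κ, lt_min one_pos (by positivity), min_le_left _ _, fun T => ?_⟩
  have hκ1 : κ ≤ 1 := min_le_left _ _
  have hκ0 : 0 < κ := lt_min one_pos (by positivity)
  induction T with
  | zero =>
    refine ⟨0, fun ι _ _ a E _ => packs_of_nonpos ?_⟩
    simp; linarith
  | succ T ih =>
    obtain ⟨n, hn⟩ := ih
    refine ⟨s + n, fun ι _ hι a E hE => ?_⟩
    have hq0 : 0 ≤ (1 - κ) ^ T := pow_nonneg (by linarith) _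
    rcases lt_or_ge (dn E) β with hlt | hge
    · refine packs_of_nonpos ?_
      have : 0 ≤ (1 - κ) ^ (T + 1) * dn E :=
        mul_nonneg (pow_nonneg (by linarith) _) (dn_nonneg _)
      linarith
    obtain ⟨r, hr, ⟨e⟩⟩ := exists_split hι
    rw [← dn_reindex e] at hge ⊢
    refine Packs.reindex e (good := fun t => ∀ x, ev t x ∈
      {z : Fin s ⊕ Fin r → Option α | (fun i => z (e i)) ∈ E}) ?_ (fun t ht => ht)
    replace hE := hE.reindex e
    generalize {z : Fin s ⊕ Fin r → Option α | (fun i => z (e i)) ∈ E} = E at hE hge ⊢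
    have hge' := hge
    rw [dn_sum_arrow'] at hge'
    have h1 := dn_ge_half (fun y => dn_le_one _) hβ.le hge'
    obtain ⟨t0, ⟨y0, -, ht0, -⟩, ht⟩ := exists_dn_ge (V := V)
      (fun t => {y | Onto t ∧ ∀ x, Sum.elim (ev t x) y ∈ E})
      (fun y hy => by
        obtain ⟨t, h1, h2⟩ := hs (Fin s) (by simp) a _ (hE.fibre' y) hy
        exact ⟨t, h1, h2⟩) (by positivity) h1
    set Y : Set (Fin r → Option α) := {y | ∀ x, Sum.elim (ev t0 x) y ∈ E} with hY
    replace ht : β / 2 / Nat.card V ≤ dn Y := ht.trans (dn_mono fun y hy => hy.2.2)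
    have hYI : Ins a Y := by
      intro y
      exact forall_congr' fun x => hE.fibre (ev t0 x) y
    have hmain := packs_step E t0 ht0 Y (fun y hy => hy)
      (fun x' => dn {y : Fin r → Option α | Sum.elim x' y ∈ E ∧
          ¬ (x' ∈ Set.range (ev t0) ∧ y ∈ Y)} - β - (1 - κ) ^ T *
        dn {y : Fin r → Option α | Sum.elim x' y ∈ E ∧
          ¬ (x' ∈ Set.range (ev t0) ∧ y ∈ Y)})
      (fun x' => by
        refine (hn (Fin r) (by simpa using hr) a _ ?_).mono (fun t _ h x => (h x).1) le_rfl
        intro y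
        refine and_congr (hE.fibre x' y) (not_congr (and_congr Iff.rfl (hYI y))))
    refine hmain.mono (fun _ _ h => h) ?_
    rw [av_sub, av_sub, av_mul_left, av_const, ← hρ]
    have hD : av (fun x' : Fin s → Option α => dn {y : Fin r → Option α | Sum.elim x' y ∈ E ∧
          ¬ (x' ∈ Set.range (ev t0) ∧ y ∈ Y)}) = dn E - ρ * dn Y := by
      have hρ' : ρ = av ((Set.range (ev t0)).indicator fun _ => (1 : ℝ)) := by
        rw [← av_range (ev_injective ht0) fun _ => (1 : ℝ), av_const, mul_one]
      rw [dn_sum_arrow E, hρ', ← av_mul_right, ← av_sub]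
      congr 1
      ext x'
      unfold dn
      rw [← av_mul_left, ← av_sub]
      congr 1
      ext y
      by_cases hx : x' ∈ Set.range (ev t0)
      · by_cases hy : y ∈ Y
        · have hE : Sum.elim x' y ∈ E := by
            obtain ⟨x, rfl⟩ := hx
            exact hy x
          simp [Set.indicator, hx, hy, hE]
        · simp [Set.indicator, hx, hy]
          split_ifs <;> tauto
      · simp [Set.indicator, hx]
        split_ifs <;> tauto
    rw [hD]
    have hm : κ ≤ ρ * dn Y := (min_le_right _ _).trans (mul_le_mul_of_nonneg_left ht hρ0.le)
    have h5 : κ * dn E ≤ ρ * dn Y := by nlinarith [dn_le_one E, dn_nonneg E]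
    rw [pow_succ]
    nlinarith

/-- `E` contains or avoids the subspace with template `t`. -/
def Cst {ι : Type} {B : Type} {m : ℕ} (E : Set (ι → B)) (t : ι → B ⊕ Fin m) : Prop :=
  (∀ x, ev t x ∈ E) ∨ ∀ x, ev t x ∉ E

lemma DHJ.pack_single (h : DHJ α) (m : ℕ) {ε : ℝ} (hε : 0 < ε) :
    ∃ n : ℕ, ∀ (ι : Type) [Finite ι], n ≤ Nat.card ι →
      ∀ (a : α) (E : Set (ι → Option α)), Ins a E → Packs m (Cst E) Set.univ (1 - ε) := by
  obtain ⟨κ, hκ0, hκ1, hκ⟩ := h.pack_ins m (β := ε / 4) (by positivity)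
  obtain ⟨T, hT⟩ := exists_pow_lt_of_lt_one (show 0 < ε / 4 by positivity)
    (show 1 - κ < 1 by linarith)
  obtain ⟨n, hn⟩ := hκ T
  refine ⟨n, fun ι _ hι a E hE => ?_⟩
  have p1 := (hn ι hι a E hE).mono (good' := Cst E) (fun t _ h => Or.inl h) le_rfl
  have p2 := (hn ι hι a Eᶜ hE.compl).mono (good' := Cst E) (fun t _ h => Or.inr h) le_rfl
  refine (p1.union p2).mono (fun _ _ h => h) ?_
  rw [dn_compl]
  have h0 : 0 ≤ (1 - κ) ^ T := pow_nonneg (by linarith) _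
  linarith

lemma Cst.tcomp {ι : Type} {B : Type} {m M : ℕ} {E : Set (ι → B)} {t : ι → B ⊕ Fin M}
    (h : Cst E t) (s : Fin M → B ⊕ Fin m) : Cst E (tcomp t s) := by
  unfold Cst
  simp only [ev_tcomp]
  rcases h with h | h
  · exact Or.inl fun x => h _
  · exact Or.inr fun x => h _

/-- Packing by subspaces on each of which finitely many insensitive sets are all constant. -/
lemma DHJ.pack_multi (h : DHJ α) (l : Finset α) :
    ∀ (m : ℕ) {ε : ℝ}, 0 < ε → ε ≤ 1 →
    ∃ n : ℕ, ∀ (ι : Type) [Finite ι], n ≤ Nat.card ι →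
      ∀ (E : α → Set (ι → Option α)), (∀ a, Ins a (E a)) →
        Packs m (fun t => ∀ a ∈ l, Cst (E a) t) Set.univ (1 - ε) := by
  classical
  induction l using Finset.induction_on with
  | empty =>
    intro m ε hε _
    obtain ⟨n, hn⟩ := h.pack_single m hε
    refine ⟨n, fun ι _ hι E hE => (hn ι hι (Classical.arbitrary α) _ (hE _)).mono ?_ le_rfl⟩
    simp
  | insert b l hb ih =>
    intro m ε hε hε1
    obtain ⟨M, hM⟩ := ih m (ε := ε / 2) (by positivity) (by linarith)
    obtain ⟨n, hn⟩ := h.pack_single M (ε := ε / 2) (by positivity)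
    refine ⟨n, fun ι _ hι E hE => ?_⟩
    refine (Packs.comp (good1 := Cst (E b)) (good2 := fun t s => ∀ a ∈ l, Cst {x | ev t x ∈ E a} s)
      (r1 := 1 - ε / 2) (r2 := 1 - ε / 2)
      (by linarith) (hn ι hι b _ (hE b)) (fun t _ _ => hM (Fin M) (by simp) _
        fun a => (hE a).ev t) ?_).mono (fun _ _ h => h) (by nlinarith)
    intro t s h1 h2 a ha
    rcases Finset.mem_insert.mp ha with rfl | ha
    · exact h1.tcomp s
    · have := h2 a ha
      unfold Cst at this ⊢
      simp only [ev_tcomp]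
      exact this

end packing2

/-! ### The density Hales–Jewett theorem -/

section dhj
variable {α : Type}

/-- If all values of `f` are at most `c + g` and the average is at least `c - g`, then no value is
much smaller than `c`. -/
lemma ge_of_av_ge {X : Type*} [Finite X] [Nonempty X] {f : X → ℝ} {c g : ℝ} (hg : 0 ≤ g)
    (h1 : ∀ x, f x ≤ c + g) (h2 : c - g ≤ av f) (x : X) : c - 2 * Nat.card X * g ≤ f x := by
  classical
  let := Fintype.ofFinite X
  have hpos : (1 : ℝ) ≤ Fintype.card X := by exact_mod_cast Fintype.card_pos
  rw [av_eq, le_div_iff₀ (by linarith), ← Finset.add_sum_erase _ _ (Finset.mem_univ x)] at h2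
  have h3 : ∑ y ∈ Finset.univ.erase x, f y ≤ (Fintype.card X - 1) * (c + g) := by
    refine (Finset.sum_le_card_nsmul _ _ _ fun y _ => h1 y).trans ?_
    rw [Finset.card_erase_of_mem (Finset.mem_univ x), nsmul_eq_mul, Finset.card_univ,
      Nat.cast_sub Fintype.card_pos, Nat.cast_one]
  rw [Nat.card_eq_fintype_card]
  nlinarith

/-- A local density bound on each subspace of an almost complete packing gives a global one. -/
lemma Packs.dn_le {B ι : Type} [Finite B] [Finite ι] [Nonempty B] {m : ℕ}
    {good : (ι → B ⊕ Fin m) → Prop}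
    {ε c : ℝ} (h : Packs m good Set.univ (1 - ε)) (hc : 0 ≤ c) (E D : Set (ι → B))
    (hED : ∀ t, Onto t → good t → dn {x | ev t x ∈ E} ≤ c * (1 - dn {x | ev t x ∈ D})) :
    dn E ≤ c * (1 - dn D) + ε := by
  obtain ⟨J, hJ, w, t, h1, h2, h3, h4⟩ := h
  have key : ∀ F : Set (ι → B), ∑ j, w j * (1 - dn {x | ev (t j) x ∈ F}) ≤ 1 - dn F := by
    intro F
    have := h3 (Fᶜ.indicator fun _ => 1) fun z => Set.indicator_nonneg (fun _ _ => zero_le_one) z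
    rw [Set.indicator_univ] at this
    rw [← dn_compl]
    refine le_trans (le_of_eq (Finset.sum_congr rfl fun j _ => ?_)) this
    rw [← dn_compl]
    rfl
  have k1 := key E
  have k2 := key D
  have k3 : ∑ j, w j * dn {x | ev (t j) x ∈ E} ≤
      ∑ j, c * (w j * (1 - dn {x | ev (t j) x ∈ D})) := by
    refine Finset.sum_le_sum fun j _ => ?_
    have := mul_le_mul_of_nonneg_left (hED (t j) (h2 j).1 (h2 j).2) (h1 j)
    linarith
  rw [← Finset.mul_sum] at k3
  simp only [mul_sub, mul_one, Finset.sum_sub_distrib] at k1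
  have := mul_le_mul_of_nonneg_left k2 hc
  linarith

/-- A word with a `none`, all of whose specialisations lie in `A` together with itself, gives a
line. -/
lemma hasLine_of_col {ι : Type} {A : Set (ι → Option α)} {w : ι → Option α} {i : ι}
    (hi : w i = none) (hw : w ∈ A) (hc : ∀ a, col a w ∈ A) : HasLine A := by
  refine ⟨fun i => (w i).map some, ⟨i, by simp [hi]⟩, fun b => ?_⟩
  rcases b with _ | a
  · convert hw using 1
    ext1 i
    beta_reduce
    rcases w i <;> rfl
  · convert hc a using 1
    ext1 i
    simp only [col]
    rcases w i <;> rfl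

lemma HasLine.of_fibre {ι κ : Type} {A : Set (ι ⊕ κ → α)} (x : ι → α)
    (h : HasLine {y : κ → α | Sum.elim x y ∈ A}) : HasLine A := by
  obtain ⟨v, ⟨i, hi⟩, hv⟩ := h
  refine ⟨Sum.elim (fun i => some (x i)) v, ⟨Sum.inr i, by simp [hi]⟩, fun a => ?_⟩
  have := hv a
  simp only [Set.mem_ofPred_eq] at this
  convert this using 1
  ext1 i
  rcases i with i | i <;> simp

lemma HasLine.of_fibre' {ι κ : Type} {A : Set (ι ⊕ κ → α)} (y : κ → α)
    (h : HasLine {x : ι → α | Sum.elim x y ∈ A}) : HasLine A := by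
  obtain ⟨v, ⟨i, hi⟩, hv⟩ := h
  refine ⟨Sum.elim v (fun i => some (y i)), ⟨Sum.inl i, by simp [hi]⟩, fun a => ?_⟩
  have := hv a
  simp only [Set.mem_ofPred_eq] at this
  convert this using 1
  ext1 i
  rcases i with i | i <;> simp

lemma HasLine.of_reindex {ι κ : Type} {A : Set (ι → α)} (e : ι ≃ κ)
    (h : HasLine {z : κ → α | (fun i => z (e i)) ∈ A}) : HasLine A := by
  obtain ⟨v, ⟨i, hi⟩, hv⟩ := h
  exact ⟨fun i => v (e i), ⟨e.symm i, by simp [hi]⟩, hv⟩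

variable [Finite α] [Nonempty α]

/-- If all fibres of `A` over the prefix `Fin M ⊕ κ` have density at least `s / 2`, then some
substitution of the prefix has the property that, for many `y`, all specialisations of the
substituted word are in the fibre over `y`. -/
lemma exists_template (h : DHJ α) {s : ℝ} (hs : 0 < s) :
    ∃ (M : ℕ) (θ : ℝ), 0 < θ ∧ θ ≤ s ∧ ∀ m' : ℕ, ∃ m1 : ℕ, ∀ (μ : Type) [Finite μ]
      (A : Set ((Fin M ⊕ Fin m1) ⊕ μ → Option α)),
      (∀ p, s / 2 ≤ dn {y | Sum.elim p y ∈ A}) →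
      ∃ (T : Type) (_ : Finite T) (U : Fin M ⊕ Fin m1 → Option α ⊕ T), m' ≤ Nat.card T ∧ Onto U ∧
        (∃ i, U i = Sum.inl none) ∧
        θ ≤ av fun z : T → Option α => dn {y | ∀ a, Sum.elim (col a (ev U z)) y ∈ A} := by
  classical
  obtain ⟨M, hM⟩ := h (s / 4) (by positivity)
  set V := Fin M → Option α
  have hV : (1 : ℝ) ≤ Nat.card V := by exact_mod_cast Nat.card_pos
  set θ : ℝ := s / 4 / Nat.card V with hθ
  have hθ0 : 0 < θ := by positivity
  have hθs : θ ≤ s / 4 := div_le_self (by positivity) hV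
  refine ⟨M, θ / 2, by positivity, by linarith, fun m' => ?_⟩
  -- The length `m1` must suit every choice of the representative of the wildcard.
  have htail : ∀ j0 : Fin M, ∃ n, ∀ (κ : Type) [Finite κ], n ≤ Nat.card κ →
      dn {c : κ → Fin M ⊕ α | Nat.card {t // c t ∈ Set.range
        (fun b : Option α => b.elim (Sum.inl j0) (Sum.inr : α → Fin M ⊕ α))} < m'} ≤ θ / 4 :=
    fun j0 => exists_tail _ (Set.range_nonempty _) m' (by positivity)
  choose n hn using htail
  set m1 := Finset.univ.sup n
  refine ⟨m1, fun μ _ A hA => ?_⟩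
  let u : (Fin M → Option α) → Fin M ⊕ α → Option α := fun v => Sum.elim v some
  let wd : (Fin M → Option α) → (Fin m1 → Fin M ⊕ α) → (Fin M ⊕ Fin m1 → Option α) :=
    fun v c => Sum.elim v fun t => u v (c t)
  have hcol : ∀ v c a, col a (wd v c) = wd (fun i => some ((v i).getD a)) c := by
    intro v c a
    ext1 i
    rcases i with i | t
    · rfl
    · simp only [col, wd, u, Sum.elim_inr]
      rcases c t <;> rfl
  let Q : Set ((Fin m1 → Fin M ⊕ α) × (μ → Option α)) :=
    {p | s / 4 ≤ dn {x : Fin M → α | Sum.elim (wd (fun i => some (x i)) p.1) p.2 ∈ A}}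
  have hQ : s / 4 ≤ dn Q := by
    have h1 : ∀ c : Fin m1 → Fin M ⊕ α, s / 4 ≤ dn {y : μ → Option α | (c, y) ∈ Q} := by
      intro c
      have h2 : s / 2 ≤ av fun y : μ → Option α =>
          dn {x : Fin M → α | Sum.elim (wd (fun i => some (x i)) c) y ∈ A} := by
        unfold dn
        rw [← av_comm fun (x : Fin M → α) (y : μ → Option α) =>
          ({x : Fin M → α | Sum.elim (wd (fun i => some (x i)) c) y ∈ A} : Set _).indicator
            (fun _ => (1 : ℝ)) x]
        exact le_av_of_le fun x => hA (wd (fun i => some (x i)) c)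
      have h3 := dn_ge_half (fun y => dn_le_one _) (by positivity) h2
      rw [show s / 2 / 2 = s / 4 by ring] at h3
      exact h3
    unfold dn
    rw [av_prod]
    exact le_av_of_le h1
  obtain ⟨v, ⟨p0, -, ⟨j0, hj0⟩, -⟩, hv⟩ := exists_dn_ge (V := V)
    (fun v => {p : (Fin m1 → Fin M ⊕ α) × (μ → Option α) | (∃ i, v i = none) ∧
      ∀ a, Sum.elim (col a (wd v p.1)) p.2 ∈ A}) (A := Q)
    (fun p hp => by
      obtain ⟨v, h1, h2⟩ := hM (Fin M) (by simp) _ hp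
      refine ⟨v, h1, fun a => ?_⟩
      rw [hcol]
      exact h2 a) (by positivity) hQ
  let G : (Fin m1 → Fin M ⊕ α) → ℝ :=
    fun c => dn {y : μ → Option α | ∀ a, Sum.elim (col a (wd v c)) y ∈ A}
  have hG : θ ≤ av G := by
    refine hv.trans ((dn_mono (Set.inter_subset_right.trans
      fun p hp => hp.2 : _ ⊆ {p : (Fin m1 → Fin M ⊕ α) × (μ → Option α) |
        ∀ a, Sum.elim (col a (wd v p.1)) p.2 ∈ A})).trans (le_of_eq ?_))
    unfold dn
    rw [av_prod]
    rfl
  -- Resample the letters which represent a letter of `Option α`.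
  let ω : Option α → Fin M ⊕ α := fun b => b.elim (Sum.inl j0) Sum.inr
  have huω : ∀ b, u v (ω b) = b := by
    rintro (_ | b)
    · exact hj0
    · rfl
  let σ0 : (Fin M ⊕ α) × Option α → (Fin M ⊕ α) × Option α := fun p =>
    if p.1 ∈ Set.range ω then (ω p.2, u v p.1) else p
  have hσ0 : Function.Involutive σ0 := by
    rintro ⟨o, b⟩
    by_cases ho : o ∈ Set.range ω
    · obtain ⟨b', rfl⟩ := ho
      simp [σ0, huω]
    · simp only [σ0, if_neg ho]
  rw [av_resample hσ0.toPerm] at hG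
  obtain ⟨c, hcR, hc⟩ := exists_notMem_ge (fun c => av_le_of_le fun z => dn_le_one _) hθ0 hG _
    (hn j0 (Fin m1) (by simpa using Finset.le_sup (f := n) (Finset.mem_univ j0)))
  let T := {t // c t ∈ Set.range ω}
  replace hcR : m' ≤ Nat.card T := not_lt.mp hcR
  let U : Fin M ⊕ Fin m1 → Option α ⊕ T := Sum.elim (fun i => Sum.inl (v i))
    fun t => if ht : c t ∈ Set.range ω then Sum.inr ⟨t, ht⟩ else Sum.inl (u v (c t))
  refine ⟨T, inferInstance, U, hcR, ?_, ⟨Sum.inl j0, by simp [U, hj0]⟩, ?_⟩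
  · rintro ⟨t, ht⟩
    exact ⟨Sum.inr t, by simp only [U, Sum.elim_inr]; rw [dif_pos ht]⟩
  · refine hc.trans (le_of_eq ?_)
    rw [← av_restrict (fun t => c t ∈ Set.range ω)]
    congr 1
    ext z
    have : wd v (fun t => (σ0 (c t, z t)).1) = ev U (fun t : T => z t) := by
      ext1 i
      rcases i with i | t
      · simp [wd, ev, U]
      · simp only [wd, ev, U, Sum.elim_inr, σ0]
        by_cases ht : c t ∈ Set.range ω
        · rw [if_pos ht, dif_pos ht]
          simp [huω]
        · rw [if_neg ht, dif_neg ht]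
          simp
    change dn {y : μ → Option α | ∀ a,
      Sum.elim (col a (wd v (fun t => (σ0 (c t, z t)).1))) y ∈ A} = _
    rw [this]

/-- The density Hales–Jewett property of `α` at the single density `δ`. -/
def DHJAt (α : Type) [Finite α] (δ : ℝ) : Prop :=
  ∃ n : ℕ, ∀ (ι : Type) [Finite ι], n ≤ Nat.card ι → ∀ A : Set (ι → α), δ ≤ dn A → HasLine A

/-- The induction step on the alphabet, by density increment at the critical density `s`. -/
lemma DHJ.option (h : DHJ α) : DHJ (Option α) := by
  classical
  let := Fintype.ofFinite α
  by_contra hneg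
  unfold DHJ at hneg
  push Not at hneg
  obtain ⟨δ0, hδ0, hbad⟩ := hneg
  have hbad' : ¬ DHJAt (Option α) δ0 := by
    rintro ⟨n, hn⟩
    obtain ⟨ι, hι, hc, A, h1, h2⟩ := hbad n
    exact h2 (hn ι hc A h1)
  have hup : ∀ a b : ℝ, a ≤ b → DHJAt (Option α) a → DHJAt (Option α) b := by
    rintro a b hab ⟨n, hn⟩
    exact ⟨n, fun ι _ hι A hA => hn ι hι A (hab.trans hA)⟩
  set G : Set ℝ := {δ | DHJAt (Option α) δ} with hG
  have hGne : G.Nonempty := ⟨2, 0, fun ι _ _ A hA => by linarith [dn_le_one A]⟩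
  have hlb : ∀ δ ∈ G, δ0 ≤ δ := fun δ hδ => by
    by_contra! hlt
    exact hbad' (hup _ _ hlt.le hδ)
  have hGb : BddBelow G := ⟨δ0, hlb⟩
  set s := sInf G with hs
  have hs0 : 0 < s := hδ0.trans_le (le_csInf hGne hlb)
  have habove : ∀ γ > 0, DHJAt (Option α) (s + γ) := by
    intro γ hγ
    obtain ⟨δ, hδ, hlt⟩ := exists_lt_of_csInf_lt hGne (show sInf G < s + γ by linarith)
    exact hup _ _ hlt.le hδ
  have hbelow : ∀ γ > 0, ¬ DHJAt (Option α) (s - γ) := by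
    intro γ hγ hg
    have := csInf_le hGb (show s - γ ∈ G from hg)
    linarith
  have hs1 : s ≤ 1 := by
    by_contra! hlt
    refine hbelow ((s - 1) / 2) (by linarith) ⟨0, fun ι _ _ A hA => ?_⟩
    linarith [dn_le_one A]
  obtain ⟨M, θ, hθ0, hθs, hθ⟩ := exists_template h hs0
  set ε := s * θ / 4 with hε
  have hε0 : 0 < ε := by positivity
  have hεs : ε ≤ s / 4 := by rw [hε]; nlinarith
  obtain ⟨m, hm⟩ := habove ε hε0
  obtain ⟨m', hm'⟩ := h.pack_multi Finset.univ m hε0 (by linarith)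
  obtain ⟨m1, hm1⟩ := hθ m'
  set P := Fin M ⊕ Fin m1 → Option α
  have hK : (1 : ℝ) ≤ Nat.card P := by exact_mod_cast Nat.card_pos
  set γ := ε / (2 * Nat.card P) with hγ
  have hγ0 : 0 < γ := by positivity
  obtain ⟨n, hn⟩ := habove γ hγ0
  -- A line-free set of almost critical density in a large dimension.
  obtain ⟨r, hr, A, hA, hAl⟩ : ∃ r, n ≤ r ∧ ∃ A : Set ((Fin M ⊕ Fin m1) ⊕ Fin r → Option α),
      s - γ ≤ dn A ∧ ¬ HasLine A := by
    by_contra! hcon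
    refine hbelow γ hγ0 ⟨(M + m1) + n, fun ι _ hι A hA => ?_⟩
    obtain ⟨r, hr, ⟨e⟩⟩ := exists_split hι
    let e' : ι ≃ (Fin M ⊕ Fin m1) ⊕ Fin r := e.trans (Equiv.sumCongr finSumFinEquiv.symm
      (Equiv.refl _))
    refine HasLine.of_reindex e' (hcon r hr _ ?_)
    rwa [dn_reindex]
  have hfib : ∀ p : P, s - ε ≤ dn {y | Sum.elim p y ∈ A} := by
    intro p
    have := ge_of_av_ge (c := s) hγ0.le (fun p : P => ?_) (hA.trans (dn_sum_arrow A).le) p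
    · have h2 : 2 * (Nat.card P : ℝ) * γ = ε := by rw [hγ]; field_simp
      linarith
    · by_contra! hlt
      exact hAl (HasLine.of_fibre p (hn (Fin r) (by simpa using hr) _ hlt.le))
  obtain ⟨T, hT, U, hTc, hU, ⟨i0, hi0⟩, hUθ⟩ := hm1 (Fin r) A
    fun p => le_trans (by linarith) (hfib p)
  let D : (Fin r → Option α) → Set (T → Option α) :=
    fun y => {z | ∀ a, Sum.elim (col a (ev U z)) y ∈ A}
  let B : (Fin r → Option α) → Set (T → Option α) := fun y => {z | Sum.elim (ev U z) y ∈ A}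
  have hDav : θ ≤ av fun y => dn (D y) := by
    refine hUθ.trans (le_of_eq ?_)
    unfold dn
    rw [av_comm]
    rfl
  have hBav : s - ε ≤ av fun y => dn (B y) := by
    unfold dn
    rw [← av_comm fun (z : T → Option α) (y : Fin r → Option α) =>
      (B y).indicator (fun _ => (1 : ℝ)) z]
    exact le_av_of_le fun z => hfib (ev U z)
  obtain ⟨y, hy⟩ : ∃ y, s - ε + (s + ε) * θ ≤ dn (B y) + (s + ε) * dn (D y) := by
    apply exists_le_of_le_av
    rw [av_add, av_mul_left]
    have := mul_le_mul_of_nonneg_left hDav (show 0 ≤ s + ε by linarith)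
    linarith
  have hpack := hm' T hTc (fun a => {z | Sum.elim (col a (ev U z)) y ∈ A})
    (fun a z => by
      simp only [Set.mem_ofPred_eq]
      rw [col_ev])
  have hle := hpack.dn_le (c := s + ε) (by linarith) (B y) (D y) (fun t ht hgood => ?_)
  · nlinarith
  · by_cases hall : ∀ a x, ev t x ∈ {z | Sum.elim (col a (ev U z)) y ∈ A}
    · have h1 : {x | ev t x ∈ B y} = ∅ := by
        rw [Set.eq_empty_iff_forall_notMem]
        intro x hx
        refine hAl (HasLine.of_fibre' y (hasLine_of_col (i := i0) (w := ev U (ev t x)) ?_ hx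
          fun a => hall a x))
        simp [ev, hi0]
      have h2 : dn {x | ev t x ∈ B y} = 0 := by
        rw [h1]
        simp [dn, av]
      rw [h2]
      exact mul_nonneg (by linarith) (by linarith [dn_le_one {x | ev t x ∈ D y}])
    · push Not at hall
      obtain ⟨a, x, hax⟩ := hall
      have h1 : ∀ x, ev t x ∉ D y := by
        intro x' hx'
        rcases hgood a (Finset.mem_univ a) with hg | hg
        · exact hax (hg x)
        · exact hg x' (hx' a)
      have h2 : dn {x | ev t x ∈ D y} = 0 := by
        have : {x | ev t x ∈ D y} = ∅ := Set.eq_empty_iff_forall_notMem.mpr h1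
        rw [this]
        simp [dn, av]
      rw [h2, sub_zero, mul_one]
      by_contra! hlt
      refine hAl (HasLine.of_fibre' y (HasLine.of_ev hU (HasLine.of_ev ht ?_)))
      exact hm (Fin m) (by simp) _ hlt.le

end dhj

lemma dhj_of_unique : DHJ (Fin 1) := by
  intro δ hδ
  refine ⟨1, fun ι _ hι A hA => ?_⟩
  obtain ⟨a, ha⟩ := nonempty_of_dn_pos (hδ.trans_le hA)
  have : Nonempty ι := (Nat.card_pos_iff.mp hι).1
  refine ⟨fun _ => none, ⟨Classical.arbitrary ι, rfl⟩, fun b => ?_⟩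
  convert ha

lemma DHJ.congr {α β : Type} [Finite α] [Finite β] (e : α ≃ β) (h : DHJ α) : DHJ β := by
  intro δ hδ
  obtain ⟨n, hn⟩ := h δ hδ
  refine ⟨n, fun ι _ hι A hA => ?_⟩
  obtain ⟨v, ⟨i, hi⟩, hv⟩ := hn ι hι {x | (fun i => e (x i)) ∈ A}
    (hA.trans (dn_equiv ((Equiv.refl ι).arrowCongr e) A).ge)
  refine ⟨fun i => (v i).map e, ⟨i, by simp [hi]⟩, fun b => ?_⟩
  have := hv (e.symm b)
  simp only [Set.mem_ofPred_eq] at this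
  convert this using 1
  ext1 i
  beta_reduce
  rcases v i <;> simp

/-- The density Hales–Jewett theorem. -/
theorem density_hales_jewett (k : ℕ) : DHJ (Fin (k + 1)) := by
  induction k with
  | zero => exact dhj_of_unique
  | succ k ih => exact ih.option.congr (finSuccEquiv (k + 1)).symm

/-! ### Szemerédi's theorem with multiplicity -/

/-- A surjective homomorphism of finite groups preserves uniform averages. -/
lemma av_hom {H G : Type*} [AddCommGroup H] [AddCommGroup G] [Finite H] [Finite G] (φ : H →+ G)
    (hφ : Function.Surjective φ) (F : G → ℝ) : av (fun h => F (φ h)) = av F := by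
  have : av (fun h => F (φ h)) = av fun g : G => av fun h : H => F (φ h + g) := by
    rw [← av_const (X := G) (av fun h => F (φ h))]
    congr 1
    ext g
    obtain ⟨h0, rfl⟩ := hφ g
    simp only [← map_add]
    exact (av_equiv (Equiv.addRight h0) fun h => F (φ h)).symm
  rw [this, av_comm, ← av_const (X := H) (av F)]
  congr 1
  ext h
  exact av_equiv (Equiv.addLeft (φ h)) F

/-- Szemerédi's theorem with multiplicity, in the functional form, uniformly over all finite abelian
groups. A random affine image of the cube of words meets the set `{g ≥ δ / 2}` in positive density,
hence contains the image of a combinatorial line, which is a progression. -/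
theorem varnavides (K : ℕ) {δ : ℝ} (hδ : 0 < δ) :
    ∃ c : ℝ, 0 < c ∧ ∀ (G : Type) [AddCommGroup G] [Finite G] (g : G → ℝ),
      (∀ x, 0 ≤ g x) → (∀ x, g x ≤ 1) → δ ≤ av g →
      c ≤ av fun p : G × G => ∏ j : Fin (K + 1), g (p.1 + (j : ℕ) • p.2) := by
  classical
  obtain ⟨n, hn⟩ := density_hales_jewett K (δ / 4) (by positivity)
  set V := Fin n → Option (Fin (K + 1))
  have hV : (0 : ℝ) < Nat.card V := by exact_mod_cast Nat.card_pos
  refine ⟨(δ / 2) ^ (K + 1) * (δ / 4 / Nat.card V), by positivity, fun G _ _ g h0 h1 hg => ?_⟩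
  set A : Set G := {x | δ / 2 ≤ g x} with hA
  have hAd : δ / 2 ≤ dn A := dn_ge_half h1 hδ.le hg
  let pt : G × (Fin n → G) → (Fin n → Fin (K + 1)) → G := fun p w =>
    p.1 + ∑ i, (w i : ℕ) • p.2 i
  have hQ : δ / 2 ≤ av fun p => dn {w | pt p w ∈ A} := by
    unfold dn
    rw [av_comm]
    refine le_av_of_le fun w => hAd.trans (le_of_eq ?_)
    rw [dn, ← av_hom (AddMonoidHom.mk' (fun p : G × (Fin n → G) => pt p w) (fun p q => by
      simp only [pt, Prod.fst_add, Prod.snd_add, Pi.add_apply, smul_add, Finset.sum_add_distrib]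
      abel)) (fun x => ⟨(x, 0), by simp [pt]⟩)]
    rfl
  have hQ2 := dn_ge_half (fun p => dn_le_one _) (by positivity) hQ
  rw [show δ / 2 / 2 = δ / 4 by ring] at hQ2
  obtain ⟨v, ⟨p0, -, ⟨i0, hi0⟩, -⟩, hv⟩ := exists_dn_ge (V := V)
    (fun v => {p : G × (Fin n → G) | (∃ i, v i = none) ∧
      ∀ a, pt p (fun i => (v i).getD a) ∈ A})
    (fun p hp => by
      obtain ⟨v, hv⟩ := hn (Fin n) (by simp) _ hp
      exact ⟨v, hv⟩) (by positivity) hQ2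
  -- The base point and the common difference of the progression coded by `v` are uniform in `G × G`.
  let φ : G × (Fin n → G) →+ G × G := AddMonoidHom.mk'
    (fun p => (p.1 + ∑ i, ((v i).elim 0 fun a => (a : ℕ)) • p.2 i,
      ∑ i, (if v i = none then 1 else 0 : ℕ) • p.2 i)) (fun p q => by
      ext
      · simp only [Prod.fst_add, Prod.snd_add, Pi.add_apply, smul_add, Finset.sum_add_distrib]
        abel
      · simp only [Prod.snd_add, Pi.add_apply, smul_add, Finset.sum_add_distrib])
  have hφ : Function.Surjective φ := by
    rintro ⟨a, d⟩
    refine ⟨(a, Pi.single i0 d), ?_⟩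
    simp only [φ, AddMonoidHom.mk'_apply, Prod.mk.injEq]
    constructor
    · rw [Finset.sum_eq_zero, add_zero]
      intro i _
      rcases eq_or_ne i i0 with rfl | hi
      · simp [hi0]
      · simp [hi]
    · rw [Finset.sum_eq_single i0]
      · simp [hi0]
      · intro i _ hi
        simp [hi]
      · simp
  have hpt : ∀ p a, pt p (fun i => (v i).getD a) = (φ p).1 + (a : ℕ) • (φ p).2 := by
    intro p a
    simp only [φ, AddMonoidHom.mk'_apply, pt]
    rw [add_assoc, Finset.smul_sum, ← Finset.sum_add_distrib]
    congr 1
    refine Finset.sum_congr rfl fun i _ => ?_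
    rcases v i with _ | b <;> simp
  rw [← av_hom φ hφ]
  refine (mul_le_mul_of_nonneg_left hv (by positivity)).trans ?_
  unfold dn
  rw [← av_mul_left]
  refine av_mono fun p => ?_
  by_cases hp : ∀ a, pt p (fun i => (v i).getD a) ∈ A
  · have h2 : (δ / 2) ^ (K + 1) ≤ ∏ j : Fin (K + 1), g ((φ p).1 + (j : ℕ) • (φ p).2) := by
      have := Finset.prod_le_prod (s := (Finset.univ : Finset (Fin (K + 1))))
        (f := fun _ => δ / 2) (g := fun j : Fin (K + 1) => g ((φ p).1 + (j : ℕ) • (φ p).2))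
        (fun _ _ => by positivity) (fun j _ => by rw [← hpt]; exact hp j)
      rwa [Finset.prod_const, Finset.card_univ, Fintype.card_fin] at this
    refine le_trans ?_ h2
    refine mul_le_of_le_one_right (by positivity) ?_
    exact Set.indicator_le_self' (by simp) p
  · rw [Set.indicator_of_notMem (fun hmem => hp hmem.2.2), mul_zero]
    exact Finset.prod_nonneg fun j _ => h0 _

/-! ### Linear forms conditions on product spaces -/

section lfc
variable {k : ℕ} {X Y : Type}

/-- `f` does not depend on the coordinate `i`. -/
def Free (i : Fin k) (f : (Fin k → Y) → ℝ) : Prop :=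
  ∀ x y, (∀ i', i' ≠ i → x i' = y i') → f x = f y

/-- `f` depends on the coordinate `i` only through its first component. -/
def FstOnly (i : Fin k) (f : (Fin k → X × X) → ℝ) : Prop :=
  ∀ x y, (∀ i', i' ≠ i → x i' = y i') → (x i).1 = (y i).1 → f x = f y

/-- Choose from each pair of coordinates the one prescribed by `ω`. -/
def pick (ω : Fin k → Bool) (p : Fin k → X × X) : Fin k → X :=
  fun i => if ω i then (p i).2 else (p i).1

/-- Change the `i`-th entry of a Boolean vector. -/
def flp (i : Fin k) (ω : Fin k → Bool) : Fin k → Bool := Function.update ω i (!ω i)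

/-- Exchange the two components at the coordinate `i`. -/
def swp (i : Fin k) (p : Fin k → X × X) : Fin k → X × X := Function.update p i (p i).swap

lemma pick_swp (i : Fin k) (ω : Fin k → Bool) (p : Fin k → X × X) :
    pick ω (swp i p) = pick (flp i ω) p := by
  ext i'
  rcases eq_or_ne i' i with rfl | h
  · simp only [pick, swp, flp, Function.update_self]
    cases ω i' <;> simp
  · simp [pick, swp, flp, h]

lemma flp_injective (i : Fin k) : Function.Injective (flp i) := by
  have : Function.Involutive (flp i) := by
    intro ω
    simp [flp]
  exact this.injective

lemma flp_self (i : Fin k) (ω : Fin k → Bool) : flp i ω i = !ω i := by simp [flp]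

lemma flp_ne {i i' : Fin k} (h : i' ≠ i) (ω : Fin k → Bool) : flp i ω i' = ω i' := by
  simp [flp, h]

lemma Free.pick {i : Fin k} {f : (Fin k → X) → ℝ} (hf : Free i f) (ω : Fin k → Bool) :
    Free i fun p => f (pick ω p) := by
  intro x y h
  refine hf _ _ fun i' hi' => ?_
  simp [_root_.pick, h i' hi']

lemma fstOnly_pick {i : Fin k} (f : (Fin k → X) → ℝ) {ω : Fin k → Bool} (hω : ω i = false) :
    FstOnly i fun p => f (pick ω p) := by
  intro x y h h'
  beta_reduce
  congr 1
  ext i'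
  rcases eq_or_ne i' i with rfl | hi
  · simp [pick, hω, h']
  · simp [pick, h i' hi]

lemma Free.fstOnly {i : Fin k} {f : (Fin k → X × X) → ℝ} (hf : Free i f) : FstOnly i f :=
  fun x y h _ => hf x y h

lemma Free.update {i : Fin k} {f : (Fin k → Y) → ℝ} (hf : Free i f) (x : Fin k → Y) (a : Y) :
    f (Function.update x i a) = f x := by
  refine hf _ _ fun i' hi' => ?_
  simp [hi']

lemma Free.comp_swp {i i' : Fin k} {f : (Fin k → X × X) → ℝ} (hf : Free i f) :
    Free i fun p => f (swp i' p) := by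
  intro x y h
  refine hf _ _ fun i1 h1 => ?_
  rcases eq_or_ne i1 i' with rfl | h2
  · simp [swp, h _ h1]
  · simp [swp, h2, h _ h1]

lemma FstOnly.comp_swp {i i' : Fin k} (hii : i ≠ i') {f : (Fin k → X × X) → ℝ}
    (hf : FstOnly i f) : FstOnly i fun p => f (swp i' p) := by
  intro x y h h'
  refine hf _ _ (fun i1 h1 => ?_) ?_
  · rcases eq_or_ne i1 i' with rfl | h2
    · simp [swp, h _ h1]
    · simp [swp, h2, h _ h1]
  · simp [swp, hii, h']

lemma FstOnly.mul {i : Fin k} {f g : (Fin k → X × X) → ℝ} (hf : FstOnly i f) (hg : FstOnly i g) :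
    FstOnly i fun p => f p * g p := by
  intro x y h h'
  beta_reduce
  rw [hf x y h h', hg x y h h']

lemma Free.mul {i : Fin k} {f g : (Fin k → Y) → ℝ} (hf : Free i f) (hg : Free i g) :
    Free i fun p => f p * g p := by
  intro x y h
  beta_reduce
  rw [hf x y h, hg x y h]

lemma Free.prod {ι : Type*} {i : Fin k} {s : Finset ι} {f : ι → (Fin k → Y) → ℝ}
    (hf : ∀ a ∈ s, Free i (f a)) : Free i fun p => ∏ a ∈ s, f a p := by
  intro x y h
  exact Finset.prod_congr rfl fun a ha => hf a ha x y h

lemma FstOnly.prod {ι : Type*} {i : Fin k} {s : Finset ι} {f : ι → (Fin k → X × X) → ℝ}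
    (hf : ∀ a ∈ s, FstOnly i (f a)) : FstOnly i fun p => ∏ a ∈ s, f a p := by
  intro x y h h'
  exact Finset.prod_congr rfl fun a ha => hf a ha x y h h'

/-- Averaging may include a fresh choice of the coordinate `i`. -/
lemma av_update [Finite Y] [Nonempty Y] (i : Fin k) (F : (Fin k → Y) → ℝ) :
    av F = av fun p => av fun a => F (Function.update p i a) := by
  have h1 : av F = av fun q : (Fin k → Y) × Y => F q.1 := by
    rw [av_prod]
    congr 1
    ext p
    exact (av_const _).symm
  let σ : (Fin k → Y) × Y → (Fin k → Y) × Y := fun q => (Function.update q.1 i q.2, q.1 i)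
  have hσ : Function.Involutive σ := by
    rintro ⟨p, a⟩
    simp [σ]
  rw [h1, ← av_equiv hσ.toPerm, av_prod]
  rfl

lemma av_eval [Finite Y] [Nonempty Y] (i : Fin k) (h : Y → ℝ) :
    av (fun z : Fin k → Y => h (z i)) = av h := by
  rw [av_update i]
  simp only [Function.update_self]
  exact av_const _

lemma av_pick [Finite X] [Nonempty X] (F : (Fin k → X) → ℝ) :
    av (fun p : Fin k → X × X => F (pick (fun _ => false) p)) = av F := by
  rw [← av_equiv (Equiv.arrowProdEquivProdArrow (Fin k) (fun _ => X) (fun _ => X)).symm, av_prod]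
  congr 1
  ext x
  rw [← av_const (X := Fin k → X) (F x)]
  rfl

lemma av_pick₂ [Finite X] [Nonempty X] (j : Fin k) (F : (Fin k → X) → (Fin k → X) → ℝ) :
    av (fun p : Fin k → X × X => F (pick (fun _ => false) p) (pick (flp j fun _ => false) p)) =
      av fun x => av fun a => F x (Function.update x j a) := by
  rw [← av_equiv (Equiv.arrowProdEquivProdArrow (Fin k) (fun _ => X) (fun _ => X)).symm, av_prod]
  congr 1
  ext x
  rw [← av_eval j fun a => F x (Function.update x j a)]
  congr 1
  ext z
  congr 1
  ext i
  rcases eq_or_ne i j with rfl | h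
  · simp [pick, flp, Equiv.arrowProdEquivProdArrow]
  · simp [pick, flp, h, Equiv.arrowProdEquivProdArrow]

/-- The Cauchy–Schwarz step: the factor `B`, which is free of the coordinate `i`, is replaced by
its majorant at the cost of doubling that coordinate in the remaining factor. -/
lemma cs_step [Finite X] [Nonempty X] (i : Fin k) {B W R : (Fin k → X × X) → ℝ} (hB : Free i B)
    (hW : Free i W) (hBW : ∀ p, |B p| ≤ W p) (hR : FstOnly i R) :
    (av fun p => B p * R p) ^ 2 ≤ av W * av fun p => W p * (R p * R (swp i p)) := by
  have hW0 : ∀ p, 0 ≤ W p := fun p => (abs_nonneg _).trans (hBW p)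
  let Rb : (Fin k → X × X) → ℝ := fun p => av fun a => R (Function.update p i a)
  have h1 : (av fun p => B p * R p) = av fun p => B p * Rb p := by
    rw [av_update i]
    congr 1
    ext p
    rw [← av_mul_left]
    simp only [hB.update]
  have h2 : (av fun p => W p * (R p * R (swp i p))) = av fun p => W p * Rb p ^ 2 := by
    rw [av_update i]
    congr 1
    ext p
    simp only [hW.update]
    rw [av_mul_left, av_prod]
    congr 1
    have e1 : ∀ a b c : X, R (Function.update p i (a, b)) = R (Function.update p i (a, c)) := by
      intro a b c
      refine hR _ _ (fun i' hi' => by simp [hi']) (by simp)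
    have e2 : Rb p = av fun a : X => R (Function.update p i (a, a)) := by
      simp only [Rb]
      rw [av_prod]
      congr 1
      ext a
      rw [← av_const (X := X) (R (Function.update p i (a, a)))]
      congr 1
      ext b
      exact e1 _ _ _
    rw [e2, sq, ← av_mul_right]
    congr 1
    ext a
    rw [← av_mul_left]
    congr 1
    ext b
    rw [e1 a b a, ← e1 b a b]
    simp [swp]
  have h3 : |av fun p => B p * Rb p| ≤ av fun p => W p * |Rb p| := by
    refine (abs_av_le _).trans (av_mono fun p => ?_)
    rw [abs_mul]
    exact mul_le_mul_of_nonneg_right (hBW p) (abs_nonneg _)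
  rw [h1, h2, ← sq_abs]
  refine (pow_le_pow_left₀ (abs_nonneg _) h3 2).trans ?_
  have h4 := av_sq_le (fun p => √(W p)) (fun p => √(W p) * |Rb p|)
  have h5 : ∀ p, √(W p) * (√(W p) * |Rb p|) = W p * |Rb p| := fun p => by
    rw [← mul_assoc, Real.mul_self_sqrt (hW0 p)]
  have h6 : ∀ p, (√(W p) * |Rb p|) ^ 2 = W p * Rb p ^ 2 := fun p => by
    rw [mul_pow, Real.sq_sqrt (hW0 p), sq_abs]
  have h7 : ∀ p, √(W p) ^ 2 = W p := fun p => Real.sq_sqrt (hW0 p)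
  simpa only [h5, h6, h7] using h4

/-- The linear forms condition for weights `ν i` on a product space. The function `ν i` is
evaluated at points whose coordinates are chosen from two independent copies; as `ν i` will not
depend on the coordinate `i`, the choice at `i` is normalised. -/
def LFC [Finite X] (ν : Fin k → (Fin k → X) → ℝ) (η : ℝ) : Prop :=
  ∀ M : Finset (Fin k × (Fin k → Bool)), (∀ q ∈ M, q.2 q.1 = false) →
    |av (fun p : Fin k → X × X => ∏ q ∈ M, ν q.1 (pick q.2 p)) - 1| ≤ η

lemma LFC.base [Finite X] {ν : Fin k → (Fin k → X) → ℝ} {η : ℝ} (h : LFC ν η) (j : Fin k)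
    {Ω : Finset (Fin k → Bool)} (hΩne : Ω.Nonempty) (hΩ : ∀ ω ∈ Ω, ω j = false)
    {M : Finset (Fin k × (Fin k → Bool))} (hM : ∀ q ∈ M, q.1 ≠ j ∧ q.2 q.1 = false) :
    |av fun p : Fin k → X × X => (∏ ω ∈ Ω, (ν j (pick ω p) - 1)) * ∏ q ∈ M, ν q.1 (pick q.2 p)|
      ≤ 2 ^ (2 ^ k) * η := by
  classical
  have hη : 0 ≤ η := (abs_nonneg _).trans (h ∅ (by simp))
  have e1 : (av fun p : Fin k → X × X => (∏ ω ∈ Ω, (ν j (pick ω p) - 1)) *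
      ∏ q ∈ M, ν q.1 (pick q.2 p)) = ∑ t ∈ Ω.powerset, (∏ _ω ∈ Ω \ t, (-1 : ℝ)) *
        av fun p : Fin k → X × X => ∏ q ∈ t.image (fun ω => (j, ω)) ∪ M, ν q.1 (pick q.2 p) := by
    simp_rw [← av_mul_left]
    rw [← av_sum]
    congr 1
    ext p
    simp only [sub_eq_add_neg]
    rw [Finset.prod_add, Finset.sum_mul]
    refine Finset.sum_congr rfl fun t ht => ?_
    rw [Finset.prod_union, Finset.prod_image (by simp)]
    · ring
    · rw [Finset.disjoint_left]
      intro q hq hqM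
      obtain ⟨ω, -, rfl⟩ := Finset.mem_image.mp hq
      exact (hM _ hqM).1 rfl
  have e0 : ∑ t ∈ Ω.powerset, (∏ _ω ∈ Ω \ t, (-1 : ℝ)) = 0 := by
    have := Finset.prod_add (fun _ => (1 : ℝ)) (fun _ => (-1 : ℝ)) Ω
    simp only [Finset.prod_const_one, one_mul] at this
    rw [← this]
    obtain ⟨ω, hω⟩ := hΩne
    exact Finset.prod_eq_zero hω (by norm_num)
  have e2 : ∀ c : (Finset (Fin k → Bool)) → ℝ, ∑ t ∈ Ω.powerset, (∏ _ω ∈ Ω \ t, (-1 : ℝ)) * c t =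
      ∑ t ∈ Ω.powerset, (∏ _ω ∈ Ω \ t, (-1 : ℝ)) * (c t - 1) := by
    intro c
    simp only [mul_sub, Finset.sum_sub_distrib, mul_one, e0, sub_zero]
  rw [e1, e2]
  calc _ ≤ ∑ t ∈ Ω.powerset, η := by
        refine (Finset.abs_sum_le_sum_abs _ _).trans (Finset.sum_le_sum fun t ht => ?_)
        rw [abs_mul, Finset.abs_prod]
        simp only [abs_neg, abs_one, Finset.prod_const_one, one_mul]
        refine h _ fun q hq => ?_
        rcases Finset.mem_union.mp hq with hq | hq
        · obtain ⟨ω, hω, rfl⟩ := Finset.mem_image.mp hq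
          exact hΩ ω (Finset.mem_powerset.mp ht hω)
        · exact (hM q hq).2
    _ = 2 ^ Ω.card * η := by simp
    _ ≤ 2 ^ (2 ^ k) * η := by
        refine mul_le_mul_of_nonneg_right (pow_le_pow_right₀ (by norm_num) ?_) hη
        simpa using Finset.card_le_univ Ω

end lfc

/-! ### Repeated use of the Cauchy–Schwarz inequality -/

section stage
variable {k : ℕ} {X : Type}

lemma prod_flp {β : Type*} [DecidableEq β] {i : Fin k} {s : Finset β} {fl : β → β}
    {f : β → (Fin k → X × X) → ℝ} (hinj : Function.Injective fl) (hfl : ∀ b ∈ s, fl b ∉ s)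
    (hf : ∀ b p, f b (swp i p) = f (fl b) p) (p : Fin k → X × X) :
    (∏ b ∈ s, f b p) * ∏ b ∈ s, f b (swp i p) = ∏ b ∈ s ∪ s.image fl, f b p := by
  rw [Finset.prod_union, Finset.prod_image fun x _ y _ h => hinj h]
  · simp only [hf]
  · rw [Finset.disjoint_left]
    intro b hb hbi
    obtain ⟨b', hb', rfl⟩ := Finset.mem_image.mp hbi
    exact hfl b' hb' hb

variable [Finite X] [Nonempty X]

/-- Repeated Cauchy–Schwarz: factors `B i` free of the coordinate `i` (for `i` in `l`) and
dominated by products of values of the weights `ν i` do not correlate with `ν j - 1`. The sets `Ω`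
and `M` record the copies of `ν j - 1` and of the weights created so far, and `W i` those
dominating `B i`. -/
lemma LFC.stage {ν : Fin k → (Fin k → X) → ℝ} {η : ℝ} (h : LFC ν η) (hη1 : η ≤ 1)
    (hfree : ∀ i, Free i (ν i)) (j : Fin k) (l : List (Fin k)) :
    ∀ (Ω : Finset (Fin k → Bool)) (M : Finset (Fin k × (Fin k → Bool)))
      (W : Fin k → Finset (Fin k → Bool)) (B : Fin k → (Fin k → X × X) → ℝ),
      l.Nodup → j ∉ l → Ω.Nonempty → (∀ ω ∈ Ω, ω j = false ∧ ∀ i ∈ l, ω i = false) →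
      (∀ q ∈ M, q.1 ≠ j ∧ q.1 ∉ l ∧ q.2 q.1 = false ∧ ∀ i ∈ l, q.2 i = false) →
      (∀ i ∈ l, ∀ ω ∈ W i, ∀ i' ∈ l, ω i' = false) →
      (∀ i ∈ l, Free i (B i)) → (∀ i ∈ l, ∀ i' ∈ l, FstOnly i' (B i)) →
      (∀ i ∈ l, ∀ p, |B i p| ≤ ∏ ω ∈ W i, ν i (pick ω p)) →
      |av fun p => (∏ ω ∈ Ω, (ν j (pick ω p) - 1)) * (∏ q ∈ M, ν q.1 (pick q.2 p)) *
          (l.map fun i => B i p).prod| ^ (2 ^ l.length) ≤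
        2 ^ (2 ^ l.length) * (2 ^ (2 ^ k) * η) := by
  classical
  have hη : 0 ≤ η := (abs_nonneg _).trans (h ∅ (by simp))
  induction l with
  | nil =>
    intro Ω M W B _ _ hΩne hΩ hM _ _ _ _
    simp only [List.map_nil, List.prod_nil, mul_one, List.length_nil, pow_zero, pow_one]
    have := h.base j hΩne (fun ω hω => (hΩ ω hω).1) (M := M)
      (fun q hq => ⟨(hM q hq).1, (hM q hq).2.2.1⟩)
    have h0 : 0 ≤ (2 : ℝ) ^ (2 ^ k) * η := by positivity
    linarith
  | cons i l ih =>
    intro Ω M W B hnd hj hΩne hΩ hM hW hBf hBfst hBW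
    rw [List.nodup_cons] at hnd
    simp only [List.mem_cons, not_or] at hj
    have hi : i ∈ i :: l := List.mem_cons_self
    have hl : ∀ {i'}, i' ∈ l → i' ∈ i :: l := fun h => List.mem_cons_of_mem _ h
    have hne : ∀ {i'}, i' ∈ l → i' ≠ i := fun h h' => hnd.1 (h' ▸ h)
    let fl2 : Fin k × (Fin k → Bool) → Fin k × (Fin k → Bool) := fun q => (q.1, flp i q.2)
    have hfl2 : Function.Injective fl2 := by
      rintro ⟨a, b⟩ ⟨c, d⟩ hh
      simp only [fl2, Prod.mk.injEq] at hh
      rw [hh.1, flp_injective i hh.2]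
    let V : (Fin k → X × X) → ℝ := fun p => ∏ ω ∈ Ω, (ν j (pick ω p) - 1)
    let C : (Fin k → X × X) → ℝ := fun p => ∏ q ∈ M, ν q.1 (pick q.2 p)
    let L : (Fin k → X × X) → ℝ := fun p => (l.map fun i' => B i' p).prod
    let Wi : (Fin k → X × X) → ℝ := fun p => ∏ ω ∈ W i, ν i (pick ω p)
    have hflΩ : ∀ ω ∈ Ω, flp i ω ∉ Ω := by
      intro ω hω hω'
      have h1 := (hΩ _ hω').2 i hi
      rw [flp_self, (hΩ _ hω).2 i hi] at h1
      simp at h1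
    have hflM : ∀ q ∈ M, fl2 q ∉ M := by
      intro q hq hq'
      have h1 := (hM _ hq').2.2.2 i hi
      simp only [fl2] at h1
      rw [flp_self, (hM _ hq).2.2.2 i hi] at h1
      simp at h1
    have hflW : ∀ i' ∈ l, ∀ ω ∈ W i', flp i ω ∉ W i' := by
      intro i' hi' ω hω hω'
      have h1 := hW _ (hl hi') _ hω' i hi
      rw [flp_self, hW _ (hl hi') _ hω i hi] at h1
      simp at h1
    have hVf : FstOnly i V := FstOnly.prod fun ω hω =>
      fstOnly_pick (fun x => ν j x - 1) ((hΩ ω hω).2 i hi)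
    have hCf : FstOnly i C := FstOnly.prod fun q hq =>
      fstOnly_pick (ν q.1) ((hM q hq).2.2.2 i hi)
    have hLf : FstOnly i L := by
      intro x y hxy hxy'
      simp only [L]
      congr 1
      exact List.map_congr_left fun i' hi' => hBfst i' (hl hi') i hi x y hxy hxy'
    have hWf : Free i Wi := Free.prod fun ω _ => (hfree i).pick ω
    have hcs := cs_step i (hBf i hi) hWf (hBW i hi) ((hVf.mul hCf).mul hLf)
    have hWav : av Wi ≤ 2 := by
      have h1 := h ((W i).image fun ω => (i, ω)) (fun q hq => by
        obtain ⟨ω, hω, rfl⟩ := Finset.mem_image.mp hq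
        exact hW i hi ω hω i hi)
      simp only [Finset.prod_image (s := W i) (g := fun ω => (i, ω)) (by simp)] at h1
      have h2 := (abs_le.mp h1).2
      simp only [Wi]
      linarith
    have hnew : ∀ p, Wi p * (V p * C p * L p * (V (swp i p) * C (swp i p) * L (swp i p))) =
        (∏ ω ∈ Ω ∪ Ω.image (flp i), (ν j (pick ω p) - 1)) *
        (∏ q ∈ (W i).image (fun ω => (i, ω)) ∪ (M ∪ M.image fl2), ν q.1 (pick q.2 p)) *
        (l.map fun i' => B i' p * B i' (swp i p)).prod := by
      intro p
      have a1 := prod_flp (i := i) (f := fun ω (p : Fin k → X × X) => ν j (pick ω p) - 1)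
        (flp_injective i) hflΩ (fun ω p => by rw [pick_swp]) p
      have a2 := prod_flp (i := i) (f := fun q (p : Fin k → X × X) => ν q.1 (pick q.2 p))
        hfl2 hflM (fun q p => by rw [pick_swp]) p
      have hdis : Disjoint ((W i).image fun ω => (i, ω)) (M ∪ M.image fl2) := by
        rw [Finset.disjoint_left]
        intro q hq hq'
        obtain ⟨ω, -, rfl⟩ := Finset.mem_image.mp hq
        rcases Finset.mem_union.mp hq' with hq₁ | hq₁
        · exact (hM _ hq₁).2.1 hi
        · obtain ⟨q₂, hq₂, he⟩ := Finset.mem_image.mp hq₁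
          have : q₂.1 = i := congrArg Prod.fst he
          exact (hM _ hq₂).2.1 (this ▸ hi)
      rw [← a1, Finset.prod_union hdis, ← a2,
        Finset.prod_image fun x _ y _ hxy => (Prod.mk.inj hxy).2, List.prod_map_mul]
      simp only [Wi, V, C, L]
      ring
    have hrec := ih (Ω ∪ Ω.image (flp i)) ((W i).image (fun ω => (i, ω)) ∪ (M ∪ M.image fl2))
      (fun i' => W i' ∪ (W i').image (flp i)) (fun i' p => B i' p * B i' (swp i p)) hnd.2 hj.2
      (hΩne.mono Finset.subset_union_left) ?_ ?_ ?_ ?_ ?_ ?_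
    rotate_left
    · intro ω hω
      rcases Finset.mem_union.mp hω with hω₁ | hω₁
      · exact ⟨(hΩ ω hω₁).1, fun i' hi' => (hΩ ω hω₁).2 i' (hl hi')⟩
      · obtain ⟨ω₂, hω₂, rfl⟩ := Finset.mem_image.mp hω₁
        refine ⟨?_, fun i' hi' => ?_⟩
        · rw [flp_ne hj.1]
          exact (hΩ ω₂ hω₂).1
        · rw [flp_ne (hne hi')]
          exact (hΩ ω₂ hω₂).2 i' (hl hi')
    · intro q hq
      rcases Finset.mem_union.mp hq with hq₁ | hq₁
      · obtain ⟨ω, hω, rfl⟩ := Finset.mem_image.mp hq₁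
        exact ⟨fun hh => hj.1 hh.symm, hnd.1, hW i hi ω hω i hi,
          fun i' hi' => hW i hi ω hω i' (hl hi')⟩
      · rcases Finset.mem_union.mp hq₁ with hq₂ | hq₂
        · exact ⟨(hM q hq₂).1, fun hh => (hM q hq₂).2.1 (hl hh), (hM q hq₂).2.2.1,
            fun i' hi' => (hM q hq₂).2.2.2 i' (hl hi')⟩
        · obtain ⟨r, hr, rfl⟩ := Finset.mem_image.mp hq₂
          have hqi : r.1 ≠ i := fun hh => (hM r hr).2.1 (hh ▸ hi)
          refine ⟨(hM r hr).1, fun hh => (hM r hr).2.1 (hl hh), ?_, fun i' hi' => ?_⟩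
          · simp only [fl2]
            rw [flp_ne hqi]
            exact (hM r hr).2.2.1
          · simp only [fl2]
            rw [flp_ne (hne hi')]
            exact (hM r hr).2.2.2 i' (hl hi')
    · intro i1 hi1 ω hω i' hi'
      rcases Finset.mem_union.mp hω with hω₁ | hω₁
      · exact hW i1 (hl hi1) ω hω₁ i' (hl hi')
      · obtain ⟨ω₂, hω₂, rfl⟩ := Finset.mem_image.mp hω₁
        rw [flp_ne (hne hi')]
        exact hW i1 (hl hi1) ω₂ hω₂ i' (hl hi')
    · intro i' hi'
      exact (hBf i' (hl hi')).mul (hBf i' (hl hi')).comp_swp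
    · intro i1 hi1 i' hi'
      exact (hBfst i1 (hl hi1) i' (hl hi')).mul
        ((hBfst i1 (hl hi1) i' (hl hi')).comp_swp (hne hi'))
    · intro i' hi' p
      have a3 := prod_flp (i := i) (f := fun ω (p : Fin k → X × X) => ν i' (pick ω p))
        (flp_injective i) (hflW i' hi') (fun ω p => by rw [pick_swp]) p
      rw [← a3, abs_mul]
      exact mul_le_mul (hBW i' (hl hi') p) (hBW i' (hl hi') (swp i p)) (abs_nonneg _)
        ((abs_nonneg _).trans (hBW i' (hl hi') p))
    simp only [hnew] at hcs
    set Z := av fun p : Fin k → X × X => (∏ ω ∈ Ω ∪ Ω.image (flp i), (ν j (pick ω p) - 1)) *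
        (∏ q ∈ (W i).image (fun ω => (i, ω)) ∪ (M ∪ M.image fl2), ν q.1 (pick q.2 p)) *
        (l.map fun i' => B i' p * B i' (swp i p)).prod with hZ
    have hWi0 : 0 ≤ av Wi := av_nonneg fun p => (abs_nonneg _).trans (hBW i hi p)
    have hs : (av fun p => (∏ ω ∈ Ω, (ν j (pick ω p) - 1)) * (∏ q ∈ M, ν q.1 (pick q.2 p)) *
          ((i :: l).map fun i => B i p).prod) ^ 2 ≤ 2 * |Z| := by
      refine le_trans (le_of_eq ?_) (hcs.trans ?_)
      · congr 2
        ext p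
        simp only [List.map_cons, List.prod_cons, V, C, L]
        ring
      · calc _ ≤ av Wi * |Z| := mul_le_mul_of_nonneg_left (le_abs_self _) hWi0
          _ ≤ _ := mul_le_mul_of_nonneg_right hWav (abs_nonneg _)
    rw [List.length_cons, pow_succ 2, mul_comm (2 ^ l.length), pow_mul, sq_abs]
    calc _ ≤ (2 * |Z|) ^ (2 ^ l.length) := pow_le_pow_left₀ (sq_nonneg _) hs _
      _ = 2 ^ (2 ^ l.length) * |Z| ^ (2 ^ l.length) := mul_pow _ _ _
      _ ≤ 2 ^ (2 ^ l.length) * (2 ^ (2 ^ l.length) * (2 ^ (2 ^ k) * η)) :=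
        mul_le_mul_of_nonneg_left hrec (by positivity)
      _ = _ := by
        rw [pow_mul, show ((2 : ℝ) ^ 2) = 2 * 2 by norm_num, mul_pow]
        ring

end stage

/-! ### Correlation with the weights and cut norms -/

section decor
variable {k : ℕ} {X : Type} [Finite X]

lemma LFC.mono {ν : Fin k → (Fin k → X) → ℝ} {η η' : ℝ} (h : LFC ν η) (hη : η ≤ η') : LFC ν η' :=
  fun M hM => (h M hM).trans hη

lemma LFC.nonneg {ν : Fin k → (Fin k → X) → ℝ} {η : ℝ} (h : LFC ν η) : 0 ≤ η :=
  (abs_nonneg _).trans (h ∅ (by simp))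

lemma LFC.update_one {ν : Fin k → (Fin k → X) → ℝ} {η : ℝ} (h : LFC ν η) (j : Fin k) :
    LFC (Function.update ν j fun _ => 1) η := by
  classical
  intro M hM
  convert h (M.filter fun q => q.1 ≠ j) (fun q hq => hM q (Finset.mem_filter.mp hq).1) using 4
  ext p
  rw [Finset.prod_filter]
  refine Finset.prod_congr rfl fun q _ => ?_
  by_cases hq : q.1 = j
  · subst hq
    simp
  · simp [hq]

variable [Nonempty X]

lemma LFC.av_le {ν : Fin k → (Fin k → X) → ℝ} {η : ℝ} (h : LFC ν η) (j : Fin k) :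
    av (ν j) ≤ 1 + η := by
  have h1 := h {(j, fun _ => false)} (by simp)
  simp only [Finset.prod_singleton] at h1
  rw [av_pick (ν j)] at h1
  linarith [(abs_le.mp h1).2]

/-- One application of the Cauchy–Schwarz inequality for each variable other than the `j`-th one
removes the functions `b i` and `b' i` and leaves an average of products of the weights, in which
the expansion of the factors `ν j - 1` cancels up to `η`. -/
lemma LFC.decor_aux {ν : Fin k → (Fin k → X) → ℝ} {η : ℝ} (h : LFC ν η) (hη1 : η ≤ 1)
    (hfree : ∀ i, Free i (ν i)) (j : Fin k) (s s' : Bool) {b b' : Fin k → (Fin k → X) → ℝ}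
    (hb : ∀ i, Free i (b i)) (hb' : ∀ i, Free i (b' i))
    (hbν : ∀ i x, |b i x| ≤ if s then ν i x else 1)
    (hbν' : ∀ i x, |b' i x| ≤ if s' then ν i x else 1) :
    |av fun x => av fun a => (ν j x - 1) * (∏ i ∈ univ.erase j, b i x) *
        ∏ i ∈ univ.erase j, b' i (Function.update x j a)| ^ (2 ^ (k - 1)) ≤
      2 ^ (2 ^ (k - 1)) * (2 ^ (2 ^ k) * η) := by
  classical
  rw [← av_pick₂ j fun x y => (ν j x - 1) * (∏ i ∈ univ.erase j, b i x) *
        ∏ i ∈ univ.erase j, b' i y]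
  let ω₀ : Fin k → Bool := fun _ => false
  have hne : ω₀ ≠ flp j ω₀ := fun hh => by
    have := congrFun hh j
    rw [flp_self] at this
    simp [ω₀] at this
  have hlen : (univ.erase j).toList.length = k - 1 := by
    rw [Finset.length_toList, Finset.card_erase_of_mem (mem_univ j)]
    simp
  have hmem : ∀ {i}, i ∈ (univ.erase j).toList → i ≠ j := fun hi =>
    Finset.ne_of_mem_erase (Finset.mem_toList.mp hi)
  have h0 : ∀ {i}, i ∈ (univ.erase j).toList → flp j ω₀ i = false := fun hi => by
    rw [flp_ne (hmem hi)]
  have key := h.stage hη1 hfree j (univ.erase j).toList {ω₀} ∅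
    (fun _ => (if s then {ω₀} else ∅) ∪ (if s' then {flp j ω₀} else ∅))
    (fun i p => b i (pick ω₀ p) * b' i (pick (flp j ω₀) p)) (Finset.nodup_toList _)
    (by simp) (by simp) ?_ (by simp) ?_ ?_ ?_ ?_
  · rw [hlen] at key
    convert key using 5
    rename_i p
    simp only [Finset.prod_singleton, Finset.prod_empty, mul_one]
    rw [Finset.prod_map_toList, Finset.prod_mul_distrib, mul_assoc]
  · simp [ω₀]
  · intro i _ ω hω i' hi'
    rcases Finset.mem_union.mp hω with h1 | h1
    · cases s <;> simp at h1
      rw [h1]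
    · cases s' <;> simp at h1
      rw [h1, h0 hi']
  · intro i _
    exact ((hb i).pick _).mul ((hb' i).pick _)
  · intro i _ i' hi'
    exact (fstOnly_pick _ rfl).mul (fstOnly_pick _ (h0 hi'))
  · intro i _ p
    rw [Finset.prod_union, abs_mul]
    · refine mul_le_mul ((hbν i _).trans ?_) ((hbν' i _).trans ?_) (abs_nonneg _) ?_
      · cases s <;> simp
      · cases s' <;> simp
      · refine le_trans ((abs_nonneg _).trans (hbν i (pick ω₀ p))) ?_
        cases s <;> simp
    · cases s <;> cases s' <;> simp [hne]

/-- The deviation `ν j - 1` is uncorrelated with products of two copies of functions dominated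
by the remaining weights. -/
lemma LFC.decor (k : ℕ) {ε : ℝ} (hε : 0 < ε) : ∃ η : ℝ, 0 < η ∧ ∀ (X : Type) [Finite X] [Nonempty X]
    (ν : Fin k → (Fin k → X) → ℝ), LFC ν η → (∀ i, Free i (ν i)) → ∀ (j : Fin k) (s s' : Bool)
    (b b' : Fin k → (Fin k → X) → ℝ), (∀ i, Free i (b i)) → (∀ i, Free i (b' i)) →
    (∀ i x, |b i x| ≤ if s then ν i x else 1) → (∀ i x, |b' i x| ≤ if s' then ν i x else 1) →
    |av fun x => av fun a => (ν j x - 1) * (∏ i ∈ univ.erase j, b i x) *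
        ∏ i ∈ univ.erase j, b' i (Function.update x j a)| ≤ ε := by
  set C : ℝ := 2 ^ (2 ^ (k - 1)) * 2 ^ (2 ^ k) with hC
  have hC0 : 0 < C := by positivity
  refine ⟨min 1 (ε ^ (2 ^ (k - 1)) / C), by positivity, ?_⟩
  intro X _ _ ν h hfree j s s' b b' hb hb' h1 h2
  have := h.decor_aux (min_le_left _ _) hfree j s s' hb hb' h1 h2
  refine le_of_pow_le_pow_left₀ (n := 2 ^ (k - 1)) (by positivity) hε.le (this.trans ?_)
  rw [← mul_assoc, ← hC]
  calc C * _ ≤ C * (ε ^ (2 ^ (k - 1)) / C) :=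
        mul_le_mul_of_nonneg_left (min_le_right _ _) hC0.le
    _ = _ := by field_simp

/-- The average over the coordinate `j`. -/
noncomputable def prj (j : Fin k) (F : (Fin k → X) → ℝ) (x : Fin k → X) : ℝ :=
  av fun a => F (Function.update x j a)

lemma free_prj (j : Fin k) (F : (Fin k → X) → ℝ) : Free j (prj j F) := by
  intro x y h
  unfold prj
  congr 1
  ext a
  congr 1
  ext i
  rcases eq_or_ne i j with rfl | hi
  · simp
  · simp [hi, h i hi]

lemma av_mul_prj {j : Fin k} {f : (Fin k → X) → ℝ} (hf : Free j f) (F : (Fin k → X) → ℝ) :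
    av (fun x => f x * F x) = av fun x => f x * prj j F x := by
  rw [av_update j]
  congr 1
  ext x
  simp only [hf.update, prj, av_mul_left]

lemma av_prj (j : Fin k) (F : (Fin k → X) → ℝ) : av (prj j F) = av F := (av_update j F).symm

/-- `h` has cut norm at most `ε` relative to functions that do not depend on one of the coordinates
other than `j`. -/
def CutSmall (j : Fin k) (h : (Fin k → X) → ℝ) (ε : ℝ) : Prop :=
  ∀ u : Fin k → (Fin k → X) → ℝ, (∀ i, Free i (u i)) → (∀ i x, |u i x| ≤ 1) →
    |av fun x => h x * ∏ i ∈ univ.erase j, u i x| ≤ ε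

lemma CutSmall.mono {j : Fin k} {h : (Fin k → X) → ℝ} {ε ε' : ℝ} (hh : CutSmall j h ε)
    (hε : ε ≤ ε') : CutSmall j h ε' := fun u h1 h2 => (hh u h1 h2).trans hε

/-- The counting lemma for bounded functions: the factors are exchanged one at a time. -/
lemma counting_dense {ε : ℝ} {g g' : Fin k → (Fin k → X) → ℝ}
    (hg : ∀ i, Free i (g i)) (hg' : ∀ i, Free i (g' i)) (hg1 : ∀ i x, |g i x| ≤ 1)
    (hg1' : ∀ i x, |g' i x| ≤ 1) (hcut : ∀ j, CutSmall j (fun x => g j x - g' j x) ε) :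
    |av (fun x => ∏ i, g i x) - av fun x => ∏ i, g' i x| ≤ k * ε := by
  classical
  have key : ∀ s : Finset (Fin k), |av (fun x => ∏ i, g i x) -
      av fun x => ∏ i, (if i ∈ s then g' i else g i) x| ≤ s.card * ε := by
    intro s
    induction s using Finset.induction_on with
    | empty => simp
    | insert j s hj ih =>
      have e : av (fun x => ∏ i, (if i ∈ s then g' i else g i) x) -
          av (fun x => ∏ i, (if i ∈ insert j s then g' i else g i) x) =
          av fun x => (g j x - g' j x) * ∏ i ∈ univ.erase j, (if i ∈ s then g' i else g i) x := by
        rw [← av_sub]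
        congr 1
        ext x
        rw [← Finset.mul_prod_erase univ _ (mem_univ j),
          ← Finset.mul_prod_erase univ (fun i => (if i ∈ insert j s then g' i else g i) x)
            (mem_univ j), sub_mul]
        simp only [hj, if_false, Finset.mem_insert_self, if_true]
        congr 2
        refine Finset.prod_congr rfl fun i hi => ?_
        simp [Finset.ne_of_mem_erase hi]
      have h1 := hcut j (fun i => if i ∈ s then g' i else g i)
        (fun i => by split_ifs; exacts [hg' i, hg i]) (fun i x => by split_ifs; exacts [hg1' i x, hg1 i x])
      rw [← e] at h1
      rw [Finset.card_insert_of_notMem hj]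
      push_cast
      have := abs_sub_le (av (fun x => ∏ i, g i x)) (av fun x => ∏ i, (if i ∈ s then g' i else g i) x)
        (av (fun x => ∏ i, (if i ∈ insert j s then g' i else g i) x))
      linarith
  simpa using key univ

end decor

/-! ### The relative counting lemma -/

section counting
variable {k : ℕ} {X : Type} [Finite X] [Nonempty X]

lemma av_prj_mul_prj (j : Fin k) (f F G : (Fin k → X) → ℝ) (hf : Free j f) :
    (av fun x => f x * (prj j F x * prj j G x)) =
      av fun x => av fun a => f x * F x * G (Function.update x j a) := by
  have h1 : ∀ x, f x * (prj j F x * prj j G x) = (f x * prj j G x) * prj j F x := fun x => by ring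
  simp only [h1]
  rw [← av_mul_prj (hf.mul (free_prj j G)) F]
  congr 1
  ext x
  rw [av_mul_left]
  simp only [prj]
  ring

/-- The average of `∏ i ≠ j, ν i` over the coordinate `j` is close to `1` in mean square. -/
lemma LFC.av_sq_prj {ν : Fin k → (Fin k → X) → ℝ} {η : ℝ} (h : LFC ν η) (j : Fin k) :
    (av fun x => (prj j (fun y => ∏ i ∈ univ.erase j, ν i y) x - 1) ^ 2) ≤ 3 * η := by
  classical
  set N : (Fin k → X) → ℝ := fun y => ∏ i ∈ univ.erase j, ν i y with hN
  let ω₀ : Fin k → Bool := fun _ => false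
  have hne : ω₀ ≠ flp j ω₀ := fun hh => by
    have := congrFun hh j
    rw [flp_self] at this
    simp [ω₀] at this
  have e : (av fun x => (prj j N x - 1) ^ 2) =
      (av fun x => prj j N x * prj j N x) - 2 * av (prj j N) + 1 := by
    have h1 : ∀ x, (prj j N x - 1) ^ 2 = prj j N x * prj j N x - 2 * prj j N x + 1 :=
      fun x => by ring
    simp only [h1]
    rw [av_add, av_sub, av_mul_left, av_const]
  have h1 := h ((univ.erase j).image fun i => (i, ω₀)) (by
    intro q hq
    obtain ⟨i, hi, rfl⟩ := Finset.mem_image.mp hq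
    rfl)
  simp only [Finset.prod_image (s := univ.erase j) (g := fun i => (i, ω₀))
    fun x _ y _ hxy => (Prod.mk.inj hxy).1] at h1
  rw [av_pick N, ← av_prj j N] at h1
  have h2 := h (((univ.erase j).image fun i => (i, ω₀)) ∪
    ((univ.erase j).image fun i => (i, flp j ω₀))) (by
    intro q hq
    rcases Finset.mem_union.mp hq with hq₁ | hq₁
    · obtain ⟨i, hi, rfl⟩ := Finset.mem_image.mp hq₁
      rfl
    · obtain ⟨i, hi, rfl⟩ := Finset.mem_image.mp hq₁
      exact flp_ne (Finset.ne_of_mem_erase hi) ω₀)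
  have hdis : Disjoint ((univ.erase j).image fun i => (i, ω₀))
      ((univ.erase j).image fun i => (i, flp j ω₀)) := by
    rw [Finset.disjoint_left]
    intro q hq hq'
    obtain ⟨i, -, rfl⟩ := Finset.mem_image.mp hq
    obtain ⟨i', -, he⟩ := Finset.mem_image.mp hq'
    exact hne (Prod.mk.inj he).2.symm
  simp only [Finset.prod_union hdis, Finset.prod_image (s := univ.erase j) (g := fun i => (i, ω₀))
    fun x _ y _ hxy => (Prod.mk.inj hxy).1, Finset.prod_image (s := univ.erase j)
    (g := fun i => (i, flp j ω₀)) fun x _ y _ hxy => (Prod.mk.inj hxy).1] at h2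
  rw [av_pick₂ j fun x y => N x * N y] at h2
  have h3 := av_prj_mul_prj j (fun _ => 1) N N (fun _ _ _ => rfl)
  simp only [one_mul] at h3
  rw [← h3] at h2
  rw [e]
  linarith [(abs_le.mp h1).1, (abs_le.mp h2).2]

/-- The relative counting lemma. The induction on `T` makes the weights dense one at a time. -/
theorem counting (k : ℕ) (T : Finset (Fin k)) : ∀ ε' : ℝ, 0 < ε' → ∃ ε : ℝ, 0 < ε ∧
    ∀ (X : Type) [Finite X] [Nonempty X] (ν g g' : Fin k → (Fin k → X) → ℝ),
    (∀ i, Free i (ν i)) → (∀ i, Free i (g i)) → (∀ i, Free i (g' i)) →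
    (∀ i x, 0 ≤ g i x) → (∀ i x, g i x ≤ ν i x) → (∀ i x, 0 ≤ g' i x) → (∀ i x, g' i x ≤ 1) →
    LFC ν ε → (∀ i, i ∉ T → ν i = fun _ => 1) →
    (∀ j, CutSmall j (fun x => g j x - g' j x) ε) →
    |av (fun x => ∏ i, g i x) - av fun x => ∏ i, g' i x| ≤ ε' := by
  classical
  induction T using Finset.induction_on with
  | empty =>
    intro ε' hε'
    refine ⟨ε' / (k + 1), by positivity, ?_⟩
    intro X _ _ ν g g' _ hg hg' hg0 hgν hg0' hg1' _ hν hcut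
    have hg1 : ∀ i x, g i x ≤ 1 := fun i x => by
      have := hgν i x
      rwa [hν i (by simp)] at this
    refine (counting_dense hg hg' (fun i x => abs_le.mpr ⟨by linarith [hg0 i x], hg1 i x⟩)
      (fun i x => abs_le.mpr ⟨by linarith [hg0' i x], hg1' i x⟩) hcut).trans ?_
    rw [mul_div_assoc', div_le_iff₀ (by positivity)]
    nlinarith
  | insert j T hjT ih =>
    intro ε' hε'
    set τ : ℝ := (ε' / 2) ^ 2 / 32 with hτ
    have hτ0 : 0 < τ := by positivity
    obtain ⟨ε₁, hε₁, h₁⟩ := LFC.decor k hτ0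
    obtain ⟨ε₂, hε₂, h₂⟩ := ih τ hτ0
    refine ⟨min (min ε₁ ε₂) (min (min (ε' / 2) 1) (min τ (τ ^ 2 / 3))), by positivity, ?_⟩
    set ε := min (min ε₁ ε₂) (min (min (ε' / 2) 1) (min τ (τ ^ 2 / 3))) with hεdef
    have hεle1 : ε ≤ ε₁ := (min_le_left _ _).trans (min_le_left _ _)
    have hεle2 : ε ≤ ε₂ := (min_le_left _ _).trans (min_le_right _ _)
    have hεle3 : ε ≤ ε' / 2 := (min_le_right _ _).trans ((min_le_left _ _).trans (min_le_left _ _))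
    have hεle4 : ε ≤ 1 := (min_le_right _ _).trans ((min_le_left _ _).trans (min_le_right _ _))
    have hεle5 : ε ≤ τ := (min_le_right _ _).trans ((min_le_right _ _).trans (min_le_left _ _))
    have hεle6 : ε ≤ τ ^ 2 / 3 :=
      (min_le_right _ _).trans ((min_le_right _ _).trans (min_le_right _ _))
    clear_value ε
    intro X _ _ ν g g' hνf hg hg' hg0 hgν hg0' hg1' hL hν hcut
    have hν0 : ∀ i x, 0 ≤ ν i x := fun i x => (hg0 i x).trans (hgν i x)
    let G : (Fin k → X) → ℝ := fun x => ∏ i ∈ univ.erase j, g i x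
    let G' : (Fin k → X) → ℝ := fun x => ∏ i ∈ univ.erase j, g' i x
    let V : (Fin k → X) → ℝ := fun x => ∏ i ∈ univ.erase j, ν i x
    let P := prj j G
    let P' := prj j G'
    have hP0 : ∀ x, 0 ≤ P x := fun x => av_nonneg fun a => Finset.prod_nonneg fun i _ => hg0 i _
    have hP0' : ∀ x, 0 ≤ P' x := fun x => av_nonneg fun a => Finset.prod_nonneg fun i _ => hg0' i _
    have hP1' : ∀ x, P' x ≤ 1 := fun x => av_le_of_le fun a =>
      Finset.prod_le_one (fun i _ => hg0' i _) fun i _ => hg1' i _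
    have hPV : ∀ x, P x ≤ prj j V x := fun x => av_mono fun a =>
      Finset.prod_le_prod (fun i _ => hg0 i _) fun i _ => hgν i _
    have hPf : Free j P := free_prj j G
    have hPf' : Free j P' := free_prj j G'
    let D : (Fin k → X) → ℝ := fun x => P x - P' x
    -- the part of the difference that the weight `ν j` does not see
    have hmain : av (fun x => ∏ i, g i x) - av (fun x => ∏ i, g' i x) =
        av (fun x => g j x * D x) + av fun x => (g j x - g' j x) * G' x := by
      have e1 : ∀ x, ∏ i, g i x = g j x * G x := fun x =>
        (Finset.mul_prod_erase univ (fun i => g i x) (mem_univ j)).symm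
      have e2 : ∀ x, ∏ i, g' i x = g' j x * G' x := fun x =>
        (Finset.mul_prod_erase univ (fun i => g' i x) (mem_univ j)).symm
      simp only [e1, e2, D, mul_sub, sub_mul, av_sub]
      rw [av_mul_prj (hg j) G, av_mul_prj (hg j) G']
      ring
    have habs' : ∀ i x, |g' i x| ≤ 1 := fun i x =>
      abs_le.mpr ⟨by linarith [hg0' i x], hg1' i x⟩
    have hcutj : |av fun x => (g j x - g' j x) * G' x| ≤ ε := hcut j g' hg' habs'
    -- the deviation of `ν j` from `1`
    have hdev : (av fun x => (ν j x - 1) * D x ^ 2) ≤ 4 * τ := by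
      have hνf1 : Free j fun x => ν j x - 1 := fun x y hxy => by
        beta_reduce
        rw [hνf j x y hxy]
      have hd := h₁ X ν (hL.mono hεle1) hνf j
      have habs : ∀ i x, |g i x| ≤ ν i x := fun i x => by
        rw [abs_of_nonneg (hg0 i x)]
        exact hgν i x
      have d1 := hd true true g g hg hg (by simpa using habs) (by simpa using habs)
      have d2 := hd true false g g' hg hg' (by simpa using habs) (by simpa using habs')
      have d3 := hd false false g' g' hg' hg' (by simpa using habs') (by simpa using habs')
      rw [← av_prj_mul_prj j _ G G hνf1] at d1
      rw [← av_prj_mul_prj j _ G G' hνf1] at d2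
      rw [← av_prj_mul_prj j _ G' G' hνf1] at d3
      have e : (av fun x => (ν j x - 1) * D x ^ 2) =
          (av fun x => (ν j x - 1) * (P x * P x)) - 2 * (av fun x => (ν j x - 1) * (P x * P' x)) +
          av fun x => (ν j x - 1) * (P' x * P' x) := by
        rw [← av_mul_left, ← av_sub, ← av_add]
        congr 1
        ext x
        simp only [D]
        ring
      rw [e]
      linarith [(abs_le.mp d1).2, (abs_le.mp d2).1, (abs_le.mp d3).2]
    -- the mean square of `D`, after truncating `P` at `1`
    let b : (Fin k → X) → ℝ := fun x => min (P x) 1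
    let e : (Fin k → X) → ℝ := fun x => P x - b x
    have he0 : ∀ x, 0 ≤ e x := fun x => sub_nonneg.mpr (min_le_left _ _)
    have hesq : av (fun x => e x ^ 2) ≤ 3 * ε := by
      refine (av_mono fun x => ?_).trans (hL.av_sq_prj j)
      have hx := hPV x
      rcases le_total (P x) 1 with h1 | h1
      · simp only [e, b, min_eq_left h1, sub_self, ne_eq, OfNat.ofNat_ne_zero, not_false_eq_true,
          zero_pow]
        exact sq_nonneg _
      · simp only [e, b, min_eq_right h1]
        refine pow_le_pow_left₀ (by linarith) ?_ 2
        linarith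
    have hav : av e ≤ τ := by
      have h1 := av_sq_le (fun _ => (1 : ℝ)) e
      simp only [one_mul, one_pow] at h1
      rw [av_const, one_mul] at h1
      refine le_of_sq_le_sq ?_ hτ0.le
      linarith
    have hcor : ∀ c : (Fin k → X) → ℝ, Free j c → (∀ x, 0 ≤ c x) → (∀ x, c x ≤ 1) →
        |av fun x => c x * D x| ≤ τ := by
      intro c hcf hc0 hc1
      have key := h₂ X (Function.update ν j fun _ => 1) (Function.update g j c)
        (Function.update g' j c) ?_ ?_ ?_ ?_ ?_ ?_ ?_ ((hL.mono hεle2).update_one j) ?_ ?_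
      · have e1 : ∀ (f : Fin k → (Fin k → X) → ℝ) x, ∏ i, Function.update f j c i x =
            c x * ∏ i ∈ univ.erase j, f i x := fun f x => by
          rw [← Finset.mul_prod_erase univ _ (mem_univ j), Function.update_self]
          congr 1
          refine Finset.prod_congr rfl fun i hi => ?_
          rw [Function.update_of_ne (Finset.ne_of_mem_erase hi)]
        simp only [e1] at key
        rw [av_mul_prj hcf G, av_mul_prj hcf G', ← av_sub] at key
        simpa only [D, mul_sub] using key
      · intro i
        rcases eq_or_ne i j with rfl | hi
        · simp only [Function.update_self]
          exact fun _ _ _ => rfl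
        · simpa only [Function.update_of_ne hi] using hνf i
      · intro i
        rcases eq_or_ne i j with rfl | hi
        · simpa only [Function.update_self] using hcf
        · simpa only [Function.update_of_ne hi] using hg i
      · intro i
        rcases eq_or_ne i j with rfl | hi
        · simpa only [Function.update_self] using hcf
        · simpa only [Function.update_of_ne hi] using hg' i
      · intro i x
        rcases eq_or_ne i j with rfl | hi
        · simpa only [Function.update_self] using hc0 x
        · simpa only [Function.update_of_ne hi] using hg0 i x
      · intro i x
        rcases eq_or_ne i j with rfl | hi
        · simpa only [Function.update_self] using hc1 x
        · simpa only [Function.update_of_ne hi] using hgν i x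
      · intro i x
        rcases eq_or_ne i j with rfl | hi
        · simpa only [Function.update_self] using hc0 x
        · simpa only [Function.update_of_ne hi] using hg0' i x
      · intro i x
        rcases eq_or_ne i j with rfl | hi
        · simpa only [Function.update_self] using hc1 x
        · simpa only [Function.update_of_ne hi] using hg1' i x
      · intro i hi
        rcases eq_or_ne i j with rfl | hij
        · simp only [Function.update_self]
        · simpa only [Function.update_of_ne hij] using hν i (by simp [hij, hi])
      · intro i
        rcases eq_or_ne i j with rfl | hi
        · intro u _ _
          simp only [Function.update_self, sub_self, zero_mul]
          rw [av_const, abs_zero]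
          exact hε₂.le
        · simpa only [Function.update_of_ne hi] using (hcut i).mono hεle2
    have hbf : Free j b := fun x y hxy => by
      simp only [b]
      rw [hPf x y hxy]
    have c1 := hcor b hbf (fun x => le_min (hP0 x) zero_le_one) (fun x => min_le_right _ _)
    have c2 := hcor P' hPf' hP0' hP1'
    have hb2 : (av fun x => (b x - P' x) ^ 2) ≤ 3 * τ := by
      have h1 : (av fun x => (b x - P' x) ^ 2) ≤
          av fun x => b x * D x - P' x * D x + e x := av_mono fun x => by
        have h2 : b x - P' x = D x - e x := by
          simp only [D, e]
          ring
        have h3 : -1 ≤ b x - P' x := by linarith [hP1' x, le_min (hP0 x) zero_le_one]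
        calc (b x - P' x) ^ 2 = (b x - P' x) * (D x - e x) := by rw [← h2, sq]
          _ ≤ _ := by nlinarith [he0 x]
      rw [av_add, av_sub] at h1
      linarith [(abs_le.mp c1).2, (abs_le.mp c2).1]
    have hD2 : (av fun x => D x ^ 2) ≤ 12 * τ := by
      have h1 : (av fun x => D x ^ 2) ≤ av fun x => 2 * e x ^ 2 + 2 * (b x - P' x) ^ 2 :=
        av_mono fun x => by
          have h2 : D x = e x + (b x - P' x) := by
            simp only [D, e]
            ring
          rw [h2]
          nlinarith [sq_nonneg (e x - (b x - P' x))]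
      rw [av_add, av_mul_left, av_mul_left] at h1
      linarith
    have hνD : (av fun x => ν j x * D x ^ 2) ≤ 16 * τ := by
      have e1 : (av fun x => ν j x * D x ^ 2) =
          (av fun x => (ν j x - 1) * D x ^ 2) + av fun x => D x ^ 2 := by
        rw [← av_add]
        congr 1
        ext x
        ring
      linarith
    have hA : |av fun x => g j x * D x| ≤ ε' / 2 := by
      refine abs_le_of_sq_le_sq ?_ (by positivity)
      have h1 : |av fun x => g j x * D x| ≤ av fun x => ν j x * |D x| :=
        (abs_av_le _).trans (av_mono fun x => by
          rw [abs_mul, abs_of_nonneg (hg0 j x)]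
          exact mul_le_mul_of_nonneg_right (hgν j x) (abs_nonneg _))
      have h4 := av_sq_le (fun x => √(ν j x)) (fun x => √(ν j x) * |D x|)
      have h5 : ∀ x, √(ν j x) * (√(ν j x) * |D x|) = ν j x * |D x| := fun x => by
        rw [← mul_assoc, Real.mul_self_sqrt (hν0 j x)]
      have h6 : ∀ x, (√(ν j x) * |D x|) ^ 2 = ν j x * D x ^ 2 := fun x => by
        rw [mul_pow, Real.sq_sqrt (hν0 j x), sq_abs]
      have h7 : ∀ x, √(ν j x) ^ 2 = ν j x := fun x => Real.sq_sqrt (hν0 j x)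
      simp only [h5, h6, h7] at h4
      have h8 : av (fun x => ν j x) ≤ 2 := by linarith [hL.av_le j]
      have h9 : 0 ≤ av fun x => ν j x * D x ^ 2 :=
        av_nonneg fun x => mul_nonneg (hν0 j x) (sq_nonneg _)
      calc (av fun x => g j x * D x) ^ 2 = |av fun x => g j x * D x| ^ 2 := (sq_abs _).symm
        _ ≤ (av fun x => ν j x * |D x|) ^ 2 := pow_le_pow_left₀ (abs_nonneg _) h1 2
        _ ≤ _ := h4
        _ ≤ 2 * (16 * τ) := mul_le_mul h8 hνD h9 (by norm_num)
        _ = (ε' / 2) ^ 2 := by rw [hτ]; ring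
    rw [hmain]
    exact (abs_add_le _ _).trans (by linarith)

end counting

/-! ### The dense model theorem -/

section dense

lemma continuous_av {G T : Type*} [Finite G] [TopologicalSpace T] {F : T → G → ℝ}
    (h : ∀ a, Continuous fun t => F t a) : Continuous fun t => av (F t) := by
  unfold av
  exact (continuous_finsetSum _ fun a _ => h a).div_const _

lemma mul_mem_convexHull {G : Type} {Φ : Set (G → ℝ)}
    (hmul : ∀ φ ∈ Φ, ∀ ψ ∈ Φ, φ * ψ ∈ convexHull ℝ Φ) {φ ψ : G → ℝ} (hφ : φ ∈ convexHull ℝ Φ)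
    (hψ : ψ ∈ convexHull ℝ Φ) : φ * ψ ∈ convexHull ℝ Φ := by
  have hc : Convex ℝ (convexHull ℝ Φ) := convex_convexHull ℝ Φ
  have h1 : ∀ φ ∈ Φ, convexHull ℝ Φ ⊆ {ψ | φ * ψ ∈ convexHull ℝ Φ} := by
    intro φ hφ
    refine convexHull_min (fun ψ hψ => hmul φ hφ ψ hψ) ?_
    intro x hx y hy a b ha hb hab
    rw [Set.mem_ofPred_eq, mul_add, mul_smul_comm, mul_smul_comm]
    exact hc hx hy ha hb hab
  have h2 : convexHull ℝ Φ ⊆ {φ | φ * ψ ∈ convexHull ℝ Φ} := by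
    refine convexHull_min (fun φ hφ => h1 φ hφ hψ) ?_
    intro x hx y hy a b ha hb hab
    rw [Set.mem_ofPred_eq, add_mul, smul_mul_assoc, smul_mul_assoc]
    exact hc hx hy ha hb hab
  exact h2 hφ

/-- The abstract dense model theorem for a class of tests whose products are convex combinations of
tests. A minimax argument produces the model `g` together with an optimal mixture `ψ` of tests, and
approximating the positive part of `ψ` by a polynomial in `ψ` bounds the value of the game. -/
theorem dense_model {ε : ℝ} (hε : 0 < ε) : ∃ η : ℝ, 0 < η ∧
    ∀ (G : Type) [Finite G] [Nonempty G] (Φ : Set (G → ℝ)), 1 ∈ Φ → (∀ φ ∈ Φ, -φ ∈ Φ) →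
    (∀ φ ∈ Φ, ∀ a, |φ a| ≤ 1) → (∀ φ ∈ Φ, ∀ ψ ∈ Φ, φ * ψ ∈ convexHull ℝ Φ) →
    ∀ ν f : G → ℝ, (∀ a, 0 ≤ f a) → (∀ a, f a ≤ ν a) →
    (∀ φ ∈ Φ, |av fun a => (ν a - 1) * φ a| ≤ η) →
    ∃ g : G → ℝ, (∀ a, 0 ≤ g a) ∧ (∀ a, g a ≤ 1) ∧
      ∀ φ ∈ Φ, |av fun a => (f a - g a) * φ a| ≤ ε := by
  obtain ⟨P, hP⟩ := exists_polynomial_near_of_continuousOn (-1) 1 (fun t => max t 0)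
    (by fun_prop) (ε / 8) (by positivity)
  set K : ℝ := ∑ n ∈ P.support, |P.coeff n| with hK
  have hK0 : 0 ≤ K := Finset.sum_nonneg fun n _ => abs_nonneg _
  refine ⟨min 1 (ε / (4 * (K + 1))), by positivity, ?_⟩
  intro G _ _ Φ h1 hneg hbd hmul ν f hf0 hfν hν
  set η : ℝ := min 1 (ε / (4 * (K + 1))) with hη
  have hη1 : η ≤ 1 := min_le_left _ _
  have hη2 : K * η ≤ ε / 4 := by
    have : η * (4 * (K + 1)) ≤ ε := by
      rw [← le_div_iff₀ (by positivity)]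
      exact min_le_right _ _
    have h0 : 0 < η := by positivity
    nlinarith
  clear_value η
  have hν0 : ∀ a, 0 ≤ ν a := fun a => (hf0 a).trans (hfν a)
  let X : Set (G → ℝ) := Set.Icc 0 1
  let Y : Set (G → ℝ) := closure (convexHull ℝ Φ)
  let B : (G → ℝ) → (G → ℝ) → ℝ := fun g ψ => av fun a => (f a - g a) * ψ a
  have hYbd : ∀ ψ ∈ Y, ∀ a, |ψ a| ≤ 1 := by
    have hsub : convexHull ℝ Φ ⊆ {ψ : G → ℝ | ∀ a, |ψ a| ≤ 1} := by
      refine convexHull_min hbd ?_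
      intro x hx y hy s t hs ht hst a
      simp only [Pi.add_apply, Pi.smul_apply, smul_eq_mul]
      calc |s * x a + t * y a| ≤ s * |x a| + t * |y a| := by
            refine (abs_add_le _ _).trans ?_
            rw [abs_mul, abs_mul, abs_of_nonneg hs, abs_of_nonneg ht]
        _ ≤ s * 1 + t * 1 := add_le_add (mul_le_mul_of_nonneg_left (hx a) hs)
            (mul_le_mul_of_nonneg_left (hy a) ht)
        _ = 1 := by linarith
    have hcl : IsClosed {ψ : G → ℝ | ∀ a, |ψ a| ≤ 1} := by
      have : {ψ : G → ℝ | ∀ a, |ψ a| ≤ 1} = ⋂ a, {ψ | |ψ a| ≤ 1} := by ext; simp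
      rw [this]
      exact isClosed_iInter fun a => isClosed_le (by fun_prop) continuous_const
    exact closure_minimal hsub hcl
  have hYpow : ∀ ψ ∈ Y, ∀ m : ℕ, |av fun a => (ν a - 1) * ψ a ^ m| ≤ η := by
    have hlin : convexHull ℝ Φ ⊆ {ψ : G → ℝ | |av fun a => (ν a - 1) * ψ a| ≤ η} := by
      refine convexHull_min hν ?_
      intro x hx y hy s t hs ht hst
      rw [Set.mem_ofPred_eq] at hx hy ⊢
      have e : (av fun a => (ν a - 1) * (s • x + t • y) a) =
          s * (av fun a => (ν a - 1) * x a) + t * av fun a => (ν a - 1) * y a := by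
        rw [← av_mul_left, ← av_mul_left, ← av_add]
        congr 1
        ext a
        simp only [Pi.add_apply, Pi.smul_apply, smul_eq_mul]
        ring
      rw [e]
      refine (abs_add_le _ _).trans ?_
      rw [abs_mul, abs_mul, abs_of_nonneg hs, abs_of_nonneg ht]
      calc _ ≤ s * η + t * η := add_le_add (mul_le_mul_of_nonneg_left hx hs)
            (mul_le_mul_of_nonneg_left hy ht)
        _ = η := by rw [← add_mul, hst, one_mul]
    intro ψ hψ m
    have hsub : convexHull ℝ Φ ⊆ {ψ : G → ℝ | |av fun a => (ν a - 1) * ψ a ^ m| ≤ η} := by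
      intro ψ hψ
      have : ψ ^ m ∈ convexHull ℝ Φ := by
        induction m with
        | zero =>
          rw [pow_zero]
          exact subset_convexHull ℝ Φ h1
        | succ m ih =>
          rw [pow_succ]
          exact mul_mem_convexHull hmul ih hψ
      exact hlin this
    refine closure_minimal hsub (isClosed_le ?_ continuous_const) hψ
    exact (continuous_av fun a => by fun_prop).abs
  have hX : Convex ℝ X := convex_Icc 0 1
  have hYc : Convex ℝ Y := (convex_convexHull ℝ Φ).closure
  have hYcomp : IsCompact Y := by
    have hsub : Y ⊆ Set.Icc (-1) 1 := fun ψ hψ =>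
      ⟨fun a => (abs_le.mp (hYbd ψ hψ a)).1, fun a => (abs_le.mp (hYbd ψ hψ a)).2⟩
    exact isCompact_Icc.of_isClosed_subset isClosed_closure hsub
  have hΦY : ∀ φ ∈ Φ, φ ∈ Y := fun φ hφ => subset_closure (subset_convexHull ℝ Φ hφ)
  obtain ⟨g, hg, ψ, hψ, hsaddle⟩ := Sion.exists_isSaddlePointOn (X := X) (Y := Y) (f := B)
    ⟨0, by simp [X]⟩ hX isCompact_Icc
    (fun ψ _ => (continuous_av fun a => by fun_prop).lowerSemicontinuous.lowerSemicontinuousOn _)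
    (fun ψ _ => ConvexOn.quasiconvexOn ⟨hX, fun x _ y _ s t hs ht hst => le_of_eq (by
      simp only [B, smul_eq_mul]
      rw [← av_mul_left, ← av_mul_left, ← av_add]
      congr 1
      ext a
      simp only [Pi.add_apply, Pi.smul_apply, smul_eq_mul]
      linear_combination (-(f a * ψ a)) * hst)⟩)
    hYc ⟨1, hΦY 1 h1⟩ hYcomp
    (fun g _ => (continuous_av fun a => by fun_prop).upperSemicontinuous.upperSemicontinuousOn _)
    (fun g _ => ConcaveOn.quasiconcaveOn ⟨hYc, fun x _ y _ s t hs ht hst => le_of_eq (by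
      simp only [B, smul_eq_mul]
      rw [← av_mul_left, ← av_mul_left, ← av_add]
      congr 1
      ext a
      simp only [Pi.add_apply, Pi.smul_apply, smul_eq_mul]
      ring)⟩)
  -- the best response to `ψ` is the indicator of its positivity set
  let g₁ : G → ℝ := fun a => if 0 < ψ a then 1 else 0
  have hg₁ : g₁ ∈ X := by
    refine ⟨fun a => ?_, fun a => ?_⟩ <;> simp only [g₁] <;> split_ifs <;> simp
  have hval : B g₁ ψ ≤ ε := by
    have hψ1 : ∀ a, ψ a ∈ Set.Icc (-1 : ℝ) 1 := fun a => abs_le.mp (hYbd ψ hψ a)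
    have hpt : ∀ a, (f a - g₁ a) * ψ a ≤ (ν a - 1) * P.eval (ψ a) + (ν a - 1 + 2) * (ε / 8) := by
      intro a
      have h2 := abs_lt.mp (hP (ψ a) (hψ1 a))
      have h3 := hf0 a
      have h4 := hfν a
      simp only [g₁]
      rcases lt_or_ge 0 (ψ a) with h5 | h5
      · rw [max_eq_left h5.le] at h2
        rw [if_pos h5]
        nlinarith
      · rw [max_eq_right h5] at h2
        rw [if_neg h5.not_gt]
        nlinarith
    have h2 := av_mono hpt
    rw [av_add] at h2
    have h3 : (av fun a => (ν a - 1 + 2) * (ε / 8)) ≤ 3 * (ε / 8) := by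
      rw [av_mul_right, av_add, av_const]
      have h4 := hν 1 h1
      simp only [Pi.one_apply, mul_one] at h4
      have := (abs_le.mp h4).2
      refine mul_le_mul_of_nonneg_right ?_ (by positivity)
      linarith
    have h4 : (av fun a => (ν a - 1) * P.eval (ψ a)) ≤ K * η := by
      have e : (av fun a => (ν a - 1) * P.eval (ψ a)) =
          ∑ n ∈ P.support, P.coeff n * av fun a => (ν a - 1) * ψ a ^ n := by
        simp only [← av_mul_left]
        rw [← av_sum]
        congr 1
        ext a
        rw [Polynomial.eval_eq_sum, Polynomial.sum, Finset.mul_sum]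
        refine Finset.sum_congr rfl fun n _ => by ring
      rw [e, hK, Finset.sum_mul]
      refine Finset.sum_le_sum fun n _ => ?_
      refine (le_abs_self _).trans ?_
      rw [abs_mul]
      exact mul_le_mul_of_nonneg_left (hYpow ψ hψ n) (abs_nonneg _)
    simp only [B]
    linarith
  have hle : ∀ φ ∈ Φ, B g φ ≤ ε := fun φ hφ => (hsaddle g₁ hg₁ φ (hΦY φ hφ)).trans hval
  refine ⟨g, hg.1, hg.2, fun φ hφ => abs_le.mpr ⟨?_, hle φ hφ⟩⟩
  have h2 := hle (-φ) (hneg φ hφ)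
  simp only [B, Pi.neg_apply, mul_neg] at h2
  rw [av_neg] at h2
  linarith

end dense

section dual
variable {G H : Type} [AddCommGroup G] [AddCommGroup H] [Finite G] [Finite H]

/-- The average of `w` over the fibre of `S` above `a`, where `e` is a section of `S`. -/
noncomputable def dual (S : H →+ G) (e : G →+ H) (w : H → ℝ) (a : G) : ℝ :=
  av fun y => w (y - e (S y) + e a)

lemma av_mul_dual {S : H →+ G} {e : G →+ H} (hSe : ∀ a, S (e a) = a) (h : G → ℝ) (w : H → ℝ) :
    (av fun a => h a * dual S e w a) = av fun y => h (S y) * w y := by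
  let σ : G × H ≃ G × H :=
    { toFun := fun p => (S p.2, p.2 - e (S p.2) + e p.1)
      invFun := fun p => (S p.2, p.2 - e (S p.2) + e p.1)
      left_inv := fun p => by ext <;> simp [hSe]
      right_inv := fun p => by ext <;> simp [hSe] }
  have h1 : (av fun y => h (S y) * w y) = av fun p : G × H => h (S p.2) * w p.2 := by
    rw [av_prod]
    exact (av_const _).symm
  rw [h1, ← av_equiv σ, av_prod]
  congr 1
  ext a
  unfold dual
  rw [← av_mul_left]
  simp [σ, hSe]

lemma dual_mul {S : H →+ G} {e : G →+ H} (w w' : H → ℝ) (a : G) :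
    dual S e w a * dual S e w' a =
      av fun z => dual S e (fun y => w y * w' (y + (z - e (S z)))) a := by
  unfold dual
  rw [← av_mul_right, av_comm]
  congr 1
  ext y
  rw [← av_mul_left, ← av_equiv (Equiv.addLeft y)]
  congr 1
  ext z
  simp only [Equiv.coe_addLeft, map_add]
  congr 2
  abel

lemma av_mem_convexHull {Φ : Set (G → ℝ)} {F : H → G → ℝ} (hF : ∀ z, F z ∈ Φ) :
    (fun a => av fun z => F z a) ∈ convexHull ℝ Φ := by
  let := Fintype.ofFinite H
  have h1 := (convex_convexHull ℝ Φ).sum_mem (t := univ) (w := fun _ : H => (Fintype.card H : ℝ)⁻¹)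
    (z := F) (fun _ _ => by positivity) (by simp) (fun z _ => subset_convexHull ℝ Φ (hF z))
  convert h1 using 1
  ext a
  rw [av_eq]
  simp [Finset.sum_apply, div_eq_inv_mul, Finset.mul_sum]

/-- The dense model theorem for the class of averages over the fibres of `S` of the functions in a
class that is closed under products and translations. -/
theorem dense_model_dual {ε : ℝ} (hε : 0 < ε) : ∃ η : ℝ, 0 < η ∧
    ∀ (G H : Type) [AddCommGroup G] [AddCommGroup H] [Finite G] [Finite H] (S : H →+ G)
      (e : G →+ H), (∀ a, S (e a) = a) → ∀ 𝓦 : Set (H → ℝ), (fun _ => 1) ∈ 𝓦 →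
    (∀ w ∈ 𝓦, (fun y => - w y) ∈ 𝓦) → (∀ w ∈ 𝓦, ∀ y, |w y| ≤ 1) →
    (∀ w ∈ 𝓦, ∀ w' ∈ 𝓦, (fun y => w y * w' y) ∈ 𝓦) →
    (∀ w ∈ 𝓦, ∀ z, (fun y => w (y + z)) ∈ 𝓦) →
    ∀ ν f : G → ℝ, (∀ a, 0 ≤ f a) → (∀ a, f a ≤ ν a) →
    (∀ w ∈ 𝓦, |av fun y => (ν (S y) - 1) * w y| ≤ η) →
    ∃ g : G → ℝ, (∀ a, 0 ≤ g a) ∧ (∀ a, g a ≤ 1) ∧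
      ∀ w ∈ 𝓦, |av fun y => (f (S y) - g (S y)) * w y| ≤ ε := by
  obtain ⟨η, hη, h⟩ := dense_model hε
  refine ⟨η, hη, ?_⟩
  intro G H _ _ _ _ S e hSe 𝓦 h1 hneg hbd hmul htr ν f hf0 hfν hν
  have key := h G (dual S e '' 𝓦) ⟨_, h1, ?_⟩ ?_ ?_ ?_ ν f hf0 hfν ?_
  · obtain ⟨g, hg0, hg1, hg⟩ := key
    refine ⟨g, hg0, hg1, fun w hw => ?_⟩
    have := hg _ ⟨w, hw, rfl⟩
    rwa [av_mul_dual hSe (fun a => f a - g a)] at this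
  · ext a
    exact av_const 1
  · rintro _ ⟨w, hw, rfl⟩
    refine ⟨_, hneg w hw, ?_⟩
    ext a
    exact av_neg _
  · rintro _ ⟨w, hw, rfl⟩ a
    exact abs_av_le_of_le fun y => hbd w hw _
  · rintro _ ⟨w, hw, rfl⟩ _ ⟨w', hw', rfl⟩
    have : dual S e w * dual S e w' =
        fun a => av fun z => dual S e (fun y => w y * w' (y + (z - e (S z)))) a := by
      ext a
      exact dual_mul w w' a
    rw [this]
    exact av_mem_convexHull fun z => ⟨_, hmul w hw _ (htr w' hw' _), rfl⟩
  · rintro _ ⟨w, hw, rfl⟩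
    rw [av_mul_dual hSe (fun a => ν a - 1)]
    exact hν w hw

end dual

section fibre
variable {H : Type} [AddCommGroup H] [Finite H]

/-- An average is resolved along the fibres of an endomorphism `φ`; `s` chooses a point in each
fibre. -/
lemma abs_av_le_fibre (φ : H →+ H) (s : H → H) (hs : ∀ x, φ (s (φ x)) = φ x) (F : H → ℝ) {B : ℝ}
    (hB : ∀ t, φ t = 0 → |av fun y => (φ.range : Set H).indicator (fun y => F (s y + t)) y| ≤ B) :
    |av F| ≤ Nat.card φ.ker * B := by
  classical
  let := Fintype.ofFinite H
  let := Fintype.ofFinite φ.ker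
  have e : av F = ∑ t : φ.ker, av fun y => (φ.range : Set H).indicator (fun y => F (s y + t)) y := by
    rw [← av_sum, av_eq, av_eq]
    congr 1
    rw [← Finset.sum_fiberwise univ φ F]
    refine Finset.sum_congr rfl fun y _ => ?_
    by_cases hy : y ∈ (φ.range : Set H)
    · simp only [Set.indicator_of_mem hy]
      obtain ⟨x₀, rfl⟩ := hy
      refine Finset.sum_bij' (fun x hx => (⟨x - s (φ x₀), ?_⟩ : φ.ker)) (fun t _ => s (φ x₀) + t)
        ?_ ?_ ?_ ?_ ?_
      · simp only [Finset.mem_filter, Finset.mem_univ, true_and] at hx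
        rw [AddMonoidHom.mem_ker, map_sub, hs, hx, sub_self]
      · simp
      · intro t _
        have := t.2
        rw [AddMonoidHom.mem_ker] at this
        simp [hs, this]
      · simp
      · simp
      · simp
    · simp only [Set.indicator_of_notMem hy, Finset.sum_const_zero]
      refine Finset.sum_eq_zero fun x hx => ?_
      simp only [Finset.mem_filter, Finset.mem_univ, true_and] at hx
      exact absurd ⟨x, hx⟩ hy
  rw [e, Nat.card_eq_fintype_card]
  refine (Finset.abs_sum_le_sum_abs _ _).trans ?_
  refine (Finset.sum_le_sum fun t _ => hB t.1 t.2).trans ?_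
  simp

end fibre

/-! ### The transference principle for arithmetic progressions -/

section forms

/-- The linear form `∑ (i - j) x i`, whose values as `j` varies form an arithmetic progression. -/
def frm {k N : ℕ} (j : Fin k) (x : Fin k → ZMod N) : ZMod N :=
  ∑ i : Fin k, ((((i : ℕ) : ℤ) - ((j : ℕ) : ℤ) : ℤ) : ZMod N) * x i

lemma free_frm {k N : ℕ} (j : Fin k) (h : ZMod N → ℝ) : Free j fun x => h (frm j x) := by
  intro x y hxy
  beta_reduce
  congr 1
  unfold frm
  refine Finset.sum_congr rfl fun i _ => ?_
  rcases eq_or_ne i j with rfl | hi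
  · simp
  · rw [hxy i hi]

lemma frm_erase {k N : ℕ} (j : Fin k) (x : Fin k → ZMod N) :
    frm j x = ∑ i ∈ univ.erase j, ((((i : ℕ) : ℤ) - ((j : ℕ) : ℤ) : ℤ) : ZMod N) * x i := by
  rw [frm, ← Finset.add_sum_erase univ _ (mem_univ j)]
  simp

variable {n N : ℕ}

/-- The sum of all coordinates but the first. -/
def sm (n N : ℕ) : (Fin (n + 3) → ZMod N) →+ ZMod N :=
  ∑ i ∈ univ.erase 0, Pi.evalAddMonoidHom (fun _ : Fin (n + 3) => ZMod N) i

lemma sm_apply {n N : ℕ} (x : Fin (n + 3) → ZMod N) : sm n N x = ∑ i ∈ univ.erase 0, x i := by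
  simp [sm]

/-- The section of `sm` that uses the second coordinate. -/
def sec (n N : ℕ) : ZMod N →+ (Fin (n + 3) → ZMod N) :=
  AddMonoidHom.single (fun _ : Fin (n + 3) => ZMod N) 1

lemma sm_sec {n N : ℕ} (a : ZMod N) : sm n N (sec n N a) = a := by
  rw [sm_apply, sec, Finset.sum_eq_single 1]
  · simp
  · intro i _ hi
    simp [hi]
  · simp

/-- Products of bounded functions each of which misses one of the coordinates other than `0`. -/
def Tests (n N : ℕ) : Set ((Fin (n + 3) → ZMod N) → ℝ) :=
  {w | ∃ v : Fin (n + 3) → (Fin (n + 3) → ZMod N) → ℝ, (∀ i, Free i (v i)) ∧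
    (∀ i x, |v i x| ≤ 1) ∧ w = fun y => ∏ i ∈ univ.erase 0, v i y}

lemma tests_one : (fun _ => 1) ∈ Tests n N :=
  ⟨fun _ _ => 1, fun _ _ _ _ => rfl, by simp, by simp⟩

lemma tests_neg {w : (Fin (n + 3) → ZMod N) → ℝ} (hw : w ∈ Tests n N) :
    (fun y => - w y) ∈ Tests n N := by
  obtain ⟨v, h1, h2, rfl⟩ := hw
  refine ⟨Function.update v 1 fun y => - v 1 y, fun i => ?_, fun i x => ?_, ?_⟩
  · rcases eq_or_ne i 1 with rfl | hi
    · rw [Function.update_self]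
      intro x y hxy
      beta_reduce
      rw [h1 1 x y hxy]
    · rw [Function.update_of_ne hi]
      exact h1 i
  · rcases eq_or_ne i 1 with rfl | hi
    · rw [Function.update_self, abs_neg]
      exact h2 1 x
    · rw [Function.update_of_ne hi]
      exact h2 i x
  · ext y
    have h01 : (1 : Fin (n + 3)) ∈ univ.erase 0 := by simp
    beta_reduce
    rw [← Finset.mul_prod_erase _ (fun i => v i y) h01,
      ← Finset.mul_prod_erase _ (fun i => Function.update v 1 (fun y => - v 1 y) i y) h01]
    rw [Function.update_self, neg_mul]
    congr 2
    refine Finset.prod_congr rfl fun i hi => ?_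
    rw [Function.update_of_ne (Finset.ne_of_mem_erase hi)]

lemma tests_bound {w : (Fin (n + 3) → ZMod N) → ℝ} (hw : w ∈ Tests n N) (y) : |w y| ≤ 1 := by
  obtain ⟨v, h1, h2, rfl⟩ := hw
  rw [Finset.abs_prod]
  exact Finset.prod_le_one (fun _ _ => abs_nonneg _) fun i _ => h2 i y

lemma tests_mul {w w' : (Fin (n + 3) → ZMod N) → ℝ} (hw : w ∈ Tests n N) (hw' : w' ∈ Tests n N) :
    (fun y => w y * w' y) ∈ Tests n N := by
  obtain ⟨v, h1, h2, rfl⟩ := hw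
  obtain ⟨v', h1', h2', rfl⟩ := hw'
  refine ⟨fun i y => v i y * v' i y, fun i => (h1 i).mul (h1' i), fun i x => ?_, ?_⟩
  · rw [abs_mul]
    exact mul_le_one₀ (h2 i x) (abs_nonneg _) (h2' i x)
  · simp only [Finset.prod_mul_distrib]

lemma tests_translate {w : (Fin (n + 3) → ZMod N) → ℝ} (hw : w ∈ Tests n N)
    (z : Fin (n + 3) → ZMod N) : (fun y => w (y + z)) ∈ Tests n N := by
  obtain ⟨v, h1, h2, rfl⟩ := hw
  refine ⟨fun i y => v i (y + z), fun i x y hxy => h1 i _ _ fun i' hi' => ?_,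
    fun i x => h2 i _, rfl⟩
  simp [hxy i' hi']

/-- Multiplication of the coordinates by the coefficients of the form `frm j`, except that the
vanishing coefficient at `j` is replaced by `1`. -/
def scl {k : ℕ} (N : ℕ) (j : Fin k) : (Fin k → ZMod N) →+ (Fin k → ZMod N) where
  toFun x i := (if i = j then 1 else (((i : ℤ) - (j : ℤ) : ℤ) : ZMod N)) * x i
  map_zero' := by ext; simp
  map_add' x y := by ext; simp [mul_add]

lemma frm_eq_scl {k N : ℕ} (j : Fin k) (x : Fin k → ZMod N) :
    frm j x = ∑ i ∈ univ.erase j, scl N j x i := by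
  rw [frm_erase]
  refine Finset.sum_congr rfl fun i hi => ?_
  simp [scl, Finset.ne_of_mem_erase hi]

/-- Under the linear forms condition the weight is close to `1` on the tests. A point is written as
`scl N 0 x` plus an element of the kernel of `sm`; the coefficient `1` in `frm 0` makes this
parametrisation uniform. -/
lemma weight_tests (n : ℕ) {ε : ℝ} (hε : 0 < ε) : ∃ η : ℝ, 0 < η ∧ ∀ (N : ℕ) [NeZero N]
    (ν : ZMod N → ℝ), LFC (fun (j : Fin (n + 3)) x => ν (frm j x)) η →
    ∀ w ∈ Tests n N, |av fun y => (ν (sm n N y) - 1) * w y| ≤ ε := by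
  obtain ⟨η, hη, h⟩ := LFC.decor (n + 3) hε
  refine ⟨η, hη, ?_⟩
  intro N _ ν hL w hw
  obtain ⟨v, h1, h2, rfl⟩ := hw
  let H := Fin (n + 3) → ZMod N
  let κ : H →+ H := AddMonoidHom.id H - (sec n N).comp (sm n N)
  have hκ : ∀ t, sm n N (κ t) = 0 := fun t => by simp [κ, sm_sec]
  let φ : H × H →+ H := (κ.comp (AddMonoidHom.fst H H)) + (scl N 0).comp (AddMonoidHom.snd H H)
  have hsc : ∀ a, scl N (0 : Fin (n + 3)) (sec n N a) = sec n N a := by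
    intro a
    ext i
    rcases eq_or_ne i 1 with rfl | hi
    · simp [scl, sec]
    · simp [scl, sec, hi]
  have hφ : Function.Surjective φ := fun y => ⟨(y, sec n N (sm n N y)), by simp [φ, κ, hsc]⟩
  rw [← av_hom φ hφ, av_prod]
  refine abs_av_le_of_le fun t => ?_
  have hd := h (ZMod N) _ hL (fun i => free_frm i ν) 0 false false
    (fun i x => v i (φ (t, x))) (fun _ _ => 1) ?_ (fun _ _ _ _ => rfl)
    (fun i x => by simpa using h2 i _) (by simp)
  · simp only [Finset.prod_const_one, mul_one] at hd
    have e : ∀ x : H, (av fun _ : ZMod N => (ν (frm 0 x) - 1) * ∏ i ∈ univ.erase 0, v i (φ (t, x)))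
        = (ν (frm 0 x) - 1) * ∏ i ∈ univ.erase 0, v i (φ (t, x)) := fun x => av_const _
    simp only [e] at hd
    convert hd using 4
    rename_i x
    have : sm n N (φ (t, x)) = frm 0 x := by
      rw [frm_eq_scl, ← sm_apply]
      simp [φ, hκ]
    simp only [this]
  · intro i x y hxy
    refine h1 i _ _ fun i' hi' => ?_
    change κ t i' + _ * x i' = κ t i' + _ * y i'
    rw [hxy i' hi']

lemma card_ker_scl [NeZero N] {k : ℕ} (j : Fin k) : Nat.card (scl N j).ker ≤ k ^ k := by
  classical
  have hc : ∀ i : Fin k, (univ.filter fun a : ZMod N =>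
      (if i = j then 1 else (((i : ℤ) - (j : ℤ) : ℤ) : ZMod N)) * a = 0).card ≤ k := by
    intro i
    have hk : 1 ≤ k := Nat.one_le_of_lt i.2
    by_cases hij : i = j
    · simp only [hij, if_true, one_mul, Finset.filter_eq', Finset.mem_univ, Finset.card_singleton]
      exact hk
    · have hne : ((i : ℤ) - (j : ℤ)).natAbs ≠ 0 := by
        have : (i : ℕ) ≠ j := fun h => hij (Fin.ext h)
        omega
      refine le_trans ?_ ((IsAddCyclic.card_nsmul_eq_zero_le (α := ZMod N)
        (Nat.pos_of_ne_zero hne)).trans ?_)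
      · refine Finset.card_le_card fun a ha => ?_
        simp only [Finset.mem_filter, Finset.mem_univ, true_and, hij, if_false] at ha ⊢
        have h1 : ((i : ℤ) - (j : ℤ)) • a = 0 := by rwa [zsmul_eq_mul]
        have h2 : (((((i : ℤ) - (j : ℤ)).natAbs : ℕ) : ℤ)) • a = 0 := by
          rcases Int.natAbs_eq ((i : ℤ) - (j : ℤ)) with h | h
          · rw [← h]; exact h1
          · rw [h, neg_smul, neg_eq_zero] at h1
            exact h1
        rwa [natCast_zsmul] at h2
      · have := i.2
        have := j.2
        omega
  have hle : Nat.card (scl N j).ker ≤ (Fintype.piFinset fun i : Fin k => univ.filter fun a : ZMod N =>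
      (if i = j then 1 else (((i : ℤ) - (j : ℤ) : ℤ) : ZMod N)) * a = 0).card := by
    rw [← Fintype.card_coe, ← Nat.card_eq_fintype_card]
    refine Nat.card_le_card_of_injective (fun t : (scl N j).ker => ⟨t.1, ?_⟩) ?_
    · rw [Fintype.mem_piFinset]
      intro i
      rw [Finset.mem_filter]
      exact ⟨mem_univ _, congrFun t.2 i⟩
    · intro t t' h
      simp only [Subtype.mk.injEq] at h
      exact Subtype.ext h
  refine hle.trans ?_
  rw [Fintype.card_piFinset]
  refine (Finset.prod_le_prod (fun _ _ => Nat.zero_le _) fun i _ => hc i).trans ?_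
  simp

/-- The tests control the cut norm with respect to each of the forms `frm j`. -/
lemma cut_of_tests [NeZero N] (h : ZMod N → ℝ) {ε : ℝ}
    (ht : ∀ w ∈ Tests n N, |av fun y => h (sm n N y) * w y| ≤ ε) (j : Fin (n + 3)) :
    CutSmall j (fun x => h (frm j x)) ((n + 3 : ℕ) ^ (n + 3) * ε) := by
  classical
  intro u hu hu1
  have hε : 0 ≤ ε := (abs_nonneg _).trans (ht _ tests_one)
  let H := Fin (n + 3) → ZMod N
  let c : Fin (n + 3) → ZMod N := fun i => if i = j then 1 else (((i : ℤ) - (j : ℤ) : ℤ) : ZMod N)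
  let s₁ : Fin (n + 3) → ZMod N → ZMod N := fun i a => Function.invFun (fun b => c i * b) a
  let s : H → H := fun y i => s₁ i (y i)
  have hscl : ∀ x i, scl N j x i = c i * x i := fun x i => rfl
  have hs₁ : ∀ i a, (∃ b, c i * b = a) → c i * s₁ i a = a := fun i a hb => Function.invFun_eq hb
  have hs : ∀ x, scl N j (s (scl N j x)) = scl N j x := by
    intro x
    ext i
    rw [hscl, hscl]
    exact hs₁ i _ ⟨x i, rfl⟩
  have hrange : ∀ y : H, y ∈ ((scl N j).range : Set H) ↔ ∀ i, ∃ b, c i * b = y i := by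
    intro y
    constructor
    · rintro ⟨x, rfl⟩ i
      exact ⟨x i, rfl⟩
    · intro hy
      exact ⟨s y, by ext i; exact hs₁ i _ (hy i)⟩
  refine (abs_av_le_fibre (scl N j) s hs _ (B := ε) ?_).trans ?_
  · intro t ht0
    -- the indicator of the range is distributed over the test functions
    let v : Fin (n + 3) → H → ℝ := fun i y =>
      u i (s y + t) * if ∀ i', i' ≠ i → ∃ b, c i' * b = y i' then 1 else 0
    have hv : ∀ i, Free i (v i) := by
      intro i x y hxy
      have e1 : u i (s x + t) = u i (s y + t) := hu i _ _ fun i' hi' => by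
        change s₁ i' (x i') + t i' = s₁ i' (y i') + t i'
        rw [hxy i' hi']
      have e2 : (∀ i', i' ≠ i → ∃ b, c i' * b = x i') ↔ ∀ i', i' ≠ i → ∃ b, c i' * b = y i' := by
        refine forall_congr' fun i' => ?_
        refine forall_congr' fun hi' => ?_
        rw [hxy i' hi']
      simp only [v, e1, e2]
    have hv1 : ∀ i x, |v i x| ≤ 1 := by
      intro i x
      simp only [v]
      split_ifs
      · simpa using hu1 i _
      · simp
    let σ : Equiv.Perm (Fin (n + 3)) := Equiv.swap 0 j
    have hσ : ∀ i, σ (σ i) = i := fun i => Equiv.swap_apply_self _ _ _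
    have hmem : ∀ i, i ∈ univ.erase (0 : Fin (n + 3)) → σ i ∈ univ.erase j := by
      intro i hi
      refine Finset.mem_erase.mpr ⟨fun h' => Finset.ne_of_mem_erase hi ?_, mem_univ _⟩
      rw [← hσ i, h']
      exact Equiv.swap_apply_right _ _
    have hmem' : ∀ i, i ∈ univ.erase j → σ i ∈ univ.erase (0 : Fin (n + 3)) := by
      intro i hi
      refine Finset.mem_erase.mpr ⟨fun h' => Finset.ne_of_mem_erase hi ?_, mem_univ _⟩
      rw [← hσ i, h']
      exact Equiv.swap_apply_left _ _
    have hσ0 : ∀ F : Fin (n + 3) → ℝ, ∏ i ∈ univ.erase 0, F (σ i) = ∏ i ∈ univ.erase j, F i :=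
      fun F => Finset.prod_bij' (fun i _ => σ i) (fun i _ => σ i) hmem hmem'
        (fun i _ => hσ i) (fun i _ => hσ i) fun i _ => rfl
    have hσ1 : ∀ z : H, ∑ i ∈ univ.erase 0, z i = ∑ i ∈ univ.erase j, z (σ i) :=
      fun z => Finset.sum_bij' (fun i _ => σ i) (fun i _ => σ i) hmem hmem'
        (fun i _ => hσ i) (fun i _ => hσ i) fun i _ => by rw [hσ]
    have hpt : ∀ y : H, ((scl N j).range : Set H).indicator (fun y => h (frm j (s y + t)) *
        ∏ i ∈ univ.erase j, u i (s y + t)) y =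
        h (∑ i ∈ univ.erase j, y i) * ∏ i ∈ univ.erase j, v i y := by
      intro y
      by_cases hy : ∀ i, ∃ b, c i * b = y i
      · rw [Set.indicator_of_mem ((hrange y).mpr hy), frm_eq_scl, map_add, ht0, add_zero]
        congr 1
        · congr 1
          exact Finset.sum_congr rfl fun i _ => hs₁ i _ (hy i)
        · refine Finset.prod_congr rfl fun i _ => ?_
          have : ∀ i', i' ≠ i → ∃ b, c i' * b = y i' := fun i' _ => hy i'
          simp only [v, if_pos this, mul_one]
      · rw [Set.indicator_of_notMem fun h' => hy ((hrange y).mp h')]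
        push Not at hy
        obtain ⟨i₀, hi₀⟩ := hy
        obtain ⟨i, hi⟩ : ∃ i, i ∉ ({j, i₀} : Finset (Fin (n + 3))) := by
          by_contra! hcon
          have h1 := Finset.card_le_card (s := univ) (t := ({j, i₀} : Finset (Fin (n + 3))))
            fun i _ => hcon i
          have h2 := Finset.card_le_two (a := j) (b := i₀)
          simp only [Finset.card_univ, Fintype.card_fin] at h1
          omega
        simp only [Finset.mem_insert, Finset.mem_singleton, not_or] at hi
        rw [Finset.prod_eq_zero (i := i) (Finset.mem_erase.mpr ⟨hi.1, mem_univ _⟩), mul_zero]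
        have : ¬ ∀ i', i' ≠ i → ∃ b, c i' * b = y i' := fun h' => by
          obtain ⟨b, hb⟩ := h' i₀ (Ne.symm hi.2)
          exact hi₀ b hb
        simp only [v, if_neg this, mul_zero]
    let e : H ≃ H := ⟨fun z i => z (σ i), fun z i => z (σ i), fun z => by ext i; simp only [hσ],
      fun z => by ext i; simp only [hσ]⟩
    have key := ht (fun z => ∏ i ∈ univ.erase 0, v (σ i) fun i' => z (σ i'))
      ⟨fun i z => v (σ i) fun i' => z (σ i'), ?_, fun i x => hv1 _ _, rfl⟩
    · rw [← av_equiv e]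
      refine le_of_eq_of_le ?_ key
      congr 2
      ext z
      rw [hpt, sm_apply, hσ1, ← hσ0 fun i => v i (e z)]
      rfl
    · intro i x y hxy
      refine hv (σ i) _ _ fun i' hi' => ?_
      refine hxy _ fun h' => hi' ?_
      rw [← h', hσ]
  · refine mul_le_mul_of_nonneg_right ?_ hε
    exact_mod_cast card_ker_scl j

/-- The transference step: a function dominated by a weight satisfying the linear forms condition
is close, in the cut norms of all the forms, to a function with values in `[0, 1]`. -/
lemma transference (n : ℕ) {ε : ℝ} (hε : 0 < ε) : ∃ η : ℝ, 0 < η ∧ ∀ (N : ℕ) [NeZero N]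
    (ν f : ZMod N → ℝ), LFC (fun (j : Fin (n + 3)) x => ν (frm j x)) η →
    (∀ a, 0 ≤ f a) → (∀ a, f a ≤ ν a) → ∃ g : ZMod N → ℝ, (∀ a, 0 ≤ g a) ∧ (∀ a, g a ≤ 1) ∧
      |av f - av g| ≤ ε ∧
      ∀ j : Fin (n + 3), CutSmall j (fun x => f (frm j x) - g (frm j x)) ε := by
  have hpow : (1 : ℝ) ≤ ((n + 3 : ℕ) : ℝ) ^ (n + 3) :=
    one_le_pow₀ (by exact_mod_cast Nat.le_add_left 1 (n + 2))
  have hpos : (0 : ℝ) < ((n + 3 : ℕ) : ℝ) ^ (n + 3) := by linarith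
  obtain ⟨η₁, hη₁, h1⟩ := dense_model_dual (div_pos hε hpos)
  obtain ⟨η, hη, h2⟩ := weight_tests n hη₁
  refine ⟨η, hη, ?_⟩
  intro N _ ν f hL hf0 hf1
  obtain ⟨g, hg0, hg1, hg⟩ := h1 _ _ (sm n N) (sec n N) sm_sec (Tests n N) tests_one
    (fun w hw => tests_neg hw) (fun w hw => tests_bound hw) (fun w hw w' hw' => tests_mul hw hw')
    (fun w hw z => tests_translate hw z) ν f hf0 hf1 (h2 N ν hL)
  refine ⟨g, hg0, hg1, ?_, fun j => ?_⟩
  · have := hg _ tests_one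
    have hsurj : Function.Surjective (sm n N) := fun a => ⟨_, sm_sec a⟩
    have e := av_hom (sm n N) hsurj (fun a => f a - g a)
    simp only [mul_one] at this
    rw [← av_sub, ← e]
    exact this.trans (div_le_self hε.le hpow)
  · have := cut_of_tests (fun a => f a - g a) hg j
    rwa [mul_div_cancel₀ _ hpos.ne'] at this

end forms

/-! ### Arithmetic progressions in sparse pseudorandom sets -/

section final

lemma avg_eq_av {X : Type*} [Fintype X] (f : X → ℝ) : avg f = av f := (av_eq f).symm

/-- The linear forms condition on `ZMod N` is the linear forms condition on the product space
`Fin k → ZMod N` for the weights `ν ∘ frm j`. -/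
lemma lfc_of_kLinearFormsCondition {k N : ℕ} [NeZero N] {ν : ZMod N → ℝ} {η : ℝ}
    (h : kLinearFormsCondition k N ν η) : LFC (fun (j : Fin k) x => ν (frm j x)) η := by
  classical
  intro M hM
  let ex : (j : Fin k) → ({i : Fin k // i ≠ j} → Bool) → Fin k → Bool :=
    fun j ω i => if hi : i = j then false else ω ⟨i, hi⟩
  have hex : ∀ j, Function.Injective (ex j) := by
    intro j ω ω' hω
    ext ⟨i, hi⟩
    have := congrFun hω i
    simpa only [ex, dif_neg hi] using this
  have key := h fun j ω => decide ((j, ex j ω) ∈ M)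
  rw [avg_eq_av] at key
  rw [← av_equiv (Equiv.arrowProdEquivProdArrow (Fin k) (fun _ => ZMod N) (fun _ => ZMod N)).symm]
  refine le_of_eq_of_le ?_ key
  congr 3
  ext ⟨x₀, x₁⟩
  have hform : ∀ j ω, kForm k N j x₀ x₁ ω = frm j (pick (ex j ω) fun i => (x₀ i, x₁ i)) := by
    intro j ω
    unfold kForm frm
    refine Finset.sum_congr rfl fun i _ => ?_
    by_cases hi : i = j
    · subst hi
      simp
    · simp [pick, ex, hi]
  have h1 : ∀ G : Fin k × (Fin k → Bool) → ℝ,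
      ∏ q ∈ M, G q = ∏ j, ∏ ω, if (j, ω) ∈ M then G (j, ω) else 1 := by
    intro G
    rw [← Fintype.prod_prod_type' (f := fun j ω => if (j, ω) ∈ M then G (j, ω) else 1)]
    simp
  rw [h1]
  refine Finset.prod_congr rfl fun j _ => ?_
  refine (Fintype.prod_of_injective (ex j) (hex j) _ _ ?_ ?_).symm
  · intro ω hω
    refine if_neg fun hm => hω ⟨fun i => ω i, ?_⟩
    ext i
    by_cases hi : i = j
    · subst hi
      simpa [ex] using (hM _ hm).symm
    · simp [ex, hi]
  · intro ω
    simp only [decide_eq_true_eq, hform]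
    rfl

/-- The values of the forms `frm j` at a uniform point are the terms of a uniform arithmetic
progression. -/
lemma av_frm {n N : ℕ} [NeZero N] (F : ZMod N → ℝ) :
    av (fun x : Fin (n + 3) → ZMod N => ∏ j, F (frm j x)) =
      av fun p : ZMod N × ZMod N => ∏ j : Fin (n + 2 + 1), F (p.1 + (j : ℕ) • p.2) := by
  let φ : (Fin (n + 3) → ZMod N) →+ ZMod N × ZMod N :=
    { toFun := fun x => (frm 0 x, - ∑ i, x i)
      map_zero' := by simp [frm]
      map_add' := fun x y => by
        simp only [frm, Pi.add_apply, mul_add, Finset.sum_add_distrib, Prod.mk_add_mk, neg_add] }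
  have hφ : Function.Surjective φ := by
    rintro ⟨a, d⟩
    refine ⟨Pi.single 1 a + Pi.single 0 (- d - a), ?_⟩
    rw [map_add]
    refine Prod.ext ?_ ?_
    · change frm 0 _ + frm 0 _ = a
      unfold frm
      rw [Finset.sum_eq_single 1, Finset.sum_eq_single 0]
      · simp
      · intro i _ hi
        simp [hi]
      · simp
      · intro i _ hi
        simp [hi]
      · simp
    · change - _ + - _ = d
      simp
  rw [← av_hom φ hφ]
  congr 1
  ext x
  refine Finset.prod_congr rfl fun j _ => ?_
  congr 1
  change frm j x = frm 0 x + (j : ℕ) • (- ∑ i, x i)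
  unfold frm
  rw [smul_neg, nsmul_eq_mul, Finset.mul_sum, ← Finset.sum_neg_distrib, ← Finset.sum_add_distrib]
  refine Finset.sum_congr rfl fun i _ => ?_
  push_cast
  simp
  ring

lemma le_av_of_mem {N : ℕ} [NeZero N] {F : ZMod N → ℝ} (hF : ∀ a, 0 ≤ F a) (a : ZMod N) :
    F a / N ≤ av F := by
  rw [av_eq, ZMod.card]
  exact div_le_div_of_nonneg_right
    (Finset.single_le_sum (f := F) (fun b _ => hF b) (Finset.mem_univ a)) (by positivity)

/-- A weight satisfying the linear forms condition cannot be concentrated on a very sparse set. For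
two pairs of vertices differing only at the coordinate `0` in each form `frm j` with `j ≠ 0`, the
two copies of the variable `x 0` agree with probability `1 / N`, and then the product of the
`4 (n + 2)` values of `ν` is `m ^ (2 (n + 2))` times a product of half as many values. -/
lemma sparse_bound {n N : ℕ} [NeZero N] {ν : ZMod N → ℝ} {η m : ℝ}
    (h : LFC (fun (j : Fin (n + 3)) x => ν (frm j x)) η) (hη : η ≤ 1 / 2)
    (hν0 : ∀ a, 0 ≤ ν a) (hm : 0 ≤ m) (hν : ∀ a, ν a * ν a = m * ν a) :
    (m ^ (n + 2)) ^ 2 ≤ 3 * N := by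
  classical
  have hN : (0 : ℝ) < N := by exact_mod_cast Nat.pos_of_ne_zero (NeZero.ne N)
  -- `τ j` is an index different from `0` and `j`.
  let τ : Fin (n + 3) → Fin (n + 3) := fun j => if j = 1 then 2 else 1
  have h10 : (1 : Fin (n + 3)) ≠ 0 := by simp
  have h20 : (2 : Fin (n + 3)) ≠ 0 := by
    simp [Fin.ext_iff, Nat.mod_eq_of_lt (show 2 < n + 3 by omega)]
  have h21 : (2 : Fin (n + 3)) ≠ 1 := by
    simp [Fin.ext_iff, Nat.mod_eq_of_lt (show 2 < n + 3 by omega)]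
  have hτ0 : ∀ j, τ j ≠ 0 := by
    intro j
    simp only [τ]
    split_ifs <;> assumption
  have hτ : ∀ j, τ j ≠ j := by
    intro j
    simp only [τ]
    split_ifs with h'
    · rw [h']; exact h21
    · exact Ne.symm h'
  let I : Fin (n + 3) × Bool → Fin (n + 3) × (Fin (n + 3) → Bool) :=
    fun q => (q.1, Function.update (fun _ => false) (τ q.1) q.2)
  have hI : Function.Injective I := by
    rintro ⟨j, b⟩ ⟨j', b'⟩ hq
    simp only [I, Prod.mk.injEq] at hq
    obtain ⟨rfl, h2⟩ := hq
    have := congrFun h2 (τ j)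
    simp only [Function.update_self] at this
    rw [this]
  let M₀ := ((univ.erase (0 : Fin (n + 3))) ×ˢ (univ : Finset Bool)).image I
  have hcard : M₀.card = (n + 2) * 2 := by
    rw [Finset.card_image_of_injective _ hI, Finset.card_product]
    simp
  have hM₀ : ∀ q ∈ M₀, q.1 ≠ 0 ∧ q.2 q.1 = false ∧ q.2 0 = false := by
    intro q hq
    obtain ⟨⟨j, b⟩, hj, rfl⟩ := Finset.mem_image.mp hq
    rw [Finset.mem_product] at hj
    refine ⟨Finset.ne_of_mem_erase hj.1, ?_, ?_⟩
    · simp [I, (hτ j).symm]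
    · simp [I, (hτ0 j).symm]
  let fl : Fin (n + 3) × (Fin (n + 3) → Bool) → Fin (n + 3) × (Fin (n + 3) → Bool) :=
    fun q => (q.1, flp 0 q.2)
  have hfl : Function.Injective fl := by
    rintro ⟨j, ω⟩ ⟨j', ω'⟩ hq
    simp only [fl, Prod.mk.injEq] at hq
    exact Prod.ext hq.1 (flp_injective 0 hq.2)
  have hdisj : Disjoint M₀ (M₀.image fl) := by
    rw [Finset.disjoint_left]
    intro q hq hq'
    obtain ⟨q', hq1, rfl⟩ := Finset.mem_image.mp hq'
    have h1 := (hM₀ _ hq).2.2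
    have h2 := (hM₀ _ hq1).2.2
    simp [fl, flp_self, h2] at h1
  have hlow := (abs_le.mp (h M₀ fun q hq => (hM₀ q hq).2.1)).1
  have hupp := (abs_le.mp (h (M₀ ∪ M₀.image fl) fun q hq => by
    rcases Finset.mem_union.mp hq with hq | hq
    · exact (hM₀ q hq).2.1
    · obtain ⟨q', hq1, rfl⟩ := Finset.mem_image.mp hq
      have h1 := hM₀ q' hq1
      simp only [fl]
      rw [flp_ne h1.1]
      exact h1.2.1)).2
  let P : (Fin (n + 3) → ZMod N × ZMod N) → ℝ := fun p => ∏ q ∈ M₀, ν (frm q.1 (pick q.2 p))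
  let Q : (Fin (n + 3) → ZMod N × ZMod N) → ℝ :=
    fun p => ∏ q ∈ M₀ ∪ M₀.image fl, ν (frm q.1 (pick q.2 p))
  have hQ0 : ∀ p, 0 ≤ Q p := fun p => Finset.prod_nonneg fun q _ => hν0 _
  have hP : ∀ p b a, P (Function.update p 0 (b, a)) = P (Function.update p 0 (b, b)) := by
    intro p b a
    refine Finset.prod_congr rfl fun q hq => ?_
    congr 2
    ext i
    rcases eq_or_ne i 0 with rfl | hi
    · simp [pick, (hM₀ q hq).2.2]
    · simp [pick, hi]
  have hQ : ∀ p b, Q (Function.update p 0 (b, b)) =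
      m ^ ((n + 2) * 2) * P (Function.update p 0 (b, b)) := by
    intro p b
    simp only [Q, P]
    rw [Finset.prod_union hdisj, Finset.prod_image fun _ _ _ _ h' => hfl h',
      ← Finset.prod_mul_distrib, ← hcard, ← Finset.prod_const, ← Finset.prod_mul_distrib]
    refine Finset.prod_congr rfl fun q _ => ?_
    rw [← hν]
    congr 3
    ext i
    rcases eq_or_ne i 0 with rfl | hi
    · simp [pick, fl]
    · simp [pick, fl, flp_ne hi]
  have hmain : m ^ ((n + 2) * 2) / N * av P ≤ av Q := by
    rw [av_update 0 P, av_update 0 Q, ← av_mul_left]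
    refine av_mono fun p => ?_
    rw [av_prod, av_prod, ← av_mul_left]
    refine av_mono fun b => ?_
    simp only [hP p b]
    rw [av_const]
    refine le_of_eq_of_le ?_
      (le_av_of_mem (F := fun a => Q (Function.update p 0 (b, a))) (fun a => hQ0 _) b)
    rw [hQ]
    ring
  change - η ≤ av P - 1 at hlow
  change av Q - 1 ≤ η at hupp
  have h1 : m ^ ((n + 2) * 2) / N * (1 / 2) ≤ m ^ ((n + 2) * 2) / N * av P :=
    mul_le_mul_of_nonneg_left (by linarith) (by positivity)
  have h2 : m ^ ((n + 2) * 2) / N ≤ 3 := by linarith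
  rw [div_le_iff₀ hN, pow_mul] at h2
  exact h2

end final

/-- **Relative Szemerédi theorem, set version.** For every `k ≥ 3` and `δ > 0` there
exist `η > 0` and `N₀` such that for all `N ≥ N₀`: if `S ⊆ ZMod N` is nonempty and
`ν := (N/|S|)·1_S` satisfies the `k`-linear forms condition within `η`, then every
`A ⊆ S` with `|A| ≥ δ|S|` contains a `k`-term arithmetic progression. -/
theorem relative_szemeredi_sets (k : ℕ) (hk : 3 ≤ k) (δ : ℝ) (hδ : 0 < δ) :
    ∃ η : ℝ, 0 < η ∧ ∃ N₀ : ℕ, ∀ N : ℕ, N₀ ≤ N → ∀ [NeZero N],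
      ∀ S : Finset (ZMod N), S.Nonempty →
      kLinearFormsCondition k N
        (fun x => (N : ℝ) / (S.card : ℝ) * if x ∈ S then 1 else 0) η →
      ∀ A : Finset (ZMod N), A ⊆ S → δ * (S.card : ℝ) ≤ (A.card : ℝ) →
      ∃ x d : ZMod N, d ≠ 0 ∧ ∀ i ∈ Finset.range k, x + (i : ZMod N) * d ∈ A := by
  obtain ⟨n, rfl⟩ : ∃ n, k = n + 3 := ⟨k - 3, by omega⟩
  obtain ⟨c, hc, hvar⟩ := varnavides (n + 2) (half_pos hδ)
  obtain ⟨ε, hε, hcount⟩ := counting (n + 3) univ (c / 2) (half_pos hc)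
  obtain ⟨η₁, hη₁, htrans⟩ := transference n (lt_min hε (half_pos hδ))
  refine ⟨min ε (min η₁ (1 / 2)), lt_min hε (lt_min hη₁ (by norm_num)), ⌊12 / c ^ 2⌋₊ + 1, ?_⟩
  intro N hN _ S hS hlfc A hAS hA
  have hL := lfc_of_kLinearFormsCondition hlfc
  have hNpos : (0 : ℝ) < N := by exact_mod_cast Nat.pos_of_ne_zero (NeZero.ne N)
  have hSpos : (0 : ℝ) < S.card := by exact_mod_cast hS.card_pos
  have hNbig : 12 / c ^ 2 < N := (Nat.lt_floor_add_one _).trans_le (by exact_mod_cast hN)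
  obtain ⟨m, hm⟩ : ∃ m : ℝ, m = (N : ℝ) / S.card := ⟨_, rfl⟩
  rw [← hm] at hL
  have hmpos : 0 < m := hm ▸ div_pos hNpos hSpos
  obtain ⟨ν, hν⟩ : ∃ ν : ZMod N → ℝ, ∀ x, ν x = m * if x ∈ S then 1 else 0 := ⟨_, fun _ => rfl⟩
  obtain ⟨f, hf⟩ : ∃ f : ZMod N → ℝ, ∀ x, f x = m * if x ∈ A then 1 else 0 := ⟨_, fun _ => rfl⟩
  simp only [← hν] at hL
  have hf0 : ∀ a, 0 ≤ f a := fun a => by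
    rw [hf]
    split_ifs <;> simp [hmpos.le]
  have hfν : ∀ a, f a ≤ ν a := fun a => by
    simp only [hf, hν]
    by_cases ha : a ∈ A
    · simp [ha, hAS ha]
    · simp only [ha, if_false, mul_zero]
      split_ifs <;> simp [hmpos.le]
  have hν0 : ∀ a, 0 ≤ ν a := fun a => (hf0 a).trans (hfν a)
  have havf : av f = A.card / S.card := by
    rw [av_eq, ZMod.card]
    simp only [hf, ← Finset.mul_sum, Finset.sum_boole, Finset.filter_mem_eq_inter,
      Finset.univ_inter, hm]
    field_simp
  have hbound := sparse_bound hL ((min_le_right _ _).trans (min_le_right _ _)) hν0 hmpos.le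
    fun a => by
      simp only [hν]
      split_ifs <;> ring
  obtain ⟨g, hg0, hg1, havg, hcut⟩ := htrans N ν f
    (hL.mono ((min_le_right _ _).trans (min_le_left _ _))) hf0 hfν
  have hδf : δ ≤ av f := by rwa [havf, le_div_iff₀ hSpos]
  have hδg : δ / 2 ≤ av g := by
    have := (abs_le.mp (havg.trans (min_le_right _ _))).2
    linarith
  have hg := hvar (ZMod N) g hg0 hg1 hδg
  have hfg := hcount (ZMod N) (fun j x => ν (frm j x)) (fun j x => f (frm j x))
    (fun j x => g (frm j x)) (fun j => free_frm j ν) (fun j => free_frm j f)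
    (fun j => free_frm j g) (fun _ _ => hf0 _) (fun _ _ => hfν _) (fun _ _ => hg0 _)
    (fun _ _ => hg1 _) (hL.mono (min_le_left _ _)) (fun i hi => absurd (mem_univ i) hi)
    fun j => (hcut j).mono (min_le_left _ _)
  rw [av_frm, av_frm] at hfg
  have hflow : c / 2 ≤ av fun p : ZMod N × ZMod N =>
      ∏ j : Fin (n + 2 + 1), f (p.1 + (j : ℕ) • p.2) := by
    have := (abs_le.mp hfg).1
    linarith
  by_contra! hno
  -- only the trivial progressions contribute
  have hzero : ∀ a d : ZMod N, d ≠ 0 → ∏ j : Fin (n + 2 + 1), f (a + (j : ℕ) • d) = 0 := by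
    intro a d hd
    obtain ⟨i, hi, hiA⟩ := hno a d hd
    refine Finset.prod_eq_zero (mem_univ (⟨i, Finset.mem_range.mp hi⟩ : Fin (n + 2 + 1))) ?_
    simp only [hf, nsmul_eq_mul, if_neg hiA, mul_zero]
  have hfm : ∀ a, f a ≤ m := fun a => by
    rw [hf]
    split_ifs <;> simp [hmpos.le]
  have hfhigh : (av fun p : ZMod N × ZMod N => ∏ j : Fin (n + 2 + 1), f (p.1 + (j : ℕ) • p.2)) ≤
      m ^ (n + 2) / N := by
    rw [av_prod]
    have h1 : ∀ a, (av fun d => ∏ j : Fin (n + 2 + 1), f (a + (j : ℕ) • d)) ≤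
        m ^ (n + 2) / N * f a := by
      intro a
      rw [av_eq, ZMod.card, Finset.sum_eq_single 0 (fun d _ hd => hzero a d hd) (by simp)]
      simp only [smul_zero, add_zero, Finset.prod_const, Finset.card_univ, Fintype.card_fin]
      rw [div_mul_eq_mul_div, pow_succ]
      refine div_le_div_of_nonneg_right ?_ hNpos.le
      exact mul_le_mul_of_nonneg_right (pow_le_pow_left₀ (hf0 a) (hfm a) _) (hf0 a)
    refine (av_mono h1).trans ?_
    rw [av_mul_left]
    refine mul_le_of_le_one_right (by positivity) ?_
    rw [havf, div_le_one hSpos]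
    exact_mod_cast Finset.card_le_card hAS
  have h1 : c / 2 * N ≤ m ^ (n + 2) := (le_div_iff₀ hNpos).mp (hflow.trans hfhigh)
  have h2 : (c / 2 * N) ^ 2 ≤ 3 * N := (pow_le_pow_left₀ (by positivity) h1 2).trans hbound
  rw [div_lt_iff₀ (by positivity)] at hNbig
  nlinarith [mul_pos hNpos (sub_pos.mpr hNbig)]
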